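/- Let k ≥ 1 be an integer. There exists p(k) > 1 such that for every p > p(k) there is a function u_p ∈ C²([0,1]) with u_p > 0 on [0,1], u_p'(0) = u_p'(1) = 0, satisfying −u_p''(r) − ((N−1)/r)·u_p'(r) + u_p(r) = u_p(r)^p for r ∈ (0,1), and points 0 = β₀ < α₁ < β₁ < α₂ < … < β_{k−1} < α_k < β_k = 1 such that u_p is strictly increasing on each interval [β_{j−1}, α_j] and strictly decreasing on each interval [α_j, β_j] (j = 1,…,k), so that u_p has exactly the k local maximum points α₁,…,α_k; moreover the family can be chosen so that, as p → ∞, the maximum points converge to points 0 < α₁^∞ < … < α_k^∞ < 1 and u_p converges pointwise on [0,1] to Σ_{j=1}^k A_j·G(r, α_j^∞), where (A₁,…,A_k) solves the linear system Σ_{j=1}^k A_j·G(α_i^∞, α_j^∞) = 1 for i = 1,…,k. -/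

import Mathlib

/-!
With `n = N - 1`, the radial equation is `u'' + (n / r) u' = u - u ^ p`.

**Existence.** The initial value problem is written as `u'(r) = r ∫₀¹ σⁿ h(u(rσ)) dσ`, which is not
singular at `0`, with `h` a truncation of `x - x ^ p`; it is solved globally, continuously in the
initial value `γ` (`exists_ivp`). The dissipated energy `u'² / 2 + potential` keeps solutions away
from the equilibrium `(1, 0)` of the phase plane and inside the region where the truncation is
inactive, so `(1 - u, u' / κ)` has a continuous polar angle, which crosses each multiple of `π`
only upwards (`phaseRate_pos`). At `r = 1` the angle is below `π` for `γ = 1/2` (`phase_half_lt`),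
and at least `2kπ` for `γ = 1 - δ` when `κ` and then `p` are large (`le_phase_one`). By the
intermediate value theorem some `γ` gives the angle `2kπ` exactly, and such a solution has `k`
peaks (`exists_peakSol`). Since `δ` does not depend on `p`, the critical points stay apart and `u`
stays below `1` away from the maxima, uniformly in `p` (`PeakSol.gap`, `exists_le_away`).

**Limit profile.** Along any ultrafilter tending to `∞` the solutions converge. Away from the
limits of the maximum points `u ^ p` tends to `0`, so the limit solves the linear equation; at those
points it equals `1`; and since the limit energy is Lipschitz, its slope is reflected there. Thus
the limit is a trajectory of a billiard below the ceiling `1`, with `k` bounces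
(`Limit.exists_billiard`).

**Uniqueness.** If a trajectory has a later first bounce than another, it arrives there with a
larger slope, because `ξ' / ξ` is increasing. Comparing the pieces after a translation
(`launch_comparison`, `arrival_comparison`) propagates this: later bounces lag behind more and more,
with larger slopes. At the last bounce this is incompatible with the Neumann condition, as
`ζ' / ζ` is increasing too. Hence there is only one billiard trajectory with `k` bounces
(`Billiard.unique`), and the whole family converges to it.

**Green function.** The kinks of the limit are those of the functions `G(·, α j)`, and the sum of
these functions with the corresponding weights telescopes to the limit profile (`green_sum`).
-/

open Real Set Filter Topology

/-- Context: the two fundamental solutions `ξ`, `ζ` of `ℒu = -u'' - ((N-1)/r) u' + u = 0`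
on `(0,1)` together with their basic properties (Proposition 2.1 of the paper). -/
structure GreenData (N : ℕ) where
  xi : ℝ → ℝ
  zeta : ℝ → ℝ
  xi_smooth : ContDiffOn ℝ 2 xi (Set.Icc 0 1)
  zeta_smooth : ContDiffOn ℝ 2 zeta (Set.Ioc 0 1)
  xi_pos : ∀ r ∈ Set.Icc (0:ℝ) 1, 0 < xi r
  zeta_pos : ∀ r ∈ Set.Ioc (0:ℝ) 1, 0 < zeta r
  xi_ode : ∀ r ∈ Set.Ioo (0:ℝ) 1,
    -(deriv (deriv xi) r) - ((N : ℝ) - 1) / r * deriv xi r + xi r = 0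
  zeta_ode : ∀ r ∈ Set.Ioo (0:ℝ) 1,
    -(deriv (deriv zeta) r) - ((N : ℝ) - 1) / r * deriv zeta r + zeta r = 0
  xi_deriv_zero : deriv xi 0 = 0
  zeta_deriv_one : deriv zeta 1 = 0
  xi_mono : StrictMonoOn xi (Set.Icc 0 1)
  xi_bdd : ∃ M : ℝ, ∀ r ∈ Set.Icc (0:ℝ) 1, xi r ≤ M
  zeta_anti : StrictAntiOn zeta (Set.Ioc 0 1)
  wronskian : ∀ r ∈ Set.Ioc (0:ℝ) 1,
    r ^ (N - 1) * (deriv xi r * zeta r - xi r * deriv zeta r) = 1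
  xi_lim : Filter.Tendsto xi (nhdsWithin 0 (Set.Ioi 0)) (nhds (1 / ((N : ℝ) - 2)))
  zeta_lim : Filter.Tendsto (fun r => r ^ (N - 2) * zeta r)
    (nhdsWithin 0 (Set.Ioi 0)) (nhds 1)
  zeta_deriv_lim : Filter.Tendsto (fun r => r ^ (N - 1) * deriv zeta r)
    (nhdsWithin 0 (Set.Ioi 0)) (nhds (-((N : ℝ) - 2)))

namespace GreenData

variable {N : ℕ}

/-- The function `ξ_{[a,b]}` of the paper. -/
noncomputable def xiI (d : GreenData N) (a b : ℝ) : ℝ → ℝ :=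
  if a = 0 then
    (if b = 1 then d.xi else fun r => d.xi r / deriv d.xi b)
  else if b = 1 then
    fun r => deriv d.xi a * d.zeta r - d.xi r * deriv d.zeta a
  else
    fun r => (deriv d.xi a * d.zeta r - d.xi r * deriv d.zeta a) /
      Real.sqrt (deriv d.xi a * deriv d.zeta b - deriv d.xi b * deriv d.zeta a)

/-- The function `ζ_{[a,b]}` of the paper. -/
noncomputable def zetaI (d : GreenData N) (a b : ℝ) : ℝ → ℝ :=
  if a = 0 then
    (if b = 1 then d.zeta
     else fun r => deriv d.xi b * d.zeta r - d.xi r * deriv d.zeta b)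
  else if b = 1 then
    fun r => -(d.zeta r / deriv d.zeta a)
  else
    fun r => (deriv d.xi b * d.zeta r - d.xi r * deriv d.zeta b) /
      Real.sqrt (deriv d.xi a * deriv d.zeta b - deriv d.xi b * deriv d.zeta a)

/-- The reflection law `ξ'_{[a,b]}(s)/ξ_{[a,b]}(s) + ζ'_{[a,b]}(s)/ζ_{[a,b]}(s) = 0`. -/
def ReflectionAt (d : GreenData N) (a b s : ℝ) : Prop :=
  deriv (d.xiI a b) s / d.xiI a b s + deriv (d.zetaI a b) s / d.zetaI a b s = 0

/-- The Green function `G_{[a,b]}(r,s)`. -/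
noncomputable def G (d : GreenData N) (a b r s : ℝ) : ℝ :=
  if r ≤ s then s ^ (N - 1) * d.xiI a b r * d.zetaI a b s
  else s ^ (N - 1) * d.xiI a b s * d.zetaI a b r

end GreenData

/-- `sbar` is the function associating to `0 ≤ a < b ≤ 1` the unique point
`s̄(a,b) ∈ (a,b)` satisfying the reflection law. -/
def IsSBar {N : ℕ} (d : GreenData N) (sbar : ℝ → ℝ → ℝ) : Prop :=
  ∀ a b : ℝ, 0 ≤ a → a < b → b ≤ 1 →
    sbar a b ∈ Set.Ioo a b ∧ d.ReflectionAt a b (sbar a b) ∧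
    ∀ s ∈ Set.Ioo a b, d.ReflectionAt a b s → s = sbar a b

/-- The map `M_∞^{(j)}` of the paper, with `α_j = s̄(β_{j-1},β_j)`. -/
noncomputable def Minf {N : ℕ} (d : GreenData N) (sbar : ℝ → ℝ → ℝ)
    (β : ℕ → ℝ) (j : ℕ) : ℝ :=
  (1 / (β j) ^ (N - 1)) *
    (1 / (deriv d.xi (β j) * d.zeta (sbar (β j) (β (j + 1))) -
            d.xi (sbar (β j) (β (j + 1))) * deriv d.zeta (β j)) -
     1 / (deriv d.xi (β j) * d.zeta (sbar (β (j - 1)) (β j)) -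
            d.xi (sbar (β (j - 1)) (β j)) * deriv d.zeta (β j)))

/-- Extension of a `(k-1)`-tuple `(β₁,…,β_{k-1})` by the conventions `β₀ = 0`, `β_k = 1`. -/
noncomputable def extendB (k : ℕ) (β : Fin (k - 1) → ℝ) : ℕ → ℝ := fun j =>
  if hj : 1 ≤ j ∧ j ≤ k - 1 then β ⟨j - 1, by omega⟩
  else if j = 0 then 0 else 1

/-- The open simplex `T = {0 = β₀ < β₁ < ⋯ < β_{k-1} < β_k = 1}` as a subset of `ℝ^{k-1}`. -/
def TSet (k : ℕ) : Set (Fin (k - 1) → ℝ) :=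
  {β | ∀ j < k, extendB k β j < extendB k β (j + 1)}

namespace PeakSolutions

/-! ### The regularised initial value problem -/

/-- The mean `∫₀¹ σⁿ h(u(rσ)) dσ`. The radial equation `u'' + (n/r) u' = h(u)`, `u'(0) = 0`, is
equivalent to `u'(r) = r * radialMean n h u r`, which is not singular at `r = 0`. -/
noncomputable def radialMean (n : ℕ) (h u : ℝ → ℝ) (r : ℝ) : ℝ :=
  ∫ σ in (0:ℝ)..1, σ ^ n * h (u (r * σ))

lemma radialMean_continuous {n : ℕ} {h u : ℝ → ℝ} (hh : Continuous h) (hu : Continuous u) :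
    Continuous (radialMean n h u) := by
  unfold radialMean
  apply intervalIntegral.continuous_parametric_intervalIntegral_of_continuous'
  fun_prop

lemma abs_radialMean_sub_le {n : ℕ} {h u v : ℝ → ℝ} {M r : ℝ} (hh : Continuous h)
    (hu : Continuous u) (hv : Continuous v)
    (hM : ∀ σ ∈ Icc (0:ℝ) 1, |h (u (r * σ)) - h (v (r * σ))| ≤ M) :
    |radialMean n h u r - radialMean n h v r| ≤ M := by
  unfold radialMean
  rw [← intervalIntegral.integral_sub
    (Continuous.intervalIntegrable (by fun_prop) _ _)
    (Continuous.intervalIntegrable (by fun_prop) _ _)]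
  have := intervalIntegral.norm_integral_le_of_norm_le_const (a := 0) (b := 1) (C := M)
    (f := fun σ => σ ^ n * h (u (r * σ)) - σ ^ n * h (v (r * σ))) (by
      intro σ hσ
      rw [uIoc_of_le zero_le_one] at hσ
      have h1 := hM σ ⟨hσ.1.le, hσ.2⟩
      have h2 : σ ^ n ≤ 1 := pow_le_one₀ hσ.1.le hσ.2
      have h3 : 0 ≤ σ ^ n := pow_nonneg hσ.1.le n
      rw [← mul_sub, Real.norm_eq_abs, abs_mul, abs_of_nonneg h3]
      nlinarith [abs_nonneg (h (u (r * σ)) - h (v (r * σ)))])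
  simpa using this

lemma abs_radialMean_le {n : ℕ} {h u : ℝ → ℝ} {M r : ℝ}
    (hM : ∀ x, |h x| ≤ M) :
    |radialMean n h u r| ≤ M := by
  unfold radialMean
  have := intervalIntegral.norm_integral_le_of_norm_le_const (a := 0) (b := 1) (C := M)
    (f := fun σ => σ ^ n * h (u (r * σ))) (by
      intro σ hσ
      rw [uIoc_of_le zero_le_one] at hσ
      have h1 := hM (u (r * σ))
      have h2 : σ ^ n ≤ 1 := pow_le_one₀ hσ.1.le hσ.2
      have h3 : 0 ≤ σ ^ n := pow_nonneg hσ.1.le n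
      rw [Real.norm_eq_abs, abs_mul, abs_of_nonneg h3]
      nlinarith [abs_nonneg (h (u (r * σ)))])
  simpa using this

/-- The Picard map of the initial value problem `u' = r * radialMean n h u r`, `u(0) = γ`, written
for `v(r) = exp(-K r²) u(r)`. With `K` a Lipschitz constant of `h`, the weight makes it a
contraction in the supremum norm on the whole line. -/
noncomputable def picardFun (n : ℕ) (h : ℝ → ℝ) (K γ : ℝ) (v : ℝ → ℝ) (r : ℝ) : ℝ :=
  exp (-(K * r ^ 2)) *
    (γ + ∫ s in (0:ℝ)..r, s * radialMean n h (fun x => exp (K * x ^ 2) * v x) s)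

lemma picardFun_continuous {n : ℕ} {h : ℝ → ℝ} (K γ : ℝ) {v : ℝ → ℝ} (hh : Continuous h)
    (hv : Continuous v) : Continuous (picardFun n h K γ v) := by
  unfold picardFun
  have h1 : Continuous (radialMean n h (fun x => exp (K * x ^ 2) * v x)) :=
    radialMean_continuous hh (by fun_prop)
  have h2 : Continuous (fun r : ℝ =>
      ∫ s in (0:ℝ)..r, s * radialMean n h (fun x => exp (K * x ^ 2) * v x) s) :=
    intervalIntegral.continuous_primitive
      (fun a b => Continuous.intervalIntegrable (by fun_prop) a b) 0
  fun_prop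

lemma picardFun_bound {n : ℕ} {h : ℝ → ℝ} {K B : ℝ} (γ : ℝ) {v : ℝ → ℝ} (hK : 0 < K)
    (hB : ∀ x, |h x| ≤ B) (r : ℝ) :
    ‖picardFun n h K γ v r‖ ≤ |γ| + B / K := by
  unfold picardFun
  have hB0 : 0 ≤ B := (abs_nonneg _).trans (hB 0)
  have h1 := intervalIntegral.norm_integral_le_of_norm_le_const (a := 0) (b := r) (C := |r| * B)
    (f := fun s => s * radialMean n h (fun x => exp (K * x ^ 2) * v x) s) (by
      intro s hs
      have h2 : |s| ≤ |r| := by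
        rcases le_total 0 r with h | h
        · rw [uIoc_of_le h] at hs
          rw [abs_of_pos hs.1, abs_of_nonneg h]; exact hs.2
        · rw [uIoc_of_ge h] at hs
          rw [abs_of_nonpos hs.2, abs_of_nonpos h]; linarith [hs.1]
      rw [Real.norm_eq_abs, abs_mul]
      exact mul_le_mul h2 (abs_radialMean_le hB) (abs_nonneg _) (abs_nonneg _))
  rw [Real.norm_eq_abs] at h1
  rw [Real.norm_eq_abs, abs_mul, abs_of_pos (exp_pos _)]
  set I := ∫ s in (0:ℝ)..r, s * radialMean n h (fun x => exp (K * x ^ 2) * v x) s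
  have h3 : |I| ≤ B * r ^ 2 := by
    have : |r| * |r| = r ^ 2 := by rw [← sq, sq_abs]
    rw [sub_zero] at h1
    nlinarith
  have h4 : |γ + I| ≤ |γ| + B * r ^ 2 := (abs_add_le _ _).trans (by linarith)
  have h5 : exp (-(K * r ^ 2)) ≤ 1 := exp_le_one_iff.mpr (by nlinarith [sq_nonneg r])
  have h6 : exp (-(K * r ^ 2)) * (K * r ^ 2) ≤ 1 := by
    have := add_one_le_exp (K * r ^ 2)
    calc exp (-(K * r ^ 2)) * (K * r ^ 2) ≤ exp (-(K * r ^ 2)) * exp (K * r ^ 2) :=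
          mul_le_mul_of_nonneg_left (by linarith) (exp_pos _).le
      _ = 1 := by rw [← exp_add]; simp
  have h7 : exp (-(K * r ^ 2)) * (B * r ^ 2) ≤ B / K := by
    rw [le_div_iff₀ hK]
    nlinarith
  calc exp (-(K * r ^ 2)) * |γ + I| ≤ exp (-(K * r ^ 2)) * (|γ| + B * r ^ 2) :=
        mul_le_mul_of_nonneg_left h4 (exp_pos _).le
    _ ≤ |γ| + B / K := by nlinarith [abs_nonneg γ]

lemma picardFun_lip {n : ℕ} {h : ℝ → ℝ} {K : ℝ} (γ : ℝ) {v w : ℝ → ℝ} (hK : 0 < K)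
    (hh : Continuous h) (hv : Continuous v) (hw : Continuous w)
    (hL : ∀ x y, |h x - h y| ≤ K * |x - y|) {D : ℝ} (hD : ∀ x, |v x - w x| ≤ D) (r : ℝ) :
    |picardFun n h K γ v r - picardFun n h K γ w r| ≤ 1 / 2 * D := by
  have hD0 : 0 ≤ D := (abs_nonneg _).trans (hD 0)
  unfold picardFun
  set V : ℝ → ℝ := fun x => exp (K * x ^ 2) * v x with hV
  set W : ℝ → ℝ := fun x => exp (K * x ^ 2) * w x with hW
  have cV : Continuous V := by fun_prop
  have cW : Continuous W := by fun_prop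
  have cΦV : Continuous (radialMean n h V) := radialMean_continuous hh cV
  have cΦW : Continuous (radialMean n h W) := radialMean_continuous hh cW
  have hΦ : ∀ s, |radialMean n h V s - radialMean n h W s| ≤ K * exp (K * s ^ 2) * D := by
    intro s
    refine abs_radialMean_sub_le hh cV cW fun σ hσ => (hL _ _).trans ?_
    have h1 : V (s * σ) - W (s * σ) = exp (K * (s * σ) ^ 2) * (v (s * σ) - w (s * σ)) := by
      simp only [hV, hW]; ring
    rw [h1, abs_mul, abs_of_pos (exp_pos _), mul_assoc]
    refine mul_le_mul_of_nonneg_left ?_ hK.le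
    refine mul_le_mul ?_ (hD _) (abs_nonneg _) (exp_pos _).le
    refine exp_le_exp.mpr (mul_le_mul_of_nonneg_left ?_ hK.le)
    have : σ ^ 2 ≤ 1 := pow_le_one₀ hσ.1 hσ.2
    nlinarith [sq_nonneg s]
  have hder : ∀ s : ℝ, HasDerivAt (fun s => exp (K * s ^ 2) * D / 2) (s * (K * exp (K * s ^ 2) * D)) s := by
    intro s
    have h1 : HasDerivAt (fun s : ℝ => K * s ^ 2) (K * (2 * s)) s := by
      simpa using (hasDerivAt_pow 2 s).const_mul K
    have h2 := ((h1.exp).mul_const D).div_const 2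
    exact h2.congr_deriv (by ring)
  have hInt : ∫ s in (0:ℝ)..r, s * (K * exp (K * s ^ 2) * D) = (exp (K * r ^ 2) - 1) * D / 2 := by
    rw [intervalIntegral.integral_eq_sub_of_hasDerivAt (fun s _ => hder s)
      (Continuous.intervalIntegrable (by fun_prop) _ _)]
    simp; ring
  have hdiff : |∫ s in (0:ℝ)..r, (s * radialMean n h V s - s * radialMean n h W s)| ≤
      (exp (K * r ^ 2) - 1) * D / 2 := by
    have hge : 0 ≤ (exp (K * r ^ 2) - 1) * D / 2 := by
      have : 1 ≤ exp (K * r ^ 2) := one_le_exp (by positivity)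
      have := mul_nonneg (sub_nonneg.mpr this) hD0
      linarith
    rcases le_total 0 r with hr | hr
    · have := intervalIntegral.norm_integral_le_abs_of_norm_le (a := 0) (b := r)
        (μ := MeasureTheory.volume)
        (f := fun s => s * radialMean n h V s - s * radialMean n h W s)
        (g := fun s => s * (K * exp (K * s ^ 2) * D))
        (by
          refine (MeasureTheory.ae_restrict_iff' measurableSet_uIoc).mpr (MeasureTheory.ae_of_all _ ?_)
          intro s hs
          rw [uIoc_of_le hr] at hs
          rw [← mul_sub, Real.norm_eq_abs, abs_mul, abs_of_pos hs.1]
          exact mul_le_mul_of_nonneg_left (hΦ s) hs.1.le)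
        (Continuous.intervalIntegrable (by fun_prop) _ _)
      rw [hInt, abs_of_nonneg hge] at this
      exact this
    · have := intervalIntegral.norm_integral_le_abs_of_norm_le (a := 0) (b := r)
        (μ := MeasureTheory.volume)
        (f := fun s => s * radialMean n h V s - s * radialMean n h W s)
        (g := fun s => -(s * (K * exp (K * s ^ 2) * D)))
        (by
          refine (MeasureTheory.ae_restrict_iff' measurableSet_uIoc).mpr (MeasureTheory.ae_of_all _ ?_)
          intro s hs
          rw [uIoc_of_ge hr] at hs
          rw [← mul_sub, Real.norm_eq_abs, abs_mul, abs_of_nonpos hs.2, ← neg_mul]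
          exact mul_le_mul_of_nonneg_left (hΦ s) (by linarith [hs.2]))
        (Continuous.intervalIntegrable (by fun_prop) _ _)
      rw [intervalIntegral.integral_neg, hInt, abs_neg, abs_of_nonneg hge] at this
      exact this
  rw [← mul_sub, add_sub_add_left_eq_sub, ← intervalIntegral.integral_sub
    (Continuous.intervalIntegrable (by fun_prop) _ _)
    (Continuous.intervalIntegrable (by fun_prop) _ _), abs_mul, abs_of_pos (exp_pos _)]
  have h8 : exp (-(K * r ^ 2)) * exp (K * r ^ 2) = 1 := by rw [← exp_add]; simp
  calc _ ≤ exp (-(K * r ^ 2)) * ((exp (K * r ^ 2) - 1) * D / 2) :=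
        mul_le_mul_of_nonneg_left hdiff (exp_pos _).le
    _ = D / 2 - exp (-(K * r ^ 2)) * (D / 2) := by
        linear_combination (D / 2) * h8
    _ ≤ 1 / 2 * D := by nlinarith [exp_pos (-(K * r ^ 2))]

/-- Global solvability of the regularised initial value problem, with solutions depending
continuously on the initial value: Banach fixed point theorem for the Picard map. -/
lemma exists_ivp (n : ℕ) {h : ℝ → ℝ} {K B : ℝ} (hK : 0 < K)
    (hL : ∀ x y, |h x - h y| ≤ K * |x - y|) (hB : ∀ x, |h x| ≤ B) :
    ∃ u : ℝ → ℝ → ℝ, Continuous (fun x : ℝ × ℝ => u x.1 x.2) ∧ (∀ γ, u γ 0 = γ) ∧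
      ∀ γ r, HasDerivAt (u γ) (r * radialMean n h (u γ) r) r := by
  have hh : Continuous h := by
    have : LipschitzWith (Real.toNNReal K) h := LipschitzWith.of_dist_le_mul fun x y => by
      rw [Real.coe_toNNReal _ hK.le]; exact hL x y
    exact this.continuous
  let T : ℝ → (BoundedContinuousFunction ℝ ℝ) → (BoundedContinuousFunction ℝ ℝ) := fun γ v =>
    BoundedContinuousFunction.ofNormedAddCommGroup (picardFun n h K γ v)
      (picardFun_continuous K γ hh v.continuous) (|γ| + B / K) (picardFun_bound γ hK hB)
  have hT : ∀ γ, ContractingWith (1 / 2) (T γ) := by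
    intro γ
    refine ⟨by norm_num, LipschitzWith.of_dist_le_mul fun v w => ?_⟩
    refine (BoundedContinuousFunction.dist_le (by positivity)).mpr fun r => ?_
    have := picardFun_lip (n := n) γ hK hh v.continuous w.continuous hL (D := dist v w)
      (fun x => by
        rw [← Real.dist_eq]; exact BoundedContinuousFunction.dist_coe_le_dist x) r
    simpa [T, Real.dist_eq] using this
  let V : ℝ → BoundedContinuousFunction ℝ ℝ := fun γ => ContractingWith.fixedPoint (T γ) (hT γ)
  have hV : ∀ γ r, V γ r = picardFun n h K γ (V γ) r := by
    intro γ r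
    have : T γ (V γ) = V γ := (hT γ).fixedPoint_isFixedPt
    conv_lhs => rw [← this]
    rfl
  have hVlip : ∀ γ γ' r, |V γ r - V γ' r| ≤ 2 * |γ - γ'| := by
    intro γ γ' r
    have h1 : ∀ z, dist (T γ z) (T γ' z) ≤ |γ - γ'| := by
      intro z
      refine (BoundedContinuousFunction.dist_le (abs_nonneg _)).mpr fun r => ?_
      have : T γ z r - T γ' z r = exp (-(K * r ^ 2)) * (γ - γ') := by
        simp only [T, BoundedContinuousFunction.coe_ofNormedAddCommGroup, picardFun]; ring
      rw [Real.dist_eq, this, abs_mul, abs_of_pos (exp_pos _)]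
      have h5 : exp (-(K * r ^ 2)) ≤ 1 := exp_le_one_iff.mpr (by nlinarith [sq_nonneg r])
      nlinarith [abs_nonneg (γ - γ')]
    have h2 := (hT γ).fixedPoint_lipschitz_in_map (hT γ') h1
    have h3 : dist (V γ r) (V γ' r) ≤ dist (V γ) (V γ') :=
      BoundedContinuousFunction.dist_coe_le_dist r
    rw [Real.dist_eq] at h3
    refine h3.trans (h2.trans (le_of_eq ?_))
    norm_num
    ring
  refine ⟨fun γ r => exp (K * r ^ 2) * V γ r, ?_, ?_, ?_⟩
  · have hVc : Continuous (fun x : ℝ × ℝ => V x.1 x.2) := by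
      rw [continuous_iff_continuousAt]
      rintro ⟨γ, r⟩
      rw [ContinuousAt, tendsto_iff_dist_tendsto_zero]
      have h1 : Tendsto (fun x : ℝ × ℝ => 2 * |x.1 - γ| + |V γ x.2 - V γ r|) (𝓝 (γ, r)) (𝓝 0) := by
        have : Continuous (fun x : ℝ × ℝ => 2 * |x.1 - γ| + |V γ x.2 - V γ r|) := by
          have := (V γ).continuous
          fun_prop
        simpa using this.tendsto (γ, r)
      refine squeeze_zero (fun _ => dist_nonneg) (fun x => ?_) h1
      have h2 := hVlip x.1 γ x.2
      rw [Real.dist_eq]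
      calc |V x.1 x.2 - V γ r| ≤ |V x.1 x.2 - V γ x.2| + |V γ x.2 - V γ r| := abs_sub_le _ _ _
        _ ≤ _ := by linarith
    fun_prop
  · intro γ
    simp [hV γ 0, picardFun]
  · intro γ r
    have hc : Continuous (fun r => exp (K * r ^ 2) * V γ r) := by
      have := (V γ).continuous
      fun_prop
    have hΦ : Continuous (radialMean n h (fun r => exp (K * r ^ 2) * V γ r)) :=
      radialMean_continuous hh hc
    have heq : (fun r => exp (K * r ^ 2) * V γ r) = fun r => γ + ∫ s in (0:ℝ)..r,
        s * radialMean n h (fun r => exp (K * r ^ 2) * V γ r) s := by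
      funext r
      rw [hV γ r, picardFun, ← mul_assoc, ← exp_add]
      simp
    have hF : Continuous (fun s => s * radialMean n h (fun r => exp (K * r ^ 2) * V γ r) s) := by
      fun_prop
    have h1 := (intervalIntegral.integral_hasDerivAt_right (hF.intervalIntegrable 0 r)
      (hF.stronglyMeasurableAtFilter _ _) hF.continuousAt).const_add γ
    rw [← heq] at h1
    exact h1

/-- The second derivative of a solution of the regularised problem. -/
lemma hasDerivAt_mul_radialMean {n : ℕ} {h u : ℝ → ℝ} (hh : Continuous h) (hu : Continuous u)
    (r : ℝ) :
    HasDerivAt (fun r => r * radialMean n h u r) (h (u r) - n * radialMean n h u r) r := by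
  have hΦ : Continuous (radialMean n h u) := radialMean_continuous hh hu
  have hsub : ∀ r, r ^ (n + 1) * radialMean n h u r = ∫ s in (0:ℝ)..r, s ^ n * h (u s) := by
    intro r
    have h1 := intervalIntegral.mul_integral_comp_mul_left (a := 0) (b := 1)
      (f := fun s => s ^ n * h (u s)) r
    rw [mul_zero, mul_one] at h1
    rw [← h1, radialMean, ← intervalIntegral.integral_const_mul,
      ← intervalIntegral.integral_const_mul]
    congr 1
    funext σ
    ring
  by_cases hr : r = 0
  · subst hr
    have h0 : h (u 0) - n * radialMean n h u 0 = radialMean n h u 0 := by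
      have : radialMean n h u 0 = h (u 0) / (n + 1) := by
        simp [radialMean, integral_pow]
        ring
      rw [this]
      field_simp
      ring
    rw [h0, hasDerivAt_iff_tendsto_slope_zero]
    have : Tendsto (radialMean n h u) (𝓝[≠] 0) (𝓝 (radialMean n h u 0)) :=
      (hΦ.tendsto 0).mono_left nhdsWithin_le_nhds
    refine this.congr' ?_
    filter_upwards [self_mem_nhdsWithin] with t ht
    have ht' : t ≠ 0 := ht
    simp [ht']
  · have hF : Continuous (fun s => s ^ n * h (u s)) := by fun_prop
    have hI : HasDerivAt (fun r => ∫ s in (0:ℝ)..r, s ^ n * h (u s)) (r ^ n * h (u r)) r :=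
      intervalIntegral.integral_hasDerivAt_right (hF.intervalIntegrable 0 r)
        (hF.stronglyMeasurableAtFilter _ _) hF.continuousAt
    have hp : HasDerivAt (fun r : ℝ => r ^ n) (n * r ^ (n - 1)) r := hasDerivAt_pow n r
    have h1 := hI.div hp (pow_ne_zero n hr)
    have h2 : (fun r => r * radialMean n h u r) =ᶠ[𝓝 r]
        ((fun r => ∫ s in (0:ℝ)..r, s ^ n * h (u s)) / fun r : ℝ => r ^ n) := by
      filter_upwards [isOpen_ne.mem_nhds hr] with t ht
      have ht' : t ≠ 0 := ht
      rw [Pi.div_apply, ← hsub t, eq_div_iff (pow_ne_zero n ht')]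
      ring
    refine (h1.congr_of_eventuallyEq h2).congr_deriv ?_
    rw [← hsub r]
    rcases n with _ | m
    · simp
    · simp only [Nat.add_sub_cancel]
      field_simp
      ring

/-! ### The truncated nonlinearity and the energy -/

/-- The nonlinearity `x - x ^ p`, evaluated at the truncation of `x` to `[0, 2]`. -/
noncomputable def truncNL (p x : ℝ) : ℝ := max 0 (min x 2) - (max 0 (min x 2)) ^ p

lemma truncNL_of_mem {p x : ℝ} (hx : x ∈ Icc (0:ℝ) 2) : truncNL p x = x - x ^ p := by
  simp [truncNL, min_eq_left hx.2, max_eq_right hx.1]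

lemma truncNL_lipschitz {p : ℝ} (hp : 2 ≤ p) :
    ∀ x y, |truncNL p x - truncNL p y| ≤ (1 + p * 2 ^ (p - 1)) * |x - y| := by
  have key : ∀ x ∈ Icc (0:ℝ) 2, ∀ y ∈ Icc (0:ℝ) 2,
      |(x - x ^ p) - (y - y ^ p)| ≤ (1 + p * 2 ^ (p - 1)) * |x - y| := by
    intro x hx y hy
    have hd : ∀ z ∈ Icc (0:ℝ) 2,
        HasDerivWithinAt (fun z : ℝ => z - z ^ p) (1 - p * z ^ (p - 1)) (Icc 0 2) z := by
      intro z _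
      exact ((hasDerivAt_id z).sub
        (Real.hasDerivAt_rpow_const (Or.inr (by linarith)))).hasDerivWithinAt
    refine Convex.norm_image_sub_le_of_norm_hasDerivWithin_le hd ?_ (convex_Icc 0 2) hy hx
    intro z hz
    have h1 : z ^ (p - 1) ≤ 2 ^ (p - 1) := rpow_le_rpow hz.1 hz.2 (by linarith)
    have h2 : 0 ≤ z ^ (p - 1) := rpow_nonneg hz.1 _
    rw [Real.norm_eq_abs, abs_le]
    constructor <;> nlinarith
  have hmem : ∀ x : ℝ, max 0 (min x 2) ∈ Icc (0:ℝ) 2 := fun x =>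
    ⟨le_max_left _ _, max_le (by norm_num) (min_le_right _ _)⟩
  intro x y
  refine (key _ (hmem x) _ (hmem y)).trans ?_
  refine mul_le_mul_of_nonneg_left ?_ (by positivity)
  refine (abs_max_sub_max_le_max 0 (min x 2) 0 (min y 2)).trans ?_
  refine max_le (by simp) ?_
  refine (abs_min_sub_min_le_max x 2 y 2).trans ?_
  exact max_le le_rfl (by simp)

lemma truncNL_continuous {p : ℝ} (hp : 2 ≤ p) : Continuous (truncNL p) := by
  have : LipschitzWith (Real.toNNReal (1 + p * 2 ^ (p - 1))) (truncNL p) :=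
    LipschitzWith.of_dist_le_mul fun x y => by
      rw [Real.coe_toNNReal _ (by positivity)]; exact truncNL_lipschitz hp x y
  exact this.continuous

lemma truncNL_bound {p : ℝ} (hp : 2 ≤ p) (x : ℝ) : |truncNL p x| ≤ 2 + 2 ^ p := by
  have h1 : 0 ≤ max 0 (min x 2) := le_max_left _ _
  have h2 : max 0 (min x 2) ≤ 2 := max_le (by norm_num) (min_le_right _ _)
  have h3 : (max 0 (min x 2)) ^ p ≤ 2 ^ p := rpow_le_rpow h1 h2 (by linarith)
  have h4 : 0 ≤ (max 0 (min x 2)) ^ p := rpow_nonneg h1 _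
  unfold truncNL
  rw [abs_le]; constructor <;> linarith

lemma truncNL_nonneg {p x : ℝ} (hp : 2 ≤ p) (hx : x ≤ 1) : 0 ≤ truncNL p x := by
  have h1 : 0 ≤ max 0 (min x 2) := le_max_left _ _
  have h2 : max 0 (min x 2) ≤ 1 := max_le (by norm_num) ((min_le_left _ _).trans hx)
  have := rpow_le_self_of_le_one h1 h2 (by linarith : (1:ℝ) ≤ p)
  unfold truncNL; linarith

lemma truncNL_pos {p x : ℝ} (hp : 2 ≤ p) (h0 : 0 < x) (hx : x < 1) : 0 < truncNL p x := by
  rw [truncNL_of_mem ⟨h0.le, by linarith⟩]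
  have := rpow_lt_self_of_lt_one h0 hx (by linarith : (1:ℝ) < p)
  linarith

lemma truncNL_nonpos {p x : ℝ} (hp : 2 ≤ p) (hx : 1 ≤ x) : truncNL p x ≤ 0 := by
  have h1 : 1 ≤ max 0 (min x 2) := le_max_of_le_right (le_min hx (by norm_num))
  have := self_le_rpow_of_one_le h1 (by linarith : (1:ℝ) ≤ p)
  unfold truncNL; linarith

lemma truncNL_neg {p x : ℝ} (hp : 2 ≤ p) (h0 : 1 < x) : truncNL p x < 0 := by
  have h1 : 1 < max 0 (min x 2) := lt_max_of_lt_right (lt_min h0 (by norm_num))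
  have := self_lt_rpow_of_one_lt h1 (by linarith : (1:ℝ) < p)
  unfold truncNL; linarith

lemma truncNL_le {p x : ℝ} : truncNL p x ≤ max 0 x := by
  have h1 : 0 ≤ max 0 (min x 2) := le_max_left _ _
  have h4 : 0 ≤ (max 0 (min x 2)) ^ p := rpow_nonneg h1 _
  have h5 : max 0 (min x 2) ≤ max 0 x := max_le_max le_rfl (min_le_left _ _)
  unfold truncNL; linarith

/-- The potential `∫₁ˣ (s ^ p - s) ds`, which vanishes at its minimum `x = 1`. -/
noncomputable def potential (p x : ℝ) : ℝ := (x ^ (p + 1) - 1) / (p + 1) - (x ^ 2 - 1) / 2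

/-- The potential of the truncated nonlinearity. -/
noncomputable def truncPot (p x : ℝ) : ℝ := -∫ s in (1:ℝ)..x, truncNL p s

lemma truncPot_hasDerivAt {p : ℝ} (hp : 2 ≤ p) (x : ℝ) :
    HasDerivAt (truncPot p) (-truncNL p x) x := by
  have hc := truncNL_continuous hp
  exact (intervalIntegral.integral_hasDerivAt_right (hc.intervalIntegrable 1 x)
    (hc.stronglyMeasurableAtFilter _ _) hc.continuousAt).neg

lemma potential_hasDerivAt {p x : ℝ} (hp : 2 ≤ p) :
    HasDerivAt (potential p) (x ^ p - x) x := by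
  have h1 : HasDerivAt (fun x : ℝ => x ^ (p + 1)) ((p + 1) * x ^ (p + 1 - 1)) x :=
    Real.hasDerivAt_rpow_const (Or.inr (by linarith))
  have h2 := ((h1.sub_const 1).div_const (p + 1)).sub
    (((hasDerivAt_pow 2 x).sub_const 1).div_const 2)
  refine h2.congr_deriv ?_
  have : p + 1 ≠ 0 := by positivity
  rw [add_sub_cancel_right]
  field_simp
  norm_num
  ring

lemma truncPot_eq {p x : ℝ} (hp : 2 ≤ p) (hx : x ∈ Icc (0:ℝ) 2) :
    truncPot p x = potential p x := by
  have hsub : uIcc 1 x ⊆ Icc (0:ℝ) 2 := by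
    exact uIcc_subset_Icc ⟨by norm_num, by norm_num⟩ hx
  have h1 : ∫ s in (1:ℝ)..x, (s ^ p - s) = potential p x - potential p 1 :=
    intervalIntegral.integral_eq_sub_of_hasDerivAt (fun s _ => potential_hasDerivAt hp)
      (Continuous.intervalIntegrable
        (by
          have : Continuous (fun s : ℝ => s ^ p) := continuous_rpow_const (by linarith)
          fun_prop) _ _)
  have h2 : potential p 1 = 0 := by simp [potential]
  rw [h2, sub_zero] at h1
  rw [truncPot, ← h1, ← intervalIntegral.integral_neg]
  refine intervalIntegral.integral_congr fun s hs => ?_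
  simp only [truncNL_of_mem (p := p) (hsub hs)]
  ring

lemma truncPot_anti {p : ℝ} (hp : 2 ≤ p) : AntitoneOn (truncPot p) (Iic 1) := by
  refine antitoneOn_of_deriv_nonpos (convex_Iic 1)
    (fun x _ => (truncPot_hasDerivAt hp x).continuousAt.continuousWithinAt)
    (fun x _ => (truncPot_hasDerivAt hp x).differentiableAt.differentiableWithinAt) ?_
  intro x hx
  rw [interior_Iic] at hx
  rw [(truncPot_hasDerivAt hp x).deriv]
  linarith [truncNL_nonneg hp (le_of_lt hx)]

lemma truncPot_strictAnti {p : ℝ} (hp : 2 ≤ p) : StrictAntiOn (truncPot p) (Icc 0 1) := by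
  refine strictAntiOn_of_deriv_neg (convex_Icc 0 1)
    (fun x _ => (truncPot_hasDerivAt hp x).continuousAt.continuousWithinAt) ?_
  intro x hx
  rw [interior_Icc] at hx
  rw [(truncPot_hasDerivAt hp x).deriv]
  linarith [truncNL_pos hp hx.1 hx.2]

lemma truncPot_strictMono {p : ℝ} (hp : 2 ≤ p) : StrictMonoOn (truncPot p) (Ici 1) := by
  refine strictMonoOn_of_deriv_pos (convex_Ici 1)
    (fun x _ => (truncPot_hasDerivAt hp x).continuousAt.continuousWithinAt) ?_
  intro x hx
  rw [interior_Ici] at hx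
  rw [(truncPot_hasDerivAt hp x).deriv]
  linarith [truncNL_neg hp hx]

lemma truncPot_one (p : ℝ) : truncPot p 1 = 0 := by simp [truncPot]

lemma truncPot_nonneg {p : ℝ} (hp : 2 ≤ p) (x : ℝ) : 0 ≤ truncPot p x := by
  rw [← truncPot_one p]
  rcases le_total x 1 with h | h
  · exact truncPot_anti hp (mem_Iic.mpr h) (mem_Iic.mpr le_rfl) h
  · exact (truncPot_strictMono hp).monotoneOn (mem_Ici.mpr le_rfl) (mem_Ici.mpr h) h

lemma truncPot_le_half {p x : ℝ} (hp : 2 ≤ p) (h0 : 0 ≤ x) (hx : x ≤ 1) :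
    truncPot p x ≤ 1 / 2 := by
  have h1 := truncPot_anti hp (mem_Iic.mpr zero_le_one) (mem_Iic.mpr hx) h0
  rw [truncPot_eq hp (x := 0) ⟨le_rfl, by norm_num⟩, potential,
    zero_rpow (by linarith : p + 1 ≠ 0)] at h1
  have : (0 - 1) / (p + 1) ≤ 0 := div_nonpos_of_nonpos_of_nonneg (by norm_num) (by linarith)
  norm_num at h1 this ⊢
  linarith

lemma half_lt_truncPot_two {p : ℝ} (hp : 2 ≤ p) : 1 / 2 < truncPot p 2 := by
  rw [truncPot_eq hp ⟨by norm_num, le_rfl⟩, potential]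
  have h5 : 2 < ((2:ℝ) ^ (p + 1) - 1) / (p + 1) := by
    rw [lt_div_iff₀ (by linarith)]
    have h6 := one_add_mul_self_le_rpow_one_add (s := 1) (by norm_num)
      (by linarith : 1 ≤ p - 1)
    have h7 : (2:ℝ) ^ (p + 1) = 2 ^ (p - 1) * 2 ^ (2:ℝ) := by
      rw [← rpow_add (by norm_num)]; congr 1; ring
    norm_num at h6 h7
    rw [h7]
    linarith
  norm_num
  linarith

/-- `u` solves `u'' + (n/r) u' = truncNL p u`, `u(0) = γ`, `u'(0) = 0`, in the form that is
regular at `r = 0`. -/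
structure IsRadial (n : ℕ) (p γ : ℝ) (u : ℝ → ℝ) : Prop where
  der : ∀ r, HasDerivAt u (r * radialMean n (truncNL p) u r) r
  init_val : u 0 = γ

namespace IsRadial

variable {n : ℕ} {p γ : ℝ} {u : ℝ → ℝ}

lemma continuous (H : IsRadial n p γ u) : Continuous u :=
  continuous_iff_continuousAt.mpr fun r => (H.der r).continuousAt

/-- The energy `u'² / 2 + truncPot p u` is dissipated. -/
lemma energy_hasDerivAt (H : IsRadial n p γ u) (hp : 2 ≤ p) (r : ℝ) :
    HasDerivAt (fun r => (r * radialMean n (truncNL p) u r) ^ 2 / 2 + truncPot p (u r))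
      (-(n * r * radialMean n (truncNL p) u r ^ 2)) r := by
  have h1 := hasDerivAt_mul_radialMean (n := n) (truncNL_continuous hp) H.continuous r
  have h2 := ((h1.pow 2).div_const 2).add ((truncPot_hasDerivAt hp (u r)).comp r (H.der r))
  refine h2.congr_deriv ?_
  norm_num
  ring

lemma energy_le (H : IsRadial n p γ u) (hp : 2 ≤ p) {r s : ℝ} (h0 : 0 ≤ r) (hrs : r ≤ s) :
    (s * radialMean n (truncNL p) u s) ^ 2 / 2 + truncPot p (u s) ≤
      (r * radialMean n (truncNL p) u r) ^ 2 / 2 + truncPot p (u r) := by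
  have : AntitoneOn (fun r => (r * radialMean n (truncNL p) u r) ^ 2 / 2 + truncPot p (u r))
      (Ici 0) := by
    refine antitoneOn_of_deriv_nonpos (convex_Ici 0)
      (fun x _ => (H.energy_hasDerivAt hp x).continuousAt.continuousWithinAt)
      (fun x _ => (H.energy_hasDerivAt hp x).differentiableAt.differentiableWithinAt) ?_
    intro x hx
    rw [interior_Ici] at hx
    rw [(H.energy_hasDerivAt hp x).deriv]
    have hx' : 0 < x := hx
    have : 0 ≤ n * x * radialMean n (truncNL p) u x ^ 2 := by positivity
    linarith
  exact this (mem_Ici.mpr h0) (mem_Ici.mpr (h0.trans hrs)) hrs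

lemma energy_le_initial (H : IsRadial n p γ u) (hp : 2 ≤ p) {r : ℝ} (h0 : 0 ≤ r) :
    (r * radialMean n (truncNL p) u r) ^ 2 / 2 + truncPot p (u r) ≤ truncPot p γ := by
  have := H.energy_le hp le_rfl h0
  simpa [H.init_val] using this

lemma lower (H : IsRadial n p γ u) (hp : 2 ≤ p) (hγ : 0 < γ) (hγ1 : γ < 1) {r : ℝ} (h0 : 0 ≤ r) :
    γ ≤ u r := by
  by_contra hlt
  push Not at hlt
  have h1 := H.energy_le_initial hp h0
  have hm : max (u r) (γ / 2) < γ := max_lt hlt (by linarith)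
  have hm0 : 0 ≤ max (u r) (γ / 2) := le_max_of_le_right (by linarith)
  have h2 := truncPot_strictAnti hp ⟨hm0, by linarith⟩ ⟨hγ.le, hγ1.le⟩ hm
  have h3 := truncPot_anti hp (mem_Iic.mpr (by linarith : u r ≤ 1))
    (mem_Iic.mpr (by linarith : max (u r) (γ / 2) ≤ 1)) (le_max_left _ _)
  nlinarith [sq_nonneg (r * radialMean n (truncNL p) u r)]

lemma upper (H : IsRadial n p γ u) (hp : 2 ≤ p) (hγ : 0 < γ) (hγ1 : γ < 1) {r : ℝ} (h0 : 0 ≤ r) :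
    u r ≤ 2 := by
  by_contra hlt
  push Not at hlt
  have h1 := H.energy_le_initial hp h0
  have h2 := truncPot_strictMono hp (mem_Ici.mpr (by norm_num : (1:ℝ) ≤ 2))
    (mem_Ici.mpr (by linarith : 1 ≤ u r)) hlt
  have h3 := truncPot_le_half hp hγ.le hγ1.le
  have h4 := half_lt_truncPot_two hp
  nlinarith [sq_nonneg (r * radialMean n (truncNL p) u r)]

lemma slope_le (H : IsRadial n p γ u) (hp : 2 ≤ p) (hγ : 0 < γ) (hγ1 : γ < 1) {r : ℝ}
    (h0 : 0 ≤ r) : |r * radialMean n (truncNL p) u r| ≤ 1 := by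
  have h1 := H.energy_le_initial hp h0
  have h3 := truncPot_le_half hp hγ.le hγ1.le
  have h4 := truncPot_nonneg hp (u r)
  rw [← sq_le_one_iff_abs_le_one]
  linarith

/-- The trajectory never reaches the equilibrium `(u, u') = (1, 0)`: dissipation of the energy `e` is
controlled by `e` itself, so that `r ^ (2n) * e` is nondecreasing. -/
lemma energy_pos (H : IsRadial n p γ u) (hp : 2 ≤ p) (hγ : 0 < γ) (hγ1 : γ < 1) {r : ℝ}
    (h0 : 0 ≤ r) :
    0 < (r * radialMean n (truncNL p) u r) ^ 2 / 2 + truncPot p (u r) := by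
  set e : ℝ → ℝ := fun r => (r * radialMean n (truncNL p) u r) ^ 2 / 2 + truncPot p (u r) with he
  have hce : Continuous e :=
    continuous_iff_continuousAt.mpr fun r => (H.energy_hasDerivAt hp r).continuousAt
  have he0 : 0 < e 0 := by
    have := truncPot_strictAnti hp ⟨hγ.le, hγ1.le⟩ ⟨zero_le_one, le_rfl⟩ hγ1
    rw [truncPot_one] at this
    simpa [he, H.init_val] using this
  change 0 < e r
  rcases h0.eq_or_lt with h | hr
  · rw [← h]; exact he0
  -- `r ^ (2n) * e` is nondecreasing, and `e` is positive near `0`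
  have hd : ∀ x, HasDerivAt (fun x => x ^ (2 * n) * e x)
      ((2 * n : ℕ) * x ^ (2 * n - 1) * e x +
        x ^ (2 * n) * (-(n * x * radialMean n (truncNL p) u x ^ 2))) x := fun x =>
    (hasDerivAt_pow (2 * n) x).mul (H.energy_hasDerivAt hp x)
  have hmono : MonotoneOn (fun x => x ^ (2 * n) * e x) (Ici 0) := by
    refine monotoneOn_of_deriv_nonneg (convex_Ici 0)
      (fun x _ => (hd x).continuousAt.continuousWithinAt)
      (fun x _ => (hd x).differentiableAt.differentiableWithinAt) ?_
    intro x hx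
    rw [interior_Ici] at hx
    have hx' : 0 < x := hx
    rw [(hd x).deriv]
    have h5 := truncPot_nonneg hp (u x)
    rcases n with _ | m
    · simp
    · have h6 : 2 * (m + 1) - 1 = 2 * m + 1 := by omega
      rw [h6]
      have : ((2 * (m + 1) : ℕ) : ℝ) * x ^ (2 * m + 1) * e x + x ^ (2 * (m + 1)) *
          (-(((m + 1 : ℕ) : ℝ) * x * radialMean (m + 1) (truncNL p) u x ^ 2)) =
          ((2 * (m + 1) : ℕ) : ℝ) * x ^ (2 * m + 1) * truncPot p (u x) := by
        simp only [he]; push_cast; ring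
      rw [this]
      positivity
  obtain ⟨s, hs, hsr⟩ : ∃ s, 0 < e s ∧ s ∈ Ioo 0 r := by
    have h1 : ∀ᶠ s in 𝓝[>] (0:ℝ), 0 < e s :=
      (hce.tendsto 0).mono_left nhdsWithin_le_nhds |>.eventually (lt_mem_nhds he0)
    exact (h1.and (Ioo_mem_nhdsGT hr)).exists
  have h2 := hmono (mem_Ici.mpr hsr.1.le) (mem_Ici.mpr hr.le) hsr.2.le
  have h3 : 0 < s ^ (2 * n) * e s := mul_pos (pow_pos hsr.1 _) hs
  exact pos_of_mul_pos_right (h3.trans_le h2) (by positivity)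

end IsRadial

/-! ### Polar coordinates in the phase plane -/

/-- A planar curve that starts on the positive first axis and avoids the origin is
`(a cos θ, a sin θ)` with `a > 0`, where `θ` is the integral of its angular velocity `q`. -/
lemma polar_of_angular_velocity {X Y X' Y' q : ℝ → ℝ}
    (hX : ∀ r ∈ Icc (0:ℝ) 1, HasDerivAt X (X' r) r)
    (hY : ∀ r ∈ Icc (0:ℝ) 1, HasDerivAt Y (Y' r) r)
    (hq : Continuous q) (hS : ∀ r ∈ Icc (0:ℝ) 1, 0 < X r ^ 2 + Y r ^ 2)
    (hqS : ∀ r ∈ Icc (0:ℝ) 1, q r * (X r ^ 2 + Y r ^ 2) = X r * Y' r - Y r * X' r)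
    (hX0 : 0 < X 0) (hY0 : Y 0 = 0) {r : ℝ} (hr : r ∈ Icc (0:ℝ) 1) :
    ∃ a, 0 < a ∧ X r = a * cos (∫ t in (0:ℝ)..r, q t) ∧ Y r = a * sin (∫ t in (0:ℝ)..r, q t) := by
  set θ : ℝ → ℝ := fun r => ∫ t in (0:ℝ)..r, q t with hθ
  have hθd : ∀ r, HasDerivAt θ (q r) r := fun r =>
    intervalIntegral.integral_hasDerivAt_right (hq.intervalIntegrable 0 r)
      (hq.stronglyMeasurableAtFilter _ _) hq.continuousAt
  have hθ0 : θ 0 = 0 := by simp [hθ]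
  set a : ℝ → ℝ := fun r => X r * cos (θ r) + Y r * sin (θ r) with ha
  set b : ℝ → ℝ := fun r => Y r * cos (θ r) - X r * sin (θ r) with hb
  have hbd : ∀ r ∈ Icc (0:ℝ) 1,
      HasDerivAt b (Y' r * cos (θ r) - X' r * sin (θ r) - q r * a r) r := by
    intro r hr
    have := ((hY r hr).mul (hθd r).cos).sub ((hX r hr).mul (hθd r).sin)
    refine this.congr_deriv ?_
    simp only [ha]; ring
  have had : ∀ r ∈ Icc (0:ℝ) 1, ContinuousAt a r := by
    intro r hr
    exact (((hX r hr).mul (hθd r).cos).add ((hY r hr).mul (hθd r).sin)).continuousAt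
  have hab : ∀ r, a r ^ 2 + b r ^ 2 = X r ^ 2 + Y r ^ 2 := by
    intro r
    simp only [ha, hb]
    linear_combination (X r ^ 2 + Y r ^ 2) * Real.sin_sq_add_cos_sq (θ r)
  have hb0 : ∀ r ∈ Icc (0:ℝ) 1, b r = 0 := by
    have hquot : ∀ r ∈ Icc (0:ℝ) 1,
        HasDerivAt (fun r => b r ^ 2 / (X r ^ 2 + Y r ^ 2)) 0 r := by
      intro r hr
      have h1 := ((hbd r hr).pow 2).div (((hX r hr).pow 2).add ((hY r hr).pow 2)) (hS r hr).ne'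
      refine h1.congr_deriv ?_
      rw [div_eq_zero_iff]
      left
      have e := hqS r hr
      simp only [ha, hb, Pi.pow_apply, Pi.add_apply]
      push_cast
      linear_combination (-2 * (Y r * cos (θ r) - X r * sin (θ r)) *
        (X r * cos (θ r) + Y r * sin (θ r))) * e
    have hc := constant_of_has_deriv_right_zero
      (fun r hr => (hquot r hr).continuousAt.continuousWithinAt)
      (fun r hr => (hquot r (Ico_subset_Icc_self hr)).hasDerivWithinAt)
    intro r hr
    have h2 := hc r hr
    have h3 : b 0 = 0 := by simp [hb, hY0, hθ0]
    rw [h3] at h2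
    have h4 := (hS r hr).ne'
    simpa [h4] using h2
  have hapos : 0 < a r := by
    by_contra hneg
    push Not at hneg
    have ha0 : 0 < a 0 := by simp [ha, hY0, hθ0, hX0]
    have hIV : (0:ℝ) ∈ a '' Icc 0 r :=
      intermediate_value_Icc' hr.1
        (fun t ht => (had t ⟨ht.1, ht.2.trans hr.2⟩).continuousWithinAt) ⟨hneg, ha0.le⟩
    obtain ⟨t, ht, hat⟩ := hIV
    have ht' : t ∈ Icc (0:ℝ) 1 := ⟨ht.1, ht.2.trans hr.2⟩
    have := hab t
    rw [hat, hb0 t ht'] at this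
    have := hS t ht'
    linarith
  have hbr := hb0 r hr
  have hsc := Real.sin_sq_add_cos_sq (θ r)
  refine ⟨a r, hapos, ?_, ?_⟩
  · simp only [ha, hb] at hbr ⊢
    linear_combination (-X r) * hsc - sin (θ r) * hbr
  · simp only [ha, hb] at hbr ⊢
    linear_combination (-Y r) * hsc + cos (θ r) * hbr

/-- If `θ' > 0` wherever `θ = c`, then `θ` cannot return to the level `c`. -/
lemma lt_of_level_le {θ θ' : ℝ → ℝ} {c : ℝ} (hθ : ∀ r ∈ Icc (0:ℝ) 1, HasDerivAt θ (θ' r) r)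
    (hpos : ∀ r ∈ Icc (0:ℝ) 1, θ r = c → 0 < θ' r) {y r : ℝ} (hy : 0 ≤ y) (hyr : y < r)
    (hr : r ≤ 1) (h : c ≤ θ y) : c < θ r := by
  have hsub : ∀ t ∈ Icc y r, t ∈ Icc (0:ℝ) 1 := fun t ht => ⟨hy.trans ht.1, ht.2.trans hr⟩
  have hle : ∀ t ∈ Icc y r, c ≤ θ t := by
    intro t ht
    exact image_le_of_deriv_right_lt_deriv_boundary' (f := fun _ => c) (f' := fun _ => 0)
      continuousOn_const (fun x _ => hasDerivWithinAt_const _ _ _) h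
      (fun x hx => (hθ x (hsub x hx)).continuousAt.continuousWithinAt)
      (fun x hx => (hθ x (hsub x (Ico_subset_Icc_self hx))).hasDerivWithinAt)
      (fun x hx hcx => hpos x (hsub x (Ico_subset_Icc_self hx)) hcx.symm) ht
  refine lt_of_le_of_ne (hle r ⟨hyr.le, le_rfl⟩) fun hc => ?_
  have hr' : r ∈ Icc (0:ℝ) 1 := hsub r ⟨hyr.le, le_rfl⟩
  have h1 := (hθ r hr').tendsto_slope.eventually (lt_mem_nhds (hpos r hr' hc.symm))
  have h2 : ∀ᶠ t in 𝓝[<] r, 0 < slope θ r t :=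
    h1.filter_mono (nhdsWithin_mono _ fun t ht => ne_of_lt ht)
  obtain ⟨t, ht, hty⟩ := (h2.and (Ioo_mem_nhdsLT hyr)).exists
  rw [slope_def_field, div_pos_iff] at ht
  have := hle t ⟨hty.1.le, hty.2.le⟩
  rcases ht with ht | ht <;> linarith [hty.2]

/-- Angular velocity of `(1 - u, u' / κ)`. -/
noncomputable def phaseRate (n : ℕ) (p κ : ℝ) (u : ℝ → ℝ) (s : ℝ) : ℝ :=
  ((s * radialMean n (truncNL p) u s) ^ 2 / κ -
    (u s - 1) * (truncNL p (u s) - n * radialMean n (truncNL p) u s) / κ) /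
  ((u s - 1) ^ 2 + (s * radialMean n (truncNL p) u s) ^ 2 / κ ^ 2)

/-- Truncation to the unit interval. -/
noncomputable def clamp (t : ℝ) : ℝ := max 0 (min t 1)

lemma clamp_mem (t : ℝ) : clamp t ∈ Icc (0:ℝ) 1 :=
  ⟨le_max_left _ _, max_le zero_le_one (min_le_right _ _)⟩

lemma clamp_of_mem {t : ℝ} (ht : t ∈ Icc (0:ℝ) 1) : clamp t = t := by
  simp [clamp, min_eq_left ht.2, max_eq_right ht.1]

lemma clamp_continuous : Continuous clamp := by unfold clamp; fun_prop

/-- The phase angle of `(1 - u, u' / κ)`, starting from `0`. The integrand is frozen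
outside `[0, 1]`. -/
noncomputable def phase (n : ℕ) (p κ : ℝ) (u : ℝ → ℝ) (r : ℝ) : ℝ :=
  ∫ t in (0:ℝ)..r, phaseRate n p κ u (clamp t)

namespace IsRadial

variable {n : ℕ} {p γ κ : ℝ} {u : ℝ → ℝ}

lemma phase_denom_pos (H : IsRadial n p γ u) (hp : 2 ≤ p) (hγ : 0 < γ) (hγ1 : γ < 1)
    (hκ : 0 < κ) {r : ℝ} (h0 : 0 ≤ r) :
    0 < (u r - 1) ^ 2 + (r * radialMean n (truncNL p) u r) ^ 2 / κ ^ 2 := by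
  have h1 := H.energy_pos hp hγ hγ1 h0
  rcases eq_or_ne (u r) 1 with h | h
  · rw [h, truncPot_one, add_zero] at h1
    have h2 : 0 < (r * radialMean n (truncNL p) u r) ^ 2 := by linarith
    have : 0 < (r * radialMean n (truncNL p) u r) ^ 2 / κ ^ 2 := by positivity
    linarith [sq_nonneg (u r - 1)]
  · have : 0 < (u r - 1) ^ 2 := by
      have := sub_ne_zero.mpr h
      positivity
    have : 0 ≤ (r * radialMean n (truncNL p) u r) ^ 2 / κ ^ 2 := by positivity
    linarith

lemma phaseRate_continuous (H : IsRadial n p γ u) (hp : 2 ≤ p) (hγ : 0 < γ) (hγ1 : γ < 1)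
    (hκ : 0 < κ) : Continuous fun t => phaseRate n p κ u (clamp t) := by
  have h1 : Continuous (radialMean n (truncNL p) u) :=
    radialMean_continuous (truncNL_continuous hp) H.continuous
  have h2 := truncNL_continuous hp
  have h3 := H.continuous
  have h4 := clamp_continuous
  unfold phaseRate
  refine Continuous.div (by fun_prop) (by fun_prop) ?_
  intro t
  exact (H.phase_denom_pos hp hγ hγ1 hκ (clamp_mem t).1).ne'

lemma phase_hasDerivAt (H : IsRadial n p γ u) (hp : 2 ≤ p) (hγ : 0 < γ) (hγ1 : γ < 1)
    (hκ : 0 < κ) {r : ℝ} (hr : r ∈ Icc (0:ℝ) 1) :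
    HasDerivAt (phase n p κ u) (phaseRate n p κ u r) r := by
  have hq := H.phaseRate_continuous hp hγ hγ1 hκ
  have := intervalIntegral.integral_hasDerivAt_right (hq.intervalIntegrable 0 r)
      (hq.stronglyMeasurableAtFilter _ _) hq.continuousAt
  rwa [clamp_of_mem hr] at this

lemma phase_polar (H : IsRadial n p γ u) (hp : 2 ≤ p) (hγ : 0 < γ) (hγ1 : γ < 1)
    (hκ : 0 < κ) {r : ℝ} (hr : r ∈ Icc (0:ℝ) 1) :
    ∃ a, 0 < a ∧ 1 - u r = a * cos (phase n p κ u r) ∧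
      r * radialMean n (truncNL p) u r = κ * (a * sin (phase n p κ u r)) := by
  obtain ⟨a, ha, h1, h2⟩ := polar_of_angular_velocity
    (X := fun r => 1 - u r) (Y := fun r => r * radialMean n (truncNL p) u r / κ)
    (X' := fun r => -(r * radialMean n (truncNL p) u r))
    (Y' := fun r => (truncNL p (u r) - n * radialMean n (truncNL p) u r) / κ)
    (q := fun t => phaseRate n p κ u (clamp t))
    (fun r _ => by simpa using (H.der r).const_sub 1)
    (fun r _ => (hasDerivAt_mul_radialMean (truncNL_continuous hp) H.continuous r).div_const κ)
    (H.phaseRate_continuous hp hγ hγ1 hκ)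
    (fun r hr => by
      have := H.phase_denom_pos hp hγ hγ1 hκ hr.1
      rw [div_pow]; convert this using 2; ring)
    (fun r hr => by
      have := (H.phase_denom_pos hp hγ hγ1 hκ hr.1).ne'
      rw [clamp_of_mem hr, phaseRate]
      have e : (1 - u r) ^ 2 + (r * radialMean n (truncNL p) u r / κ) ^ 2 =
        (u r - 1) ^ 2 + (r * radialMean n (truncNL p) u r) ^ 2 / κ ^ 2 := by
        rw [div_pow]; ring
      rw [e, div_mul_cancel₀ _ this]
      field_simp
      ring)
    (by simp [H.init_val, hγ1]) (by simp) hr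
  refine ⟨a, ha, h1, ?_⟩
  rw [div_eq_iff hκ.ne'] at h2
  rw [h2]
  change _ = κ * (a * sin (∫ t in (0:ℝ)..r, phaseRate n p κ u (clamp t)))
  ring

lemma radialMean_zero (n : ℕ) (h u : ℝ → ℝ) : radialMean n h u 0 = h (u 0) / (n + 1) := by
  simp [radialMean]
  ring

/-- The phase angle increases strictly through every multiple of `π`. -/
lemma phaseRate_pos (H : IsRadial n p γ u) (hp : 2 ≤ p) (hγ : 0 < γ) (hγ1 : γ < 1)
    (hκ : 0 < κ) {r : ℝ} (hr : r ∈ Icc (0:ℝ) 1) (hs : sin (phase n p κ u r) = 0) :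
    0 < phaseRate n p κ u r := by
  obtain ⟨a, -, -, h2⟩ := H.phase_polar hp hγ hγ1 hκ hr
  rw [hs, mul_zero, mul_zero] at h2
  have hS := H.phase_denom_pos hp hγ hγ1 hκ hr.1
  have hl := H.lower hp hγ hγ1 hr.1
  rw [phaseRate]
  refine div_pos ?_ hS
  rw [h2] at hS ⊢
  have hne : u r ≠ 1 := by
    intro h; rw [h] at hS; norm_num at hS
  have hsign : (u r - 1) * truncNL p (u r) < 0 := by
    rcases lt_or_gt_of_ne hne with h | h
    · exact mul_neg_of_neg_of_pos (by linarith) (truncNL_pos hp (by linarith) h)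
    · exact mul_neg_of_pos_of_neg (by linarith) (truncNL_neg hp h)
  have h3 : (u r - 1) * (truncNL p (u r) - n * radialMean n (truncNL p) u r) < 0 := by
    rcases hr.1.eq_or_lt with h | h
    · rw [← h, radialMean_zero]
      rw [← h] at hsign
      have : (u 0 - 1) * (truncNL p (u 0) - n * (truncNL p (u 0) / (n + 1))) =
        ((u 0 - 1) * truncNL p (u 0)) / (n + 1) := by
        have : (n:ℝ) + 1 ≠ 0 := by positivity
        field_simp
        ring
      rw [this]
      exact div_neg_of_neg_of_pos hsign (by positivity)
    · have : radialMean n (truncNL p) u r = 0 := by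
        rcases mul_eq_zero.mp h2 with h' | h'
        · linarith
        · exact h'
      rw [this]; simpa using hsign
  have := div_neg_of_neg_of_pos h3 hκ
  norm_num
  linarith

lemma phase_zero (n : ℕ) (p κ : ℝ) (u : ℝ → ℝ) : phase n p κ u 0 = 0 := by simp [phase]

lemma phase_lt (H : IsRadial n p γ u) (hp : 2 ≤ p) (hγ : 0 < γ) (hγ1 : γ < 1)
    (hκ : 0 < κ) {y r : ℝ} (m : ℕ) (hy : 0 ≤ y) (hyr : y < r) (hr : r ≤ 1)
    (h : m * π ≤ phase n p κ u y) : m * π < phase n p κ u r :=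
  lt_of_level_le (fun _ hr => H.phase_hasDerivAt hp hγ hγ1 hκ hr)
    (fun r hr hc => H.phaseRate_pos hp hγ hγ1 hκ hr (by rw [hc]; exact sin_nat_mul_pi m))
    hy hyr hr h

/-! ### Rotation for small and for large initial values -/

/-- Starting from `1/2`, the solution stays below `1` and increases, so its phase has not
reached `π`. -/
lemma phase_half_lt (hn : 2 ≤ n) (H : IsRadial n p (1 / 2) u) (hp : 2 ≤ p) (hκ : 0 < κ) :
    phase n p κ u 1 < π := by
  have hγ : (0:ℝ) < 1 / 2 := by norm_num
  have hγ1 : (1:ℝ) / 2 < 1 := by norm_num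
  have hc := H.continuous
  have hlow : ∀ r ∈ Icc (0:ℝ) 1, 1 / 2 ≤ u r := fun r hr => H.lower hp hγ hγ1 hr.1
  obtain ⟨t, ht, htM⟩ := isCompact_Icc.exists_isMaxOn (nonempty_Icc.mpr (zero_le_one' ℝ))
    hc.continuousOn
  have hmax : ∀ r ∈ Icc (0:ℝ) 1, u r ≤ u t := fun r hr => htM hr
  have hM := hlow t ht
  have hnR : (2:ℝ) ≤ n := by exact_mod_cast hn
  have hcont : ∀ r, Continuous fun σ : ℝ => σ ^ n * truncNL p (u (r * σ)) := by
    intro r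
    have := truncNL_continuous hp
    fun_prop
  have hmean : ∀ r ∈ Icc (0:ℝ) 1, radialMean n (truncNL p) u r ≤ u t / 3 := by
    intro r hr
    have h1 : radialMean n (truncNL p) u r ≤ ∫ σ in (0:ℝ)..1, σ ^ n * u t := by
      refine intervalIntegral.integral_mono_on zero_le_one ((hcont r).intervalIntegrable _ _)
        (Continuous.intervalIntegrable (by fun_prop) _ _) fun σ hσ => ?_
      refine mul_le_mul_of_nonneg_left ?_ (pow_nonneg hσ.1 _)
      have h2 := hmax (r * σ) ⟨mul_nonneg hr.1 hσ.1, mul_le_one₀ hr.2 hσ.1 hσ.2⟩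
      exact truncNL_le.trans (max_le (by linarith) h2)
    rw [intervalIntegral.integral_mul_const, integral_pow] at h1
    refine h1.trans ?_
    norm_num
    rw [inv_mul_eq_div]
    exact div_le_div_of_nonneg_left (by linarith) (by norm_num) (by linarith)
  have hup : ∀ r ∈ Icc (0:ℝ) 1, u r ≤ 1 / 2 + u t / 6 * r ^ 2 := by
    intro r hr
    have hd : ∀ x, HasDerivAt (fun x => 1 / 2 + u t / 6 * x ^ 2) (u t / 3 * x) x := by
      intro x
      refine (((hasDerivAt_pow 2 x).const_mul (u t / 6)).const_add (1 / 2)).congr_deriv ?_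
      norm_num; ring
    refine image_le_of_deriv_right_le_deriv_boundary (f := u)
      (f' := fun x => x * radialMean n (truncNL p) u x) hc.continuousOn
      (fun x _ => (H.der x).hasDerivWithinAt) (B := fun x => 1 / 2 + u t / 6 * x ^ 2) ?_
      (fun x _ => (hd x).continuousAt.continuousWithinAt)
      (fun x _ => (hd x).hasDerivWithinAt) ?_ hr
    · simp [H.init_val]
    · intro x hx
      have := hmean x (Ico_subset_Icc_self hx)
      nlinarith [hx.1]
  have hu1 : ∀ r ∈ Icc (0:ℝ) 1, u r < 1 := by
    intro r hr
    have h1 := hup t ht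
    have h2 : t ^ 2 ≤ 1 := pow_le_one₀ ht.1 ht.2
    have h3 := hmax r hr
    nlinarith
  by_contra hge
  push Not at hge
  have hIV : π ∈ phase n p κ u '' Icc 0 1 :=
    intermediate_value_Icc zero_le_one
      (fun t ht => (H.phase_hasDerivAt hp hγ hγ1 hκ ht).continuousAt.continuousWithinAt)
      ⟨by rw [phase_zero]; exact pi_pos.le, hge⟩
  obtain ⟨r, hr, hrπ⟩ := hIV
  obtain ⟨a, -, -, h2⟩ := H.phase_polar hp hγ hγ1 hκ hr
  rw [hrπ, sin_pi, mul_zero, mul_zero] at h2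
  have hr0 : 0 < r := by
    rcases hr.1.eq_or_lt with h | h
    · rw [← h, phase_zero] at hrπ
      exact absurd hrπ pi_pos.ne
    · exact h
  have : 0 < radialMean n (truncNL p) u r := by
    refine intervalIntegral.intervalIntegral_pos_of_pos_on ((hcont r).intervalIntegrable _ _)
      (fun σ hσ => ?_) zero_lt_one
    have hm : r * σ ∈ Icc (0:ℝ) 1 := ⟨mul_nonneg hr.1 hσ.1.le, mul_le_one₀ hr.2 hσ.1.le hσ.2.le⟩
    exact mul_pos (pow_pos hσ.1 _) (truncNL_pos hp (by linarith [hlow _ hm]) (hu1 _ hm))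
  have := mul_pos hr0 this
  linarith

/-- Near `u = 1` the restoring force is at least `κ²|u - 1|` once `p` is large. -/
lemma restoring {δ : ℝ} (hδ : δ = 1 / (2 * (1 + κ ^ 2))) (hp : 2 ≤ p)
    (hp1 : κ ^ 2 + 1 ≤ p) (hp2 : (1 - δ) ^ p ≤ 1 / 2) {x : ℝ} (hx : 1 - δ ≤ x) (hx2 : x ≤ 2) :
    (x - 1) * truncNL p x ≤ -(κ ^ 2 * (x - 1) ^ 2) := by
  have hδ0 : 0 < δ := by rw [hδ]; positivity
  have hδ1 : δ ≤ 1 / 2 := by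
    rw [hδ]; exact one_div_le_one_div_of_le (by norm_num) (by nlinarith [sq_nonneg κ])
  rw [truncNL_of_mem ⟨by linarith, hx2⟩]
  rcases le_total 1 x with h | h
  · have h1 := one_add_mul_self_le_rpow_one_add (s := x - 1) (by linarith)
      (by linarith : 1 ≤ p)
    rw [add_sub_cancel] at h1
    nlinarith [mul_nonneg (sub_nonneg.mpr h) (sub_nonneg.mpr h1),
      mul_nonneg (sub_nonneg.mpr hp1) (sq_nonneg (x - 1))]
  · -- the chord of the convex function `x ^ p` over `[1 - δ, 1]`
    have hconv : ((1 - x) / δ * (1 - δ) + (1 - (1 - x) / δ) * 1) ^ p ≤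
        (1 - x) / δ * (1 - δ) ^ p + (1 - (1 - x) / δ) * 1 ^ p :=
      (convexOn_rpow (by linarith : 1 ≤ p)).2
        (mem_Ici.mpr (by linarith : (0:ℝ) ≤ 1 - δ)) (mem_Ici.mpr (zero_le_one' ℝ))
        (by apply div_nonneg <;> linarith)
        (by rw [sub_nonneg, div_le_one hδ0]; linarith) (by ring)
    simp only [mul_one, one_rpow] at hconv
    have e : (1 - x) / δ * (1 - δ) + (1 - (1 - x) / δ) = x := by field_simp; ring
    rw [e] at hconv
    have h2 : (1 - x) / δ = 2 * (1 + κ ^ 2) * (1 - x) := by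
      rw [hδ]; field_simp
    rw [h2] at hconv
    have h3 : 0 ≤ 2 * (1 + κ ^ 2) * (1 - x) := by
      apply mul_nonneg (by positivity); linarith
    have h4 : x ^ p ≤ 1 - (1 + κ ^ 2) * (1 - x) := by
      nlinarith [mul_le_mul_of_nonneg_left hp2 h3]
    nlinarith [mul_le_mul_of_nonneg_left h4 (sub_nonneg.mpr h)]

/-- Starting close to `1`, the phase rotates with speed at least `κ - n` on `[1/2, 1]`. -/
lemma le_phase_one {δ : ℝ} (hδ : δ = 1 / (2 * (1 + κ ^ 2))) (hp : 2 ≤ p)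
    (hp1 : κ ^ 2 + 1 ≤ p) (hp2 : (1 - δ) ^ p ≤ 1 / 2) (hκ : 0 < κ)
    (H : IsRadial n p (1 - δ) u) : (κ - n) / 2 ≤ phase n p κ u 1 := by
  have hδ0 : 0 < δ := by rw [hδ]; positivity
  have hδ1 : δ ≤ 1 / 2 := by
    rw [hδ]; exact one_div_le_one_div_of_le (by norm_num) (by nlinarith [sq_nonneg κ])
  have hγ : 0 < 1 - δ := by linarith
  have hγ1 : 1 - δ < 1 := by linarith
  have h0 : 0 < phase n p κ u (1 / 2) := by
    have := H.phase_lt hp hγ hγ1 hκ (y := 0) (r := 1 / 2) 0 le_rfl (by norm_num) (by norm_num)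
      (by rw [phase_zero]; simp)
    simpa using this
  have hrate : ∀ r ∈ Icc (1 / 2 : ℝ) 1, κ - n ≤ phaseRate n p κ u r := by
    intro r hr
    have hr0 : 0 ≤ r := by linarith [hr.1]
    have hS := H.phase_denom_pos hp hγ hγ1 hκ hr0
    rw [phaseRate, le_div_iff₀ hS]
    have h1 := restoring hδ hp hp1 hp2 (H.lower hp hγ hγ1 hr0) (H.upper hp hγ hγ1 hr0)
    set Φ := radialMean n (truncNL p) u r
    set φ := u r - 1
    set h := truncNL p (u r)
    have e : (r * Φ) ^ 2 / κ - φ * (h - n * Φ) / κ - (κ - n) * (φ ^ 2 + (r * Φ) ^ 2 / κ ^ 2) =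
        (-(κ ^ 2 * φ ^ 2) - φ * h) / κ + n * (φ ^ 2 + φ * (Φ / κ) + r ^ 2 * (Φ / κ) ^ 2) := by
      field_simp
      ring
    have h2 : 0 ≤ (-(κ ^ 2 * φ ^ 2) - φ * h) / κ := div_nonneg (by linarith) hκ.le
    have h3 : 0 ≤ φ ^ 2 + φ * (Φ / κ) + r ^ 2 * (Φ / κ) ^ 2 := by
      have : 1 / 4 ≤ r ^ 2 := by nlinarith [hr.1]
      nlinarith [sq_nonneg (φ + Φ / κ / 2), sq_nonneg (Φ / κ)]
    have h4 : (0:ℝ) ≤ n := Nat.cast_nonneg n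
    have := mul_nonneg h4 h3
    linarith
  have hmvt := (convex_Icc (1 / 2 : ℝ) 1).mul_sub_le_image_sub_of_le_deriv (f := phase n p κ u)
    (C := κ - n)
    (fun t ht => (H.phase_hasDerivAt hp hγ hγ1 hκ
      ⟨by linarith [ht.1], ht.2⟩).continuousAt.continuousWithinAt)
    (fun t ht => by
      rw [interior_Icc] at ht
      exact (H.phase_hasDerivAt hp hγ hγ1 hκ
        ⟨by linarith [ht.1], ht.2.le⟩).differentiableAt.differentiableWithinAt)
    (fun t ht => by
      rw [interior_Icc] at ht
      rw [(H.phase_hasDerivAt hp hγ hγ1 hκ ⟨by linarith [ht.1], ht.2.le⟩).deriv]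
      exact hrate t ⟨ht.1.le, ht.2.le⟩)
    (1 / 2) ⟨le_rfl, by norm_num⟩ 1 ⟨by norm_num, le_rfl⟩ (by norm_num)
  linarith

end IsRadial

/-! ### Solutions with `k` peaks -/

/-- `u` (with derivative `w`) is a positive radial Neumann solution on `[0, 1]` whose critical
points are `0 = z 0 < z 1 < ⋯ < z (2k) = 1`, with maxima at odd and minima at even indices.
The parameter `δ`, independent of `p`, measures how far below `1` the solution starts. -/
structure PeakSol (n k : ℕ) (δ p : ℝ) (u w : ℝ → ℝ) (z : ℕ → ℝ) : Prop where
  der : ∀ r, HasDerivAt u (w r) r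
  der2 : ∀ r ∈ Ioc (0:ℝ) 1, HasDerivAt w (u r - u r ^ p - n / r * w r) r
  smooth : ContDiff ℝ 2 u
  w_cont : Continuous w
  w_zero : w 0 = 0
  init_val : u 0 ≤ 1 - δ
  lower : ∀ r ∈ Icc (0:ℝ) 1, 1 / 2 ≤ u r
  upper : ∀ r ∈ Icc (0:ℝ) 1, u r ≤ 2
  slope : ∀ r ∈ Icc (0:ℝ) 1, |w r| ≤ 1
  energy : ∀ r ∈ Icc (0:ℝ) 1, w r ^ 2 / 2 + potential p (u r) ≤ 1 / 2
  z_zero : z 0 = 0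
  z_last : z (2 * k) = 1
  z_lt : ∀ m < 2 * k, z m < z (m + 1)
  sign : ∀ m < 2 * k, ∀ r ∈ Ioo (z m) (z (m + 1)), 0 < (-1) ^ m * w r
  w_z : ∀ m ≤ 2 * k, w (z m) = 0
  even_lt : ∀ m ≤ 2 * k, Even m → u (z m) < 1
  odd_gt : ∀ m ≤ 2 * k, Odd m → 1 < u (z m)

/-- Shooting: some initial value produces exactly `k` turns in the phase plane. -/
lemma exists_phase_eq {n k : ℕ} (hn : 2 ≤ n) (hk : 1 ≤ k) {p κ δ : ℝ}
    (hδ : δ = 1 / (2 * (1 + κ ^ 2))) (hp : 2 ≤ p)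
    (hp1 : κ ^ 2 + 1 ≤ p) (hp2 : (1 - δ) ^ p ≤ 1 / 2) (hκ : 0 < κ)
    (hκk : 2 * k * π ≤ (κ - n) / 2) :
    ∃ γ ∈ Icc (1 / 2) (1 - δ), ∃ u, IsRadial n p γ u ∧ phase n p κ u 1 = 2 * k * π := by
  have hδ0 : 0 < δ := by rw [hδ]; positivity
  have hδ1 : δ ≤ 1 / 2 := by
    rw [hδ]; exact one_div_le_one_div_of_le (by norm_num) (by nlinarith [sq_nonneg κ])
  obtain ⟨u, huc, hu0, hud⟩ := exists_ivp n (h := truncNL p)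
    (by positivity) (truncNL_lipschitz hp) (truncNL_bound hp)
  have H : ∀ γ, IsRadial n p γ (u γ) := fun γ => ⟨hud γ, hu0 γ⟩
  -- the initial value is frozen outside `[1/2, 1 - δ]`
  set c : ℝ → ℝ := fun γ => max (1 / 2) (min γ (1 - δ)) with hc
  have hcm : ∀ γ, c γ ∈ Icc (1 / 2) (1 - δ) := fun γ =>
    ⟨le_max_left _ _, max_le (by linarith) (min_le_right _ _)⟩
  have hcc : Continuous c := by fun_prop
  have hce : ∀ γ ∈ Icc (1 / 2) (1 - δ), c γ = γ := fun γ hγ => by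
    simp only [hc]; rw [min_eq_left hγ.2, max_eq_right hγ.1]
  have hh := truncNL_continuous hp
  have hucc : Continuous fun x : ℝ × ℝ => u (c x.1) (clamp x.2) :=
    huc.comp ((hcc.comp continuous_fst).prodMk (clamp_continuous.comp continuous_snd))
  have hΦ : Continuous fun x : ℝ × ℝ => radialMean n (truncNL p) (u (c x.1)) (clamp x.2) := by
    unfold radialMean
    apply intervalIntegral.continuous_parametric_intervalIntegral_of_continuous'
    have h1 : Continuous fun y : (ℝ × ℝ) × ℝ => u (c y.1.1) (clamp y.1.2 * y.2) := by
      have h2 := clamp_continuous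
      exact huc.comp ((hcc.comp (continuous_fst.comp continuous_fst)).prodMk (by fun_prop))
    exact (continuous_snd.pow n).mul (hh.comp h1)
  have hrate : Continuous fun x : ℝ × ℝ => phaseRate n p κ (u (c x.1)) (clamp x.2) := by
    unfold phaseRate
    have h2 := clamp_continuous
    refine Continuous.div (by fun_prop) (by fun_prop) fun x => ?_
    exact ((H _).phase_denom_pos hp (by linarith [(hcm x.1).1]) (by linarith [(hcm x.1).2])
      hκ (clamp_mem x.2).1).ne'
  have hphase : Continuous fun γ => phase n p κ (u (c γ)) 1 := by
    unfold phase
    exact intervalIntegral.continuous_parametric_intervalIntegral_of_continuous' hrate 0 1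
  have hk1 : (1:ℝ) ≤ k := by exact_mod_cast hk
  have hIV : 2 * k * π ∈ (fun γ => phase n p κ (u (c γ)) 1) '' Icc (1 / 2) (1 - δ) := by
    refine intermediate_value_Icc (by linarith) hphase.continuousOn ⟨?_, ?_⟩
    · rw [hce _ ⟨le_rfl, by linarith⟩]
      have := IsRadial.phase_half_lt hn (H _) hp hκ
      nlinarith [pi_pos]
    · rw [hce _ ⟨by linarith, le_rfl⟩]
      exact hκk.trans (IsRadial.le_phase_one hδ hp hp1 hp2 hκ (H _))
  obtain ⟨γ, hγ, he⟩ := hIV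
  simp only at he
  rw [hce _ hγ] at he
  exact ⟨γ, hγ, u γ, H γ, he⟩

/-- A solution whose phase at `1` is `2kπ` has `k` peaks. -/
lemma IsRadial.peakSol {n k : ℕ} {p κ δ γ : ℝ} {u : ℝ → ℝ} (H : IsRadial n p γ u) (hp : 2 ≤ p)
    (hδ0 : 0 < δ) (hκ : 0 < κ) (hγm : γ ∈ Icc (1 / 2) (1 - δ))
    (hph : phase n p κ u 1 = 2 * k * π) :
    ∃ w z, PeakSol n k δ p u w z := by
  have hγ : 0 < γ := by linarith [hγm.1]
  have hγ1 : γ < 1 := by linarith [hγm.2]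
  set θ := phase n p κ u with hθ
  have hθ0 : θ 0 = 0 := IsRadial.phase_zero n p κ u
  have hθc : ContinuousOn θ (Icc 0 1) := fun t ht =>
    (H.phase_hasDerivAt hp hγ hγ1 hκ ht).continuousAt.continuousWithinAt
  have hex : ∀ m : ℕ, ∃ r ∈ Icc (0:ℝ) 1, m ≤ 2 * k → θ r = m * π := by
    intro m
    by_cases hm : m ≤ 2 * k
    · have hm' : (m:ℝ) ≤ 2 * k := by exact_mod_cast hm
      have : (m * π : ℝ) ∈ θ '' Icc 0 1 :=
        intermediate_value_Icc zero_le_one hθc ⟨by rw [hθ0]; positivity, by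
          rw [hph]; exact mul_le_mul_of_nonneg_right hm' pi_pos.le⟩
      obtain ⟨r, hr, h⟩ := this
      exact ⟨r, hr, fun _ => h⟩
    · exact ⟨0, ⟨le_rfl, zero_le_one⟩, fun h => absurd h hm⟩
  choose z hz hzθ using hex
  have hlt : ∀ m : ℕ, ∀ y r, 0 ≤ y → y < r → r ≤ 1 → m * π ≤ θ y → m * π < θ r :=
    fun m y r h1 h2 h3 h4 => H.phase_lt hp hγ hγ1 hκ m h1 h2 h3 h4
  have hz0 : z 0 = 0 := by
    rcases (hz 0).1.eq_or_lt with h | h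
    · exact h.symm
    · have h1 := hlt 0 0 (z 0) le_rfl h (hz 0).2 (by simp [hθ0])
      rw [hzθ 0 (by omega)] at h1
      exact absurd h1 (lt_irrefl _)
  have hz1 : z (2 * k) = 1 := by
    rcases (hz (2 * k)).2.eq_or_lt with h | h
    · exact h
    · have h1 := hlt (2 * k) (z (2 * k)) 1 (hz _).1 h le_rfl (hzθ _ le_rfl).ge
      rw [hph] at h1
      push_cast at h1
      exact absurd h1 (lt_irrefl _)
  have hzlt : ∀ m < 2 * k, z m < z (m + 1) := by
    intro m hm
    by_contra hcon
    push Not at hcon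
    have h0 := hzθ m hm.le
    have h1 := hzθ (m + 1) hm
    push_cast at h1
    rcases hcon.eq_or_lt with h | h
    · rw [h, h0] at h1
      nlinarith [pi_pos]
    · have h2 := hlt (m + 1) _ _ (hz _).1 h (hz _).2 (hzθ (m + 1) hm).ge
      rw [h0] at h2
      push_cast at h2
      nlinarith [pi_pos]
  have hh := truncNL_continuous hp
  have hw := hasDerivAt_mul_radialMean (n := n) hh H.continuous
  have hΦc := radialMean_continuous (n := n) hh H.continuous
  have hd : deriv u = fun r => r * radialMean n (truncNL p) u r := funext fun r => (H.der r).deriv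
  have hlow : ∀ r ∈ Icc (0:ℝ) 1, 1 / 2 ≤ u r := fun r hr =>
    hγm.1.trans (H.lower hp hγ hγ1 hr.1)
  have hupp : ∀ r ∈ Icc (0:ℝ) 1, u r ≤ 2 := fun r hr => H.upper hp hγ hγ1 hr.1
  refine ⟨fun r => r * radialMean n (truncNL p) u r, z,
    { der := H.der
      der2 := ?_
      smooth := ?_
      w_cont := by fun_prop
      w_zero := by simp
      init_val := by rw [H.init_val]; exact hγm.2
      lower := hlow
      upper := hupp
      slope := fun r hr => H.slope_le hp hγ hγ1 hr.1
      energy := ?_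
      z_zero := hz0
      z_last := hz1
      z_lt := hzlt
      sign := ?_
      w_z := ?_
      even_lt := ?_
      odd_gt := ?_ }⟩
  · intro r hr
    have hr' := Ioc_subset_Icc_self hr
    refine (hw r).congr_deriv ?_
    rw [truncNL_of_mem ⟨by linarith [hlow r hr'], hupp r hr'⟩]
    have := hr.1.ne'
    field_simp
  · have e2 : (2 : WithTop ℕ∞) = 1 + 1 := by norm_num
    rw [e2, contDiff_succ_iff_deriv]
    refine ⟨fun r => (H.der r).differentiableAt, by simp, ?_⟩
    rw [hd, contDiff_one_iff_deriv]
    refine ⟨fun r => (hw r).differentiableAt, ?_⟩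
    have e3 : deriv (fun r => r * radialMean n (truncNL p) u r) =
      fun r => truncNL p (u r) - n * radialMean n (truncNL p) u r :=
      funext fun r => (hw r).deriv
    rw [e3]
    have := H.continuous
    fun_prop
  · intro r hr
    have h1 := H.energy_le_initial hp hr.1
    have h2 := truncPot_le_half hp hγ.le hγ1.le
    rw [← truncPot_eq hp ⟨by linarith [hlow r hr], hupp r hr⟩]
    exact h1.trans h2
  · intro m hm r hr
    have hr1 : r ≤ 1 := hr.2.le.trans (hz _).2
    have hr0 : 0 ≤ r := (hz m).1.trans hr.1.le
    obtain ⟨a, ha, -, h2⟩ := H.phase_polar hp hγ hγ1 hκ ⟨hr0, hr1⟩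
    have h3 := hlt m _ _ (hz m).1 hr.1 hr1 (hzθ m hm.le).ge
    have h4 : θ r < (m + 1 : ℕ) * π := by
      by_contra hcon
      push Not at hcon
      have := hlt (m + 1) _ _ hr0 hr.2 (hz _).2 hcon
      rw [hzθ (m + 1) hm] at this
      exact absurd this (lt_irrefl _)
    push_cast at h4
    have h5 : 0 < sin (θ r - m * π) := sin_pos_of_pos_of_lt_pi (by linarith) (by linarith)
    rw [Real.sin_sub_nat_mul_pi] at h5
    rw [h2]
    have := mul_pos (mul_pos hκ ha) h5
    linarith
  · intro m hm
    obtain ⟨a, ha, -, h2⟩ := H.phase_polar hp hγ hγ1 hκ (hz m)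
    have h3 := hzθ m hm
    rw [hθ] at h3
    rw [h3, sin_nat_mul_pi] at h2
    simpa using h2
  · intro m hm he
    obtain ⟨a, ha, h2, -⟩ := H.phase_polar hp hγ hγ1 hκ (hz m)
    have h3 := hzθ m hm
    rw [hθ] at h3
    rw [h3, cos_nat_mul_pi, he.neg_one_pow] at h2
    linarith
  · intro m hm he
    obtain ⟨a, ha, h2, -⟩ := H.phase_polar hp hγ hγ1 hκ (hz m)
    have h3 := hzθ m hm
    rw [hθ] at h3
    rw [h3, cos_nat_mul_pi, he.neg_one_pow] at h2
    linarith

/-- The choice of `κ` only depends on `n` and `k`, hence so does `δ`. -/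
lemma exists_peakSol {n k : ℕ} (hn : 2 ≤ n) (hk : 1 ≤ k) :
    ∃ δ > 0, δ ≤ 1 / 2 ∧ ∃ P : ℝ, 2 ≤ P ∧ ∀ p ≥ P, ∃ u w z, PeakSol n k δ p u w z := by
  set κ : ℝ := n + 4 * k * π with hκ
  have hκ0 : 0 < κ := by
    have : (2:ℝ) ≤ n := by exact_mod_cast hn
    positivity
  set δ : ℝ := 1 / (2 * (1 + κ ^ 2)) with hδ
  have hδ0 : 0 < δ := by rw [hδ]; positivity
  have hδ1 : δ ≤ 1 / 2 := by
    rw [hδ]; exact one_div_le_one_div_of_le (by norm_num) (by nlinarith [sq_nonneg κ])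
  have hev : ∀ᶠ p : ℝ in atTop, (1 - δ) ^ p ≤ 1 / 2 :=
    (tendsto_rpow_atTop_of_base_lt_one (1 - δ) (by linarith) (by linarith)).eventually
      (ge_mem_nhds (by norm_num))
  obtain ⟨P, hP⟩ := eventually_atTop.mp hev
  refine ⟨δ, hδ0, hδ1, max (max 2 (κ ^ 2 + 1)) P, le_max_of_le_left (le_max_left _ _), ?_⟩
  intro p hp
  have hp2 : 2 ≤ p := (le_max_left _ _).trans ((le_max_left _ _).trans hp)
  have hp1 : κ ^ 2 + 1 ≤ p := (le_max_right _ _).trans ((le_max_left _ _).trans hp)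
  obtain ⟨γ, hγ, u, H, hph⟩ := exists_phase_eq hn hk hδ hp2 hp1
    (hP p ((le_max_right _ _).trans hp)) hκ0 (by rw [hκ]; ring_nf; rfl)
  obtain ⟨w, z, h⟩ := H.peakSol hp2 hδ0 hκ0 hγ hph
  exact ⟨u, w, z, h⟩

/-! ### Estimates uniform in `p` -/

lemma potential_nonneg {p x : ℝ} (hp : 2 ≤ p) (h0 : 0 ≤ x) (h2 : x ≤ 2) :
    0 ≤ potential p x := by
  rw [← truncPot_eq hp ⟨h0, h2⟩]; exact truncPot_nonneg hp x

/-- Lower bound for the energy away from the origin. -/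
noncomputable def energyFloor (n : ℕ) (δ : ℝ) : ℝ := (δ / 2) ^ (2 * n) * (δ / 8)

lemma energyFloor_pos {n : ℕ} {δ : ℝ} (hδ : 0 < δ) : 0 < energyFloor n δ := by
  unfold energyFloor; positivity

lemma energyFloor_le {n : ℕ} {δ : ℝ} (hδ : 0 < δ) (hδ1 : δ ≤ 1 / 2) :
    energyFloor n δ ≤ δ / 8 := by
  unfold energyFloor
  have : (δ / 2) ^ (2 * n) ≤ 1 := pow_le_one₀ (by positivity) (by linarith)
  nlinarith

namespace PeakSol

variable {n k : ℕ} {δ p : ℝ} {u w : ℝ → ℝ} {z : ℕ → ℝ}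

lemma lipschitz (S : PeakSol n k δ p u w z) {x y : ℝ} (hx : x ∈ Icc (0:ℝ) 1)
    (hy : y ∈ Icc (0:ℝ) 1) : |u y - u x| ≤ |y - x| := by
  have := Convex.norm_image_sub_le_of_norm_hasDerivWithin_le (C := 1)
    (fun t _ => (S.der t).hasDerivWithinAt) (fun t ht => S.slope t ht) (convex_Icc 0 1) hx hy
  simpa using this

lemma z_mono (S : PeakSol n k δ p u w z) {i j : ℕ} (hij : i ≤ j) (hj : j ≤ 2 * k) :
    z i ≤ z j := by
  induction j, hij using Nat.le_induction with
  | base => exact le_rfl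
  | succ j hij ih => exact (ih (by omega)).trans (S.z_lt j (by omega)).le

lemma z_mem (S : PeakSol n k δ p u w z) {m : ℕ} (hm : m ≤ 2 * k) : z m ∈ Icc (0:ℝ) 1 := by
  constructor
  · rw [← S.z_zero]; exact S.z_mono (Nat.zero_le m) hm
  · rw [← S.z_last]; exact S.z_mono hm le_rfl

lemma near_zero (S : PeakSol n k δ p u w z) (hδ1 : δ ≤ 1 / 2) {r : ℝ} (h0 : 0 ≤ r)
    (hr : r ≤ δ / 2) : u r ≤ 1 - δ / 2 := by
  have h1 := S.lipschitz (x := 0) (y := r) ⟨le_rfl, zero_le_one⟩ ⟨h0, by linarith⟩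
  rw [sub_zero, abs_of_nonneg h0] at h1
  linarith [le_abs_self (u r - u 0), S.init_val]

lemma energy_hasDerivAt (S : PeakSol n k δ p u w z) (hp : 2 ≤ p) {r : ℝ}
    (hr : r ∈ Ioc (0:ℝ) 1) :
    HasDerivAt (fun r => w r ^ 2 / 2 + potential p (u r)) (-(n / r * w r ^ 2)) r := by
  have h2 := (((S.der2 r hr).pow 2).div_const 2).add
    ((potential_hasDerivAt (x := u r) hp).comp r (S.der r))
  refine h2.congr_deriv ?_
  norm_num
  ring

/-- `r ^ (2n)` times the energy is nondecreasing, so the energy stays bounded below. -/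
lemma energyFloor_le_energy (S : PeakSol n k δ p u w z) (hδ : 0 < δ) (hδ1 : δ ≤ 1 / 2)
    (hp : 2 ≤ p) (hpδ : 8 / δ ≤ p) {r : ℝ} (hr0 : δ / 2 ≤ r) (hr1 : r ≤ 1) :
    energyFloor n δ ≤ w r ^ 2 / 2 + potential p (u r) := by
  set e : ℝ → ℝ := fun r => w r ^ 2 / 2 + potential p (u r) with he
  have hsub : ∀ x ∈ Icc (δ / 2) 1, x ∈ Ioc (0:ℝ) 1 := fun x hx => ⟨by linarith [hx.1], hx.2⟩
  have hd : ∀ x ∈ Icc (δ / 2) 1, HasDerivAt (fun x => x ^ (2 * n) * e x)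
      ((2 * n : ℕ) * x ^ (2 * n - 1) * e x + x ^ (2 * n) * (-(n / x * w x ^ 2))) x :=
    fun x hx => (hasDerivAt_pow (2 * n) x).mul (S.energy_hasDerivAt hp (hsub x hx))
  have hmono : MonotoneOn (fun x => x ^ (2 * n) * e x) (Icc (δ / 2) 1) := by
    refine monotoneOn_of_deriv_nonneg (convex_Icc _ _)
      (fun x hx => (hd x hx).continuousAt.continuousWithinAt)
      (fun x hx => (hd x (interior_subset hx)).differentiableAt.differentiableWithinAt) ?_
    intro x hx
    have hx := interior_subset hx
    have hx0 : 0 < x := (hsub x hx).1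
    rw [(hd x hx).deriv]
    have hx' := Ioc_subset_Icc_self (hsub x hx)
    have h5 := potential_nonneg hp (by linarith [S.lower x hx']) (S.upper x hx')
    rcases n with _ | m
    · simp
    · have h6 : 2 * (m + 1) - 1 = 2 * m + 1 := by omega
      rw [h6]
      have : ((2 * (m + 1) : ℕ) : ℝ) * x ^ (2 * m + 1) * e x + x ^ (2 * (m + 1)) *
          (-(((m + 1 : ℕ) : ℝ) / x * w x ^ 2)) =
          ((2 * (m + 1) : ℕ) : ℝ) * x ^ (2 * m + 1) * potential p (u x) := by
        simp only [he]; push_cast; field_simp; ring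
      rw [this]
      positivity
  have h1 := hmono ⟨le_rfl, by linarith⟩ ⟨hr0, hr1⟩ hr0
  have hm : δ / 2 ∈ Icc (0:ℝ) 1 := ⟨by linarith, by linarith⟩
  have hx1 := S.near_zero hδ1 hm.1 le_rfl
  have hx0 := S.lower _ hm
  have h2 : δ / 8 ≤ e (δ / 2) := by
    have h3 : 0 ≤ u (δ / 2) ^ (p + 1) := rpow_nonneg (by linarith) _
    have h4 : 1 / (p + 1) ≤ δ / 8 := by
      rw [div_le_iff₀ hδ] at hpδ
      rw [div_le_iff₀ (by linarith)]
      nlinarith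
    have h5 : -(1 / (p + 1)) ≤ (u (δ / 2) ^ (p + 1) - 1) / (p + 1) := by
      rw [← neg_div]
      exact div_le_div_of_nonneg_right (by linarith) (by linarith)
    have h6 := sq_nonneg (w (δ / 2))
    simp only [he, potential]
    nlinarith
  have h3 : e r ≥ 0 := by
    have hr' : r ∈ Icc (0:ℝ) 1 := ⟨by linarith, hr1⟩
    have := potential_nonneg hp (by linarith [S.lower r hr']) (S.upper r hr')
    have h6 := sq_nonneg (w r)
    simp only [he]; linarith
  have h4 : r ^ (2 * n) ≤ 1 := pow_le_one₀ (by linarith) hr1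
  have h5 : (δ / 2) ^ (2 * n) * (δ / 8) ≤ (δ / 2) ^ (2 * n) * e (δ / 2) :=
    mul_le_mul_of_nonneg_left h2 (by positivity)
  change (δ / 2) ^ (2 * n) * (δ / 8) ≤ e r
  simp only at h1
  nlinarith

/-- At a critical point the energy is all potential, which is small near height `1`. -/
lemma even_le (S : PeakSol n k δ p u w z) (hδ : 0 < δ) (hδ1 : δ ≤ 1 / 2)
    (hp : 2 ≤ p) (hpδ : 8 / δ ≤ p) {m : ℕ} (hm : m ≤ 2 * k) (he : Even m) :
    u (z m) ≤ 1 - energyFloor n δ := by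
  have hz := S.z_mem hm
  rcases le_total (z m) (δ / 2) with h | h
  · have := S.near_zero hδ1 hz.1 h
    linarith [energyFloor_le (n := n) hδ hδ1]
  · have h1 := S.energyFloor_le_energy hδ hδ1 hp hpδ h hz.2
    have h2 := S.even_lt m hm he
    have h3 := S.lower _ hz
    rw [S.w_z m hm, potential] at h1
    have h4 : u (z m) ^ (p + 1) ≤ 1 := rpow_le_one (by linarith) h2.le (by linarith)
    have h5 : (u (z m) ^ (p + 1) - 1) / (p + 1) ≤ 0 :=
      div_nonpos_of_nonpos_of_nonneg (by linarith) (by linarith)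
    nlinarith

/-- Slopes are at most `1`, while consecutive critical values differ by a fixed amount. -/
lemma gap (S : PeakSol n k δ p u w z) (hδ : 0 < δ) (hδ1 : δ ≤ 1 / 2)
    (hp : 2 ≤ p) (hpδ : 8 / δ ≤ p) {m : ℕ} (hm : m < 2 * k) :
    energyFloor n δ ≤ z (m + 1) - z m := by
  have h1 := S.lipschitz (S.z_mem hm.le) (S.z_mem (Nat.succ_le_of_lt hm))
  rw [abs_of_pos (sub_pos.mpr (S.z_lt m hm))] at h1
  rcases Nat.even_or_odd m with h | h
  · have h2 := S.even_le hδ hδ1 hp hpδ hm.le h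
    have h3 := S.odd_gt (m + 1) hm h.add_one
    linarith [le_abs_self (u (z (m + 1)) - u (z m))]
  · have h2 := S.even_le hδ hδ1 hp hpδ hm h.add_one
    have h3 := S.odd_gt m hm.le h
    linarith [neg_abs_le (u (z (m + 1)) - u (z m))]

lemma half_lt_odd (S : PeakSol n k δ p u w z) (hδ : 0 < δ) (hδ1 : δ ≤ 1 / 2) {m : ℕ}
    (hm : m ≤ 2 * k) (ho : Odd m) : δ / 2 < z m := by
  by_contra h
  push Not at h
  linarith [S.near_zero hδ1 (S.z_mem hm).1 h, S.odd_gt m hm ho]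

lemma rpow_le (S : PeakSol n k δ p u w z) (hp : 2 ≤ p) {r : ℝ} (hr : r ∈ Icc (0:ℝ) 1) :
    u r ^ (p + 1) ≤ 2 * p + 3 := by
  have h1 := S.energy r hr
  have h2 := S.upper r hr
  have h3 := S.lower r hr
  have h4 := sq_nonneg (w r)
  rw [potential] at h1
  have h5 : (u r ^ (p + 1) - 1) / (p + 1) ≤ 2 := by nlinarith
  rw [div_le_iff₀ (by linarith)] at h5
  linarith

end PeakSol

/-- `u ^ (p + 1)` grows at most linearly in `p`, so the excess of `u` over `1` vanishes as `p → ∞`. -/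
lemma exists_forall_le_one_add {ε : ℝ} (hε : 0 < ε) :
    ∃ P : ℝ, 2 ≤ P ∧ ∀ p ≥ P, ∀ {n k : ℕ} {δ : ℝ} {u w : ℝ → ℝ} {z : ℕ → ℝ},
      PeakSol n k δ p u w z → ∀ r ∈ Icc (0:ℝ) 1, u r ≤ 1 + ε := by
  -- `(1 + ε) ^ (p + 1) ≥ ((p + 1) ε / 2) ^ 2` outgrows `2 p + 3`
  refine ⟨max 2 (16 / ε ^ 2), le_max_left _ _, fun p hp n k δ u w z S r hr => ?_⟩
  have hp2 : 2 ≤ p := (le_max_left _ _).trans hp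
  have hpε : 16 / ε ^ 2 ≤ p := (le_max_right _ _).trans hp
  by_contra hcon
  push Not at hcon
  have h1 := S.rpow_le hp2 hr
  have h2 : (1 + ε) ^ (p + 1) ≤ u r ^ (p + 1) :=
    rpow_le_rpow (by linarith) hcon.le (by linarith)
  have h3 := one_add_mul_self_le_rpow_one_add (s := ε) (by linarith)
    (by linarith : 1 ≤ (p + 1) / 2)
  have h4 : (1 + ε) ^ (p + 1) = ((1 + ε) ^ ((p + 1) / 2)) ^ 2 := by
    rw [← rpow_natCast, ← rpow_mul (by linarith)]
    congr 1
    push_cast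
    ring
  have h5 : (1 + (p + 1) / 2 * ε) ^ 2 ≤ (1 + ε) ^ (p + 1) := by
    rw [h4]
    exact pow_le_pow_left₀ (by positivity) h3 2
  rw [div_le_iff₀ (by positivity)] at hpε
  nlinarith [mul_pos hε hε, mul_pos (by linarith : 0 < p) hε]

set_option maxHeartbeats 400000 in
/-- A plateau of height `≥ 1 - η` forces `u ^ p` to be of order `p` somewhere on it, and then the
equation bends `u` too strongly wherever `u` is larger still. -/
lemma exists_no_plateau {n : ℕ} {δ : ℝ} (hδ : 0 < δ) (hδ1 : δ ≤ 1 / 2) {ℓ : ℝ} (hℓ : 0 < ℓ) :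
    ∃ η > 0, ∃ P : ℝ, 2 ≤ P ∧ 8 / δ ≤ P ∧ ∀ p ≥ P, ∀ {k : ℕ} {u w : ℝ → ℝ} {z : ℕ → ℝ},
      PeakSol n k δ p u w z → ∀ a b a' b', δ / 2 ≤ a → a + ℓ ≤ b → b ≤ 1 →
        δ / 2 ≤ a' → a' + ℓ ≤ b' → b' ≤ 1 → (∀ t ∈ Icc a b, 1 - η < u t) →
        (∀ t ∈ Icc a b, ∀ s ∈ Icc a' b', u t ≤ u s) → False := by
  set c := energyFloor n δ with hc
  have hc0 : 0 < c := energyFloor_pos hδ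
  have hc1 : c ≤ 1 / 16 := (energyFloor_le hδ hδ1).trans (by linarith)
  set η := min (c / 4) (ℓ * c / 4) with hη
  have hη0 : 0 < η := lt_min (by positivity) (by positivity)
  have hη1 : η ≤ c / 4 := min_le_left _ _
  have hη2 : η ≤ ℓ * c / 4 := min_le_right _ _
  have haux : ∀ X : ℝ, X = 4 / c * X * (c / 4) := fun X => by field_simp
  obtain ⟨P, hP2, hP⟩ := exists_forall_le_one_add hη0
  set Q := (4 / c) * (2 + n / (δ / 2) + 3 / ℓ) with hQ
  refine ⟨η, hη0, max (max P (8 / δ)) Q, hP2.trans ((le_max_left _ _).trans (le_max_left _ _)),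
    (le_max_right _ _).trans (le_max_left _ _), ?_⟩
  intro p hp k u w z S a b a' b' ha hab hb ha' hab' hb' hlow hcmp
  have hpP : P ≤ p := (le_max_left _ _).trans ((le_max_left _ _).trans hp)
  have hp2 : 2 ≤ p := hP2.trans hpP
  have hpδ : 8 / δ ≤ p := (le_max_right _ _).trans ((le_max_left _ _).trans hp)
  have hpQ : Q ≤ p := (le_max_right _ _).trans hp
  have hmem : ∀ t ∈ Icc a b, t ∈ Icc (0:ℝ) 1 := fun t ht => ⟨by linarith [ht.1], by linarith [ht.2]⟩
  have hmem' : ∀ t ∈ Icc a' b', t ∈ Icc (0:ℝ) 1 :=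
    fun t ht => ⟨by linarith [ht.1], by linarith [ht.2]⟩
  have hup := hP p hpP S
  obtain ⟨t, ht, hwt⟩ := exists_hasDerivAt_eq_slope u w (by linarith : a < b)
    (fun x _ => (S.der x).continuousAt.continuousWithinAt) (fun x _ => S.der x)
  have ht' := Ioo_subset_Icc_self ht
  have hwt2 : w t ^ 2 ≤ c / 2 := by
    have h1 := hup a (hmem a ⟨le_rfl, by linarith⟩)
    have h2 := hup b (hmem b ⟨by linarith, le_rfl⟩)
    have h3 := hlow a ⟨le_rfl, by linarith⟩
    have h4 := hlow b ⟨by linarith, le_rfl⟩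
    have h5 : |w t| ≤ c / 2 := by
      rw [hwt, abs_div, abs_of_pos (by linarith : 0 < b - a), div_le_iff₀ (by linarith)]
      rw [abs_le]
      constructor <;> nlinarith
    rw [← sq_abs]
    nlinarith [abs_nonneg (w t)]
  have h1 := S.energyFloor_le_energy hδ hδ1 hp2 hpδ (by linarith [ht.1] : δ / 2 ≤ t)
    (by linarith [ht.2])
  rw [potential, ← hc] at h1
  have h2 := hlow t ht'
  have h3 : (p + 1) * (c / 2) ≤ u t ^ (p + 1) := by
    have h4 : c / 2 ≤ (u t ^ (p + 1) - 1) / (p + 1) := by nlinarith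
    rw [le_div_iff₀ (by linarith)] at h4
    linarith
  have hw' : ∀ s ∈ Icc a' b', u s - u s ^ p - n / s * w s ≤ -(3 / ℓ) := by
    intro s hs
    have hs0 : 0 < s := by linarith [hs.1]
    have h4 := hcmp t ht' s hs
    have h5 := S.upper s (hmem' s hs)
    have h6 : u t ^ (p + 1) ≤ u s ^ (p + 1) := rpow_le_rpow (by linarith) h4 (by linarith)
    have h7 : u s ^ (p + 1) = u s ^ p * u s := rpow_add_one (by linarith) p
    have h8 : 0 ≤ u s ^ p := rpow_nonneg (by linarith) _
    have h9 : (p + 1) * (c / 4) ≤ u s ^ p := by nlinarith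
    have h10 : -(n / s * w s) ≤ n / (δ / 2) := by
      have h11 := (abs_le.mp (S.slope s (hmem' s hs))).1
      have h12 : (n:ℝ) / s ≤ n / (δ / 2) :=
        div_le_div_of_nonneg_left (Nat.cast_nonneg n) (by linarith) (by linarith [hs.1])
      have h13 : (0:ℝ) ≤ n / s := by positivity
      nlinarith
    have h14 : 2 + n / (δ / 2) + 3 / ℓ ≤ p * (c / 4) := by
      have : Q * (c / 4) ≤ p * (c / 4) := mul_le_mul_of_nonneg_right hpQ (by positivity)
      exact le_trans (le_of_eq (haux _)) this
    nlinarith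
  have hmvt := (convex_Icc a' b').image_sub_le_mul_sub_of_deriv_le (f := w) (C := -(3 / ℓ))
    S.w_cont.continuousOn
    (fun x hx => by
      have hx := interior_subset hx
      exact (S.der2 x ⟨by linarith [hx.1], by linarith [hx.2]⟩).differentiableAt.differentiableWithinAt)
    (fun x hx => by
      have hx := interior_subset hx
      rw [(S.der2 x ⟨by linarith [hx.1], by linarith [hx.2]⟩).deriv]
      exact hw' x hx)
    a' ⟨le_rfl, by linarith⟩ b' ⟨by linarith, le_rfl⟩ (by linarith)
  have h5 := (abs_le.mp (S.slope a' (hmem' a' ⟨le_rfl, by linarith⟩))).2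
  have h6 := (abs_le.mp (S.slope b' (hmem' b' ⟨by linarith, le_rfl⟩))).1
  have h7 : 3 ≤ 3 / ℓ * (b' - a') := by
    rw [div_mul_eq_mul_div, le_div_iff₀ hℓ]; linarith
  linarith

/-- Away from the maximum points, `u` stays below `1` uniformly in `p`. -/
lemma exists_le_away {n : ℕ} {δ : ℝ} (hδ : 0 < δ) (hδ1 : δ ≤ 1 / 2) {ℓ : ℝ} (hℓ : 0 < ℓ) :
    ∃ η > 0, η ≤ 1 / 4 ∧ ∃ P : ℝ, 2 ≤ P ∧ ∀ p ≥ P, ∀ {k : ℕ} {u w : ℝ → ℝ} {z : ℕ → ℝ},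
      PeakSol n k δ p u w z → ∀ r ∈ Icc (0:ℝ) 1,
        (∀ m ≤ 2 * k, Odd m → ℓ ≤ |r - z m|) → u r ≤ 1 - η := by
  obtain ⟨η, hη, P, hP2, hPδ, hP⟩ := exists_no_plateau (n := n) hδ hδ1 (half_pos hℓ)
  refine ⟨min η (δ / 2), lt_min hη (by linarith), (min_le_right _ _).trans (by linarith), P, hP2, ?_⟩
  intro p hp k u w z S r hr haway
  by_contra hcon
  push Not at hcon
  have hr0 : δ / 2 ≤ r := by
    by_contra h
    push Not at h
    linarith [S.near_zero hδ1 hr.1 h.le, min_le_right η (δ / 2)]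
  have hη' : 1 - η < u r := by linarith [min_le_left η (δ / 2)]
  -- locate `r` between two consecutive critical points
  obtain ⟨m, hm, hmr⟩ : ∃ m < 2 * k, r ∈ Icc (z m) (z (m + 1)) := by
    have hex : ∃ j, r ≤ z j ∧ j ≤ 2 * k := ⟨2 * k, by rw [S.z_last]; exact hr.2, le_rfl⟩
    classical
    obtain ⟨h1, h2⟩ := Nat.find_spec hex
    rcases Nat.eq_zero_or_pos (Nat.find hex) with h | h
    · rw [h, S.z_zero] at h1; linarith
    · refine ⟨Nat.find hex - 1, by omega, ?_, ?_⟩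
      · by_contra hlt
        push Not at hlt
        exact Nat.find_min hex (m := Nat.find hex - 1) (by omega) ⟨hlt.le, by omega⟩
      · rw [Nat.sub_add_cancel h]; exact h1
  have hzm := S.z_mem hm.le
  have hzm1 := S.z_mem (Nat.succ_le_of_lt hm)
  have hcont : Continuous u := continuous_iff_continuousAt.mpr fun x => (S.der x).continuousAt
  rcases Nat.even_or_odd m with he | ho
  · have hd := haway (m + 1) hm he.add_one
    rw [abs_sub_comm, abs_of_nonneg (by linarith [hmr.2])] at hd
    have hmono : MonotoneOn u (Icc (z m) (z (m + 1))) := by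
      refine monotoneOn_of_deriv_nonneg (convex_Icc _ _) hcont.continuousOn
        (fun x _ => (S.der x).differentiableAt.differentiableWithinAt) fun x hx => ?_
      rw [interior_Icc] at hx
      rw [(S.der x).deriv]
      have := S.sign m hm x hx
      rw [he.neg_one_pow, one_mul] at this
      exact this.le
    refine hP p hp S r (r + ℓ / 2) (r + ℓ / 2) (z (m + 1)) hr0 le_rfl (by linarith [hzm1.2])
      (by linarith) (by linarith) hzm1.2 ?_ ?_
    · intro t ht
      exact hη'.trans_le (hmono hmr ⟨by linarith [ht.1, hmr.1], by linarith [ht.2]⟩ ht.1)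
    · intro t ht s hs
      exact hmono ⟨by linarith [ht.1, hmr.1], by linarith [ht.2]⟩
        ⟨by linarith [hs.1, hmr.1], hs.2⟩ (ht.2.trans hs.1)
  · have hd := haway m hm.le ho
    rw [abs_of_nonneg (by linarith [hmr.1])] at hd
    have hanti : AntitoneOn u (Icc (z m) (z (m + 1))) := by
      refine antitoneOn_of_deriv_nonpos (convex_Icc _ _) hcont.continuousOn
        (fun x _ => (S.der x).differentiableAt.differentiableWithinAt) fun x hx => ?_
      rw [interior_Icc] at hx
      rw [(S.der x).deriv]
      have := S.sign m hm x hx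
      rw [ho.neg_one_pow] at this
      linarith
    have hzδ := S.half_lt_odd hδ hδ1 hm.le ho
    refine hP p hp S (r - ℓ / 2) r (z m) (r - ℓ / 2) (by linarith) (by linarith) hr.2
      hzδ.le (by linarith) (by linarith [hr.2]) ?_ ?_
    · intro t ht
      exact hη'.trans_le (hanti ⟨by linarith [ht.1], by linarith [ht.2, hmr.2]⟩ hmr ht.2)
    · intro t ht s hs
      exact hanti ⟨hs.1, by linarith [hs.2, hmr.2]⟩
        ⟨by linarith [ht.1], by linarith [ht.2, hmr.2]⟩ (hs.2.trans ht.1)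

/-! ### The fundamental solutions -/

/-- The fundamental solutions `ξ`, `ζ` with derivatives `ξ'`, `ζ'` that are continuous up to the
boundary point `1` (and, for `ξ`, up to `0`). -/
structure Fund (n : ℕ) (ξ ξ' ζ ζ' : ℝ → ℝ) : Prop where
  xi_cont : ContinuousOn ξ (Icc 0 1)
  dxi_cont : ContinuousOn ξ' (Icc 0 1)
  zeta_cont : ContinuousOn ζ (Ioc 0 1)
  dzeta_cont : ContinuousOn ζ' (Ioc 0 1)
  xi_der : ∀ r ∈ Ioo (0:ℝ) 1, HasDerivAt ξ (ξ' r) r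
  dxi_der : ∀ r ∈ Ioo (0:ℝ) 1, HasDerivAt ξ' (ξ r - n / r * ξ' r) r
  zeta_der : ∀ r ∈ Ioo (0:ℝ) 1, HasDerivAt ζ (ζ' r) r
  dzeta_der : ∀ r ∈ Ioo (0:ℝ) 1, HasDerivAt ζ' (ζ r - n / r * ζ' r) r
  xi_pos : ∀ r ∈ Icc (0:ℝ) 1, 0 < ξ r
  zeta_pos : ∀ r ∈ Ioc (0:ℝ) 1, 0 < ζ r
  wronskian : ∀ r ∈ Ioc (0:ℝ) 1, r ^ n * (ξ' r * ζ r - ξ r * ζ' r) = 1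
  dzeta_one : ζ' 1 = 0

lemma second_derivative_aux {f : ℝ → ℝ} {s : Set ℝ} (hf : ContDiffOn ℝ 2 f s)
    (hs : UniqueDiffOn ℝ s) : ContinuousOn (derivWithin f s) s ∧
      (∀ r ∈ interior s, HasDerivAt f (derivWithin f s r) r) ∧
      ∀ r ∈ interior s, HasDerivAt (derivWithin f s) (deriv (deriv f) r) r := by
  have e2 : (2 : WithTop ℕ∞) = 1 + 1 := by norm_num
  have h1 : ContDiffOn ℝ 1 (derivWithin f s) s := hf.derivWithin hs (by rw [e2])
  have hev : ∀ r ∈ interior s, derivWithin f s =ᶠ[𝓝 r] deriv f := by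
    intro r hr
    filter_upwards [isOpen_interior.mem_nhds hr] with x hx
    exact derivWithin_of_mem_nhds (mem_interior_iff_mem_nhds.mp hx)
  refine ⟨h1.continuousOn, fun r hr => ?_, fun r hr => ?_⟩
  · have hn := mem_interior_iff_mem_nhds.mp hr
    exact ((hf.differentiableOn (by norm_num)) r (interior_subset hr)).hasDerivWithinAt.hasDerivAt hn
  · have hn := mem_interior_iff_mem_nhds.mp hr
    have h2 := ((h1.differentiableOn (by norm_num)) r
      (interior_subset hr)).differentiableAt hn |>.hasDerivAt
    rwa [(hev r hr).deriv_eq] at h2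

/-- The derivatives are one-sided at the end points: `deriv` carries no information on
continuity there. -/
lemma exists_fund {N : ℕ} (hN : 3 ≤ N) (d : GreenData N) :
    ∃ ξ' ζ', Fund (N - 1) d.xi ξ' d.zeta ζ' := by
  obtain ⟨x1, x2, x3⟩ := second_derivative_aux d.xi_smooth (uniqueDiffOn_Icc zero_lt_one)
  have hio : interior (Ioc (0:ℝ) 1) = Ioo 0 1 := interior_Ioc
  have hic : interior (Icc (0:ℝ) 1) = Ioo 0 1 := interior_Icc
  obtain ⟨y1, y2, y3⟩ := second_derivative_aux d.zeta_smooth (uniqueDiffOn_Ioc 0 1)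
  rw [hic] at x2 x3
  rw [hio] at y2 y3
  set ξ' := derivWithin d.xi (Icc 0 1)
  set ζ' := derivWithin d.zeta (Ioc 0 1)
  have hcast : ((N - 1 : ℕ) : ℝ) = N - 1 := by
    rw [Nat.cast_sub (by omega)]; simp
  have hone : (1:ℝ) ∈ Ioc (0:ℝ) 1 := ⟨zero_lt_one, le_rfl⟩
  have hW : ∀ r ∈ Ioo (0:ℝ) 1, r ^ (N - 1) * (ξ' r * d.zeta r - d.xi r * ζ' r) = 1 := by
    intro r hr
    have := d.wronskian r ⟨hr.1, hr.2.le⟩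
    rwa [(x2 r hr).deriv, (y2 r hr).deriv] at this
  have hζ1 := d.zeta_pos 1 hone
  have hW1 := d.wronskian 1 hone
  rw [d.zeta_deriv_one] at hW1
  simp only [one_pow, one_mul, mul_zero, sub_zero] at hW1
  have hdiff : DifferentiableAt ℝ d.xi 1 := by
    by_contra h
    rw [deriv_zero_of_not_differentiableAt h, zero_mul] at hW1
    exact zero_ne_one hW1
  have hξ1 : ξ' 1 = deriv d.xi 1 :=
    hdiff.derivWithin ((uniqueDiffOn_Icc zero_lt_one) 1 ⟨zero_le_one, le_rfl⟩)
  have hWc : ContinuousOn (fun r => r ^ (N - 1) * (ξ' r * d.zeta r - d.xi r * ζ' r))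
      (Ioc (0:ℝ) 1) := by
    have a1 : ContinuousOn ξ' (Ioc 0 1) := x1.mono Ioc_subset_Icc_self
    have a2 : ContinuousOn d.xi (Ioc 0 1) := d.xi_smooth.continuousOn.mono Ioc_subset_Icc_self
    have a3 := d.zeta_smooth.continuousOn
    fun_prop
  have hW1' : (1:ℝ) ^ (N - 1) * (ξ' 1 * d.zeta 1 - d.xi 1 * ζ' 1) = 1 := by
    have h1 := (hWc 1 hone).mono (Ioo_subset_Ioc_self : Ioo (0:ℝ) 1 ⊆ Ioc 0 1)
    have : (𝓝[Ioo (0:ℝ) 1] 1).NeBot := by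
      rw [nhdsWithin_Ioo_eq_nhdsLT zero_lt_one]; infer_instance
    refine tendsto_nhds_unique h1.tendsto (tendsto_const_nhds.congr' ?_)
    filter_upwards [self_mem_nhdsWithin] with r hr
    exact (hW r hr).symm
  have hζ'1 : ζ' 1 = 0 := by
    rw [hξ1, one_pow, one_mul, hW1] at hW1'
    have hx := (d.xi_pos 1 ⟨zero_le_one, le_rfl⟩).ne'
    have : d.xi 1 * ζ' 1 = 0 := by linarith
    exact (mul_eq_zero.mp this).resolve_left hx
  refine ⟨ξ', ζ', ⟨d.xi_smooth.continuousOn, x1, d.zeta_smooth.continuousOn, y1, x2, ?_, y2, ?_,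
    d.xi_pos, d.zeta_pos, ?_, hζ'1⟩⟩
  · intro r hr
    refine (x3 r hr).congr_deriv ?_
    have := d.xi_ode r hr
    rw [(x2 r hr).deriv] at this
    rw [hcast]; linarith
  · intro r hr
    refine (y3 r hr).congr_deriv ?_
    have := d.zeta_ode r hr
    rw [(y2 r hr).deriv] at this
    rw [hcast]; linarith
  · intro r hr
    rcases hr.2.eq_or_lt with h | h
    · rw [h]; exact hW1'
    · exact hW r ⟨hr.1, h⟩

namespace Fund

variable {n : ℕ} {ξ ξ' ζ ζ' : ℝ → ℝ}

lemma weighted_hasDerivAt {f f' : ℝ → ℝ} (n : ℕ) {r : ℝ} (hr : 0 < r)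
    (h2 : HasDerivAt f' (f r - n / r * f' r) r) :
    HasDerivAt (fun r => r ^ n * f' r) (r ^ n * f r) r := by
  refine ((hasDerivAt_pow n r).mul h2).congr_deriv ?_
  rcases n with _ | m
  · simp
  · rw [Nat.add_sub_cancel]
    push_cast
    field_simp
    ring

lemma dxi_pos (F : Fund n ξ ξ' ζ ζ') (hn : 1 ≤ n) {r : ℝ} (hr : r ∈ Ioo (0:ℝ) 1) : 0 < ξ' r := by
  have hmono : StrictMonoOn (fun r => r ^ n * ξ' r) (Icc 0 1) := by
    refine strictMonoOn_of_deriv_pos (convex_Icc 0 1) ?_ fun x hx => ?_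
    · have := F.dxi_cont
      fun_prop
    · rw [interior_Icc] at hx
      rw [(weighted_hasDerivAt n hx.1 (F.dxi_der x hx)).deriv]
      exact mul_pos (pow_pos hx.1 _) (F.xi_pos x ⟨hx.1.le, hx.2.le⟩)
  have h := hmono ⟨le_rfl, zero_le_one⟩ ⟨hr.1.le, hr.2.le⟩ hr.1
  simp only [zero_pow (by omega : n ≠ 0), zero_mul] at h
  exact pos_of_mul_pos_right h (pow_pos hr.1 n).le

lemma dzeta_neg (F : Fund n ξ ξ' ζ ζ') {r : ℝ} (hr : r ∈ Ioo (0:ℝ) 1) : ζ' r < 0 := by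
  have hmono : StrictMonoOn (fun r => r ^ n * ζ' r) (Ioc 0 1) := by
    refine strictMonoOn_of_deriv_pos (convex_Ioc 0 1) ?_ fun x hx => ?_
    · have := F.dzeta_cont
      fun_prop
    · rw [interior_Ioc] at hx
      rw [(weighted_hasDerivAt n hx.1 (F.dzeta_der x hx)).deriv]
      exact mul_pos (pow_pos hx.1 _) (F.zeta_pos x ⟨hx.1, hx.2.le⟩)
  have h := hmono ⟨hr.1, hr.2.le⟩ ⟨zero_lt_one, le_rfl⟩ hr.2
  simp only [F.dzeta_one, mul_zero] at h
  exact (neg_of_mul_neg_right h (pow_pos hr.1 n).le)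

end Fund

/-! ### Limits along ultrafilters -/

lemma exists_ultra_lim {𝒰 : Ultrafilter ℝ} {f : ℝ → ℝ} {a b : ℝ}
    (h : ∀ᶠ p in (𝒰 : Filter ℝ), f p ∈ Icc a b) : ∃ L, Tendsto f 𝒰 (𝓝 L) := by
  obtain ⟨L, -, hL⟩ := (isCompact_Icc (a := a) (b := b)).ultrafilter_le_nhds (𝒰.map f)
    (le_principal_iff.mpr h)
  exact ⟨L, hL⟩

/-- `U`, `V`, `Z` are the limits of `u p`, `w p`, `z p` along an ultrafilter at infinity. -/
structure Limit (n k : ℕ) (δ : ℝ) (u w : ℝ → ℝ → ℝ) (z : ℝ → ℕ → ℝ) (𝒰 : Ultrafilter ℝ)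
    (U V : ℝ → ℝ) (Z : ℕ → ℝ) : Prop where
  le : (𝒰 : Filter ℝ) ≤ atTop
  sol : ∀ᶠ p in atTop, PeakSol n k δ p (u p) (w p) (z p)
  U_lim : ∀ r ∈ Icc (0:ℝ) 1, Tendsto (fun p => u p r) 𝒰 (𝓝 (U r))
  V_lim : ∀ r ∈ Icc (0:ℝ) 1, Tendsto (fun p => w p r) 𝒰 (𝓝 (V r))
  Z_lim : ∀ m ≤ 2 * k, Tendsto (fun p => z p m) 𝒰 (𝓝 (Z m))

lemma exists_limit {n k : ℕ} {δ : ℝ} {u w : ℝ → ℝ → ℝ} {z : ℝ → ℕ → ℝ} {𝒰 : Ultrafilter ℝ}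
    (hle : (𝒰 : Filter ℝ) ≤ atTop)
    (hsol : ∀ᶠ p in atTop, PeakSol n k δ p (u p) (w p) (z p)) :
    ∃ U V Z, Limit n k δ u w z 𝒰 U V Z := by
  have hU : ∀ r, ∃ L, r ∈ Icc (0:ℝ) 1 → Tendsto (fun p => u p r) 𝒰 (𝓝 L) := by
    intro r
    by_cases hr : r ∈ Icc (0:ℝ) 1
    · obtain ⟨L, hL⟩ := exists_ultra_lim (𝒰 := 𝒰) (f := fun p => u p r) (a := 1 / 2) (b := 2)
        ((hsol.filter_mono hle).mono fun p S => ⟨S.lower r hr, S.upper r hr⟩)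
      exact ⟨L, fun _ => hL⟩
    · exact ⟨0, fun h => absurd h hr⟩
  have hV : ∀ r, ∃ L, r ∈ Icc (0:ℝ) 1 → Tendsto (fun p => w p r) 𝒰 (𝓝 L) := by
    intro r
    by_cases hr : r ∈ Icc (0:ℝ) 1
    · obtain ⟨L, hL⟩ := exists_ultra_lim (𝒰 := 𝒰) (f := fun p => w p r) (a := -1) (b := 1)
        ((hsol.filter_mono hle).mono fun p S => abs_le.mp (S.slope r hr))
      exact ⟨L, fun _ => hL⟩
    · exact ⟨0, fun h => absurd h hr⟩
  have hZ : ∀ m, ∃ L, m ≤ 2 * k → Tendsto (fun p => z p m) 𝒰 (𝓝 L) := by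
    intro m
    by_cases hm : m ≤ 2 * k
    · obtain ⟨L, hL⟩ := exists_ultra_lim (𝒰 := 𝒰) (f := fun p => z p m) (a := 0) (b := 1)
        ((hsol.filter_mono hle).mono fun p S => S.z_mem hm)
      exact ⟨L, fun _ => hL⟩
    · exact ⟨0, fun h => absurd h hm⟩
  choose U hU using hU
  choose V hV using hV
  choose Z hZ using hZ
  exact ⟨U, V, Z, hle, hsol, hU, hV, hZ⟩

namespace Limit

variable {n k : ℕ} {δ : ℝ} {u w : ℝ → ℝ → ℝ} {z : ℝ → ℕ → ℝ} {𝒰 : Ultrafilter ℝ}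
  {U V : ℝ → ℝ} {Z : ℕ → ℝ} {ξ ξ' ζ ζ' : ℝ → ℝ}

lemma ev (L : Limit n k δ u w z 𝒰 U V Z) (P : ℝ) :
    ∀ᶠ p in (𝒰 : Filter ℝ), P ≤ p ∧ PeakSol n k δ p (u p) (w p) (z p) :=
  ((eventually_ge_atTop P).and L.sol).filter_mono L.le

lemma U_lip (L : Limit n k δ u w z 𝒰 U V Z) {x y : ℝ} (hx : x ∈ Icc (0:ℝ) 1)
    (hy : y ∈ Icc (0:ℝ) 1) : |U y - U x| ≤ |y - x| :=
  le_of_tendsto ((L.U_lim y hy).sub (L.U_lim x hx)).abs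
    ((L.ev 0).mono fun _ S => S.2.lipschitz hx hy)

lemma U_cont (L : Limit n k δ u w z 𝒰 U V Z) : ContinuousOn U (Icc 0 1) := by
  have : LipschitzOnWith 1 U (Icc 0 1) := LipschitzOnWith.of_dist_le_mul fun x hx y hy => by
    simpa [Real.dist_eq] using L.U_lip hy hx
  exact this.continuousOn

lemma Z_zero (L : Limit n k δ u w z 𝒰 U V Z) : Z 0 = 0 :=
  tendsto_nhds_unique (L.Z_lim 0 (by omega))
    (tendsto_const_nhds.congr' ((L.ev 0).mono fun _ S => S.2.z_zero.symm))

lemma Z_last (L : Limit n k δ u w z 𝒰 U V Z) : Z (2 * k) = 1 :=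
  tendsto_nhds_unique (L.Z_lim _ le_rfl)
    (tendsto_const_nhds.congr' ((L.ev 0).mono fun _ S => S.2.z_last.symm))

lemma Z_gap (L : Limit n k δ u w z 𝒰 U V Z) (hδ : 0 < δ) (hδ1 : δ ≤ 1 / 2) {m : ℕ}
    (hm : m < 2 * k) : energyFloor n δ ≤ Z (m + 1) - Z m :=
  ge_of_tendsto ((L.Z_lim (m + 1) hm).sub (L.Z_lim m hm.le))
    ((L.ev (max 2 (8 / δ))).mono fun _ S =>
      S.2.gap hδ hδ1 ((le_max_left _ _).trans S.1) ((le_max_right _ _).trans S.1) hm)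

lemma Z_strictMono (L : Limit n k δ u w z 𝒰 U V Z) (hδ : 0 < δ) (hδ1 : δ ≤ 1 / 2) {i j : ℕ}
    (hij : i < j) (hj : j ≤ 2 * k) : Z i < Z j := by
  induction j, hij using Nat.le_induction with
  | base =>
    have := L.Z_gap hδ hδ1 (m := i) (by omega)
    linarith [energyFloor_pos (n := n) hδ]
  | succ j hij ih =>
    have := L.Z_gap hδ hδ1 (m := j) (by omega)
    linarith [energyFloor_pos (n := n) hδ, ih (by omega)]

lemma Z_mono (L : Limit n k δ u w z 𝒰 U V Z) (hδ : 0 < δ) (hδ1 : δ ≤ 1 / 2) {i j : ℕ}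
    (hij : i ≤ j) (hj : j ≤ 2 * k) : Z i ≤ Z j := by
  rcases hij.eq_or_lt with h | h
  · rw [h]
  · exact (L.Z_strictMono hδ hδ1 h hj).le

lemma Z_mem (L : Limit n k δ u w z 𝒰 U V Z) (hδ : 0 < δ) (hδ1 : δ ≤ 1 / 2) {m : ℕ}
    (hm : m ≤ 2 * k) : Z m ∈ Icc (0:ℝ) 1 := by
  constructor
  · rw [← L.Z_zero]; exact L.Z_mono hδ hδ1 (Nat.zero_le _) hm
  · rw [← L.Z_last]; exact L.Z_mono hδ hδ1 hm le_rfl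

lemma U_odd (L : Limit n k δ u w z 𝒰 U V Z) (hδ : 0 < δ) (hδ1 : δ ≤ 1 / 2) {m : ℕ}
    (hm : m ≤ 2 * k) (ho : Odd m) : U (Z m) = 1 := by
  have hZ := L.Z_mem hδ hδ1 hm
  have h1 : Tendsto (fun p => u p (z p m)) 𝒰 (𝓝 1) := by
    rw [Metric.tendsto_nhds]
    intro ε hε
    obtain ⟨P, -, hP⟩ := exists_forall_le_one_add (half_pos hε)
    filter_upwards [L.ev P] with p S
    have h2 := hP p S.1 S.2 _ (S.2.z_mem hm)
    have h3 := S.2.odd_gt m hm ho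
    rw [Real.dist_eq, abs_lt]
    constructor <;> linarith
  have h2 : Tendsto (fun p => u p (Z m) - u p (z p m)) 𝒰 (𝓝 0) := by
    have h3 : Tendsto (fun p => |Z m - z p m|) 𝒰 (𝓝 0) := by
      have := ((L.Z_lim m hm).const_sub (Z m)).abs
      simpa using this
    refine squeeze_zero_norm' ((L.ev 0).mono fun p S => ?_) h3
    exact S.2.lipschitz (S.2.z_mem hm) hZ
  have h3 := h1.add h2
  simp only [add_sub_cancel, add_zero] at h3
  exact tendsto_nhds_unique (L.U_lim _ hZ) h3

/-- Uniform strict upper bound on intervals that avoid the limit maximum points. -/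
lemma away (L : Limit n k δ u w z 𝒰 U V Z) (hδ : 0 < δ) (hδ1 : δ ≤ 1 / 2) {a b : ℝ}
    (ha : 0 ≤ a) (hb : b ≤ 1) (hZ : ∀ m ≤ 2 * k, Odd m → Z m < a ∨ b < Z m) :
    ∃ η > 0, η ≤ 1 / 4 ∧ ∀ᶠ p in (𝒰 : Filter ℝ), ∀ r ∈ Icc a b, u p r ≤ 1 - η := by
  obtain ⟨ℓ, hℓ, hℓ0⟩ : ∃ ℓ, (∀ m ∈ Finset.range (2 * k + 1), Odd m →
      Z m ≤ a - 2 * ℓ ∨ b + 2 * ℓ ≤ Z m) ∧ 0 < ℓ := by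
    have hev : ∀ᶠ ℓ in 𝓝[>] (0:ℝ), ∀ m ∈ Finset.range (2 * k + 1), Odd m →
        Z m ≤ a - 2 * ℓ ∨ b + 2 * ℓ ≤ Z m := by
      rw [Filter.eventually_all_finset]
      intro m hm
      by_cases ho : Odd m
      · rcases hZ m (by simp at hm; omega) ho with h | h
        · filter_upwards [Ioo_mem_nhdsGT (show (0:ℝ) < (a - Z m) / 2 by linarith)] with ℓ hℓ _
          left; linarith [hℓ.2]
        · filter_upwards [Ioo_mem_nhdsGT (show (0:ℝ) < (Z m - b) / 2 by linarith)] with ℓ hℓ _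
          right; linarith [hℓ.2]
      · exact Eventually.of_forall fun _ h => absurd h ho
    exact (hev.and self_mem_nhdsWithin).exists
  obtain ⟨η, hη, hη1, P, -, hP⟩ := exists_le_away (n := n) hδ hδ1 hℓ0
  have hclose : ∀ᶠ p in (𝒰 : Filter ℝ), ∀ m ∈ Finset.range (2 * k + 1), |z p m - Z m| < ℓ := by
    rw [Filter.eventually_all_finset]
    intro m hm
    have := (Metric.tendsto_nhds.mp (L.Z_lim m (by simp at hm; omega))) ℓ hℓ0
    simpa [Real.dist_eq] using this
  refine ⟨η, hη, hη1, ?_⟩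
  filter_upwards [L.ev P, hclose] with p S hcl r hr
  refine hP p S.1 S.2 r ⟨ha.trans hr.1, hr.2.trans hb⟩ fun m hm ho => ?_
  have hm' : m ∈ Finset.range (2 * k + 1) := by simp; omega
  have h1 := abs_lt.mp (hcl m hm')
  rcases hℓ m hm' ho with h | h
  · exact le_abs.mpr (Or.inl (by linarith [hr.1]))
  · exact le_abs.mpr (Or.inr (by linarith [hr.2]))

lemma U_lt (L : Limit n k δ u w z 𝒰 U V Z) (hδ : 0 < δ) (hδ1 : δ ≤ 1 / 2) {r : ℝ}
    (hr : r ∈ Icc (0:ℝ) 1) (hZ : ∀ m ≤ 2 * k, Odd m → Z m < r ∨ r < Z m) : U r < 1 := by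
  obtain ⟨η, hη, -, h⟩ := L.away hδ hδ1 hr.1 hr.2 hZ
  have := le_of_tendsto (L.U_lim r hr) (h.mono fun p hp => hp r ⟨le_rfl, le_rfl⟩)
  linarith

/-- Quantities whose derivative is a bounded multiple of `u ^ p` become constant away from the
limit maximum points. -/
lemma sub_tendsto_zero (L : Limit n k δ u w z 𝒰 U V Z) (hδ : 0 < δ) (hδ1 : δ ≤ 1 / 2) {a b : ℝ}
    (ha : 0 ≤ a) (hab : a ≤ b) (hb : b ≤ 1) (hZ : ∀ m ≤ 2 * k, Odd m → Z m < a ∨ b < Z m)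
    {f : ℝ → ℝ → ℝ} {g : ℝ → ℝ} {M : ℝ} (hM : ∀ r ∈ Icc a b, |g r| ≤ M)
    (hf : ∀ᶠ p in (𝒰 : Filter ℝ), ContinuousOn (f p) (Icc a b) ∧
      ∀ r ∈ Ioo a b, HasDerivAt (f p) (g r * u p r ^ p) r) :
    Tendsto (fun p => f p b - f p a) 𝒰 (𝓝 0) := by
  rcases hab.eq_or_lt with h | hlt
  · subst h; simp
  obtain ⟨η, hη, hη1, h⟩ := L.away hδ hδ1 ha hb hZ
  have hpow : Tendsto (fun p : ℝ => M * (1 - η) ^ p) 𝒰 (𝓝 0) := by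
    have := ((tendsto_rpow_atTop_of_base_lt_one (1 - η) (by linarith) (by linarith)).const_mul
      M).mono_left L.le
    simpa using this
  refine squeeze_zero_norm' ?_ hpow
  filter_upwards [h, hf, L.ev 2] with p hp hfp S
  obtain ⟨c, hc, hcs⟩ := exists_hasDerivAt_eq_slope (f p) _ hlt hfp.1 hfp.2
  have hc' := Ioo_subset_Icc_self hc
  rw [eq_div_iff (by linarith)] at hcs
  rw [← hcs, Real.norm_eq_abs, abs_mul, abs_mul, abs_of_pos (sub_pos.mpr hlt)]
  have h1 := S.2.lower c ⟨by linarith [hc.1], by linarith [hc.2]⟩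
  have h2 : u p c ^ p ≤ (1 - η) ^ p := rpow_le_rpow (by linarith) (hp c hc') (by linarith [S.1])
  have h3 : 0 ≤ u p c ^ p := rpow_nonneg (by linarith) _
  have h4 : 0 ≤ M := (abs_nonneg _).trans (hM c hc')
  rw [abs_of_nonneg h3]
  calc |g c| * u p c ^ p * (b - a) ≤ M * (1 - η) ^ p * 1 := by
        refine mul_le_mul (mul_le_mul (hM c hc') h2 h3 h4) (by linarith) (by linarith) ?_
        exact mul_nonneg h4 (rpow_nonneg (by linarith) _)
    _ = _ := mul_one _

/-- In the limit `u ^ p` disappears away from the maxima, so the Wronskian with `ξ`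
(the coefficient of `ζ`) is constant there. -/
lemma C_const (L : Limit n k δ u w z 𝒰 U V Z) (F : Fund n ξ ξ' ζ ζ') (hδ : 0 < δ)
    (hδ1 : δ ≤ 1 / 2) {a b : ℝ} (ha : 0 ≤ a) (hab : a ≤ b) (hb : b ≤ 1)
    (hZ : ∀ m ≤ 2 * k, Odd m → Z m < a ∨ b < Z m) :
    b ^ n * (U b * ξ' b - V b * ξ b) = a ^ n * (U a * ξ' a - V a * ξ a) := by
  have hsub : Icc a b ⊆ Icc (0:ℝ) 1 := Icc_subset_Icc ha hb
  obtain ⟨M, hM⟩ := (isCompact_Icc (a := a) (b := b)).exists_bound_of_continuousOn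
    (f := fun r => r ^ n * ξ r) (by have := F.xi_cont.mono hsub; fun_prop)
  have h0 := L.sub_tendsto_zero hδ hδ1 ha hab hb hZ
    (f := fun p r => r ^ n * (u p r * ξ' r - w p r * ξ r)) (g := fun r => r ^ n * ξ r) (M := M)
    (fun r hr => hM r hr) ((L.ev 0).mono fun p S => by
      refine ⟨?_, fun r hr => ?_⟩
      · have h1 : ContinuousOn (u p) (Icc a b) := fun x _ =>
          (S.2.der x).continuousAt.continuousWithinAt
        have h2 := S.2.w_cont
        have h3 := F.xi_cont.mono hsub
        have h4 := F.dxi_cont.mono hsub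
        fun_prop
      · have hr' : r ∈ Ioo (0:ℝ) 1 := ⟨by linarith [hr.1], by linarith [hr.2]⟩
        have h1 := Fund.weighted_hasDerivAt n hr'.1 (F.dxi_der r hr')
        have h2 : HasDerivAt (fun r => r ^ n * w p r) (r ^ n * (u p r - u p r ^ p)) r :=
          Fund.weighted_hasDerivAt (f := fun r => u p r - u p r ^ p) n hr'.1
            (S.2.der2 r ⟨hr'.1, hr'.2.le⟩)
        have h3 := ((S.2.der r).mul h1).sub (h2.mul (F.xi_der r hr'))
        refine (h3.congr_deriv ?_).congr_of_eventuallyEq (Eventually.of_forall fun x => ?_)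
        · ring
        · simp only [Pi.mul_apply, Pi.sub_apply]; ring)
  have hbm := hsub (right_mem_Icc.mpr hab)
  have ham := hsub (left_mem_Icc.mpr hab)
  have h1 := ((((L.U_lim b hbm).mul_const (ξ' b)).sub ((L.V_lim b hbm).mul_const (ξ b))).const_mul
    (b ^ n)).sub ((((L.U_lim a ham).mul_const (ξ' a)).sub
      ((L.V_lim a ham).mul_const (ξ a))).const_mul (a ^ n))
  exact sub_eq_zero.mp (tendsto_nhds_unique h1 h0)

/-- The Wronskian with `ζ`, that is the coefficient of `ξ`, is constant away from the
limit maximum points. -/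
lemma D_const (L : Limit n k δ u w z 𝒰 U V Z) (F : Fund n ξ ξ' ζ ζ') (hδ : 0 < δ)
    (hδ1 : δ ≤ 1 / 2) {a b : ℝ} (ha : 0 < a) (hab : a ≤ b) (hb : b ≤ 1)
    (hZ : ∀ m ≤ 2 * k, Odd m → Z m < a ∨ b < Z m) :
    b ^ n * (V b * ζ b - U b * ζ' b) = a ^ n * (V a * ζ a - U a * ζ' a) := by
  have hsub : Icc a b ⊆ Ioc (0:ℝ) 1 := fun x hx => ⟨ha.trans_le hx.1, hx.2.trans hb⟩
  obtain ⟨M, hM⟩ := (isCompact_Icc (a := a) (b := b)).exists_bound_of_continuousOn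
    (f := fun r => -(r ^ n * ζ r)) (by have := F.zeta_cont.mono hsub; fun_prop)
  have h0 := L.sub_tendsto_zero hδ hδ1 ha.le hab hb hZ
    (f := fun p r => r ^ n * (w p r * ζ r - u p r * ζ' r)) (g := fun r => -(r ^ n * ζ r)) (M := M)
    (fun r hr => hM r hr) ((L.ev 0).mono fun p S => by
      refine ⟨?_, fun r hr => ?_⟩
      · have h1 : ContinuousOn (u p) (Icc a b) := fun x _ =>
          (S.2.der x).continuousAt.continuousWithinAt
        have h2 := S.2.w_cont
        have h3 := F.zeta_cont.mono hsub
        have h4 := F.dzeta_cont.mono hsub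
        fun_prop
      · have hr' : r ∈ Ioo (0:ℝ) 1 := ⟨by linarith [hr.1], by linarith [hr.2]⟩
        have h1 := Fund.weighted_hasDerivAt n hr'.1 (F.dzeta_der r hr')
        have h2 : HasDerivAt (fun r => r ^ n * w p r) (r ^ n * (u p r - u p r ^ p)) r :=
          Fund.weighted_hasDerivAt (f := fun r => u p r - u p r ^ p) n hr'.1
            (S.2.der2 r ⟨hr'.1, hr'.2.le⟩)
        have h3 := (h2.mul (F.zeta_der r hr')).sub ((S.2.der r).mul h1)
        refine (h3.congr_deriv ?_).congr_of_eventuallyEq (Eventually.of_forall fun x => ?_)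
        · ring
        · simp only [Pi.mul_apply, Pi.sub_apply]; ring)
  have hbm := Ioc_subset_Icc_self (hsub (right_mem_Icc.mpr hab))
  have ham := Ioc_subset_Icc_self (hsub (left_mem_Icc.mpr hab))
  have h1 := ((((L.V_lim b hbm).mul_const (ζ b)).sub ((L.U_lim b hbm).mul_const (ζ' b))).const_mul
    (b ^ n)).sub ((((L.V_lim a ham).mul_const (ζ a)).sub
      ((L.U_lim a ham).mul_const (ζ' a))).const_mul (a ^ n))
  exact sub_eq_zero.mp (tendsto_nhds_unique h1 h0)

lemma energy_lim (L : Limit n k δ u w z 𝒰 U V Z) (hδ : 0 < δ) (hδ1 : δ ≤ 1 / 2) {r : ℝ}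
    (hr : r ∈ Icc (0:ℝ) 1) (hZ : ∀ m ≤ 2 * k, Odd m → Z m < r ∨ r < Z m) :
    Tendsto (fun p => w p r ^ 2 / 2 + potential p (u p r)) 𝒰
      (𝓝 (V r ^ 2 / 2 + (0 - (U r ^ 2 - 1) / 2))) := by
  obtain ⟨η, hη, -, h⟩ := L.away hδ hδ1 hr.1 hr.2 hZ
  have h1 : Tendsto (fun p => (u p r ^ (p + 1) - 1) / (p + 1)) 𝒰 (𝓝 0) := by
    have h2 : Tendsto (fun p : ℝ => 1 / (p + 1)) 𝒰 (𝓝 0) := by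
      have : Tendsto (fun p : ℝ => 1 / (p + 1)) atTop (𝓝 0) :=
        tendsto_const_nhds.div_atTop (tendsto_atTop_add_const_right _ _ tendsto_id)
      exact this.mono_left L.le
    refine squeeze_zero_norm' ?_ h2
    filter_upwards [h, L.ev 2] with p hp S
    have h3 := S.2.lower r hr
    have h4 := hp r ⟨le_rfl, le_rfl⟩
    have h5 : 0 ≤ u p r ^ (p + 1) := rpow_nonneg (by linarith) _
    have h6 : u p r ^ (p + 1) ≤ 1 := rpow_le_one (by linarith) (by linarith) (by linarith [S.1])
    have h7 : 0 < p + 1 := by linarith [S.1]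
    rw [Real.norm_eq_abs, abs_div, abs_of_pos h7]
    refine div_le_div_of_nonneg_right ?_ h7.le
    rw [abs_le]; constructor <;> linarith
  exact (((L.V_lim r hr).pow 2).div_const 2).add
    (h1.sub ((((L.U_lim r hr).pow 2).sub_const 1).div_const 2))

/-- The limit energy is Lipschitz, even across the limit maximum points. -/
lemma energy_lip (L : Limit n k δ u w z 𝒰 U V Z) (hδ : 0 < δ) (hδ1 : δ ≤ 1 / 2) {r s : ℝ}
    (hr : 0 < r) (hrs : r ≤ s) (hs : s ≤ 1)
    (hZr : ∀ m ≤ 2 * k, Odd m → Z m < r ∨ r < Z m)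
    (hZs : ∀ m ≤ 2 * k, Odd m → Z m < s ∨ s < Z m) :
    |(V s ^ 2 / 2 + (0 - (U s ^ 2 - 1) / 2)) - (V r ^ 2 / 2 + (0 - (U r ^ 2 - 1) / 2))| ≤
      n / r * (s - r) := by
  have h1 := L.energy_lim hδ hδ1 ⟨hr.le.trans hrs, hs⟩ hZs
  have h2 := L.energy_lim hδ hδ1 ⟨hr.le, hrs.trans hs⟩ hZr
  refine le_of_tendsto (h1.sub h2).abs ((L.ev 2).mono fun p S => ?_)
  have := Convex.norm_image_sub_le_of_norm_hasDerivWithin_le (C := n / r) (s := Icc r s)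
    (f := fun r => w p r ^ 2 / 2 + potential p (u p r))
    (fun t ht => (S.2.energy_hasDerivAt S.1
      ⟨hr.trans_le ht.1, ht.2.trans hs⟩).hasDerivWithinAt)
    (fun t ht => by
      have ht0 : 0 < t := hr.trans_le ht.1
      have h3 := S.2.slope t ⟨ht0.le, ht.2.trans hs⟩
      have h4 : w p t ^ 2 ≤ 1 := (sq_le_one_iff_abs_le_one _).mpr h3
      have h5 : (n:ℝ) / t ≤ n / r := div_le_div_of_nonneg_left (Nat.cast_nonneg n) hr ht.1
      have h6 : (0:ℝ) ≤ n / t := by positivity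
      rw [norm_neg, Real.norm_eq_abs, abs_of_nonneg (by positivity)]
      nlinarith)
    (convex_Icc r s) (left_mem_Icc.mpr hrs) (right_mem_Icc.mpr hrs)
  rwa [Real.norm_eq_abs, Real.norm_eq_abs, abs_of_nonneg (sub_nonneg.mpr hrs)] at this

end Limit

/-! ### The limit profile is a billiard trajectory -/

/-- A `k`-bounce billiard trajectory below the ceiling `1`: the pieces `c i * ζ + d i * ξ`
(`0 ≤ i ≤ k`) solve the linear equation, meet at height `1` at the points `α 1 < ⋯ < α k` and are
reflected there with opposite slopes.  The conditions `c 0 = 0` and `d k = 0` encode regularity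
at `0` and the Neumann condition at `1`. -/
structure Billiard (k : ℕ) (ξ ξ' ζ ζ' : ℝ → ℝ) (α c d : ℕ → ℝ) : Prop where
  mem : ∀ j, 1 ≤ j → j ≤ k → α j ∈ Ioo (0:ℝ) 1
  lt : ∀ j, 1 ≤ j → j < k → α j < α (j + 1)
  c_zero : c 0 = 0
  d_last : d k = 0
  left : ∀ j < k, c j * ζ (α (j + 1)) + d j * ξ (α (j + 1)) = 1
  right : ∀ j, 1 ≤ j → j ≤ k → c j * ζ (α j) + d j * ξ (α j) = 1
  reflect : ∀ j < k, c j * ζ' (α (j + 1)) + d j * ξ' (α (j + 1)) =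
    -(c (j + 1) * ζ' (α (j + 1)) + d (j + 1) * ξ' (α (j + 1)))
  below : ∀ j, 1 ≤ j → j < k → ∀ r ∈ Ioo (α j) (α (j + 1)), c j * ζ r + d j * ξ r < 1

namespace Limit

variable {n k : ℕ} {δ : ℝ} {u w : ℝ → ℝ → ℝ} {z : ℝ → ℕ → ℝ} {𝒰 : Ultrafilter ℝ}
  {U V : ℝ → ℝ} {Z : ℕ → ℝ} {ξ ξ' ζ ζ' : ℝ → ℝ}

lemma avoid (L : Limit n k δ u w z 𝒰 U V Z) (hδ : 0 < δ) (hδ1 : δ ≤ 1 / 2) {i : ℕ}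
    {a b : ℝ} (h1 : 1 ≤ i → Z (2 * i - 1) < a) (h2 : i < k → b < Z (2 * i + 1)) (hi : i ≤ k) :
    ∀ m ≤ 2 * k, Odd m → Z m < a ∨ b < Z m := by
  intro m hm ho
  rcases Nat.lt_or_ge m (2 * i) with h | h
  · left
    exact (L.Z_mono hδ hδ1 (by omega : m ≤ 2 * i - 1) (by omega)).trans_lt (h1 (by omega))
  · right
    obtain ⟨t, rfl⟩ := ho
    exact (h2 (by omega)).trans_le (L.Z_mono hδ hδ1 (by omega) hm)

lemma V_one (L : Limit n k δ u w z 𝒰 U V Z) : V 1 = 0 :=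
  tendsto_nhds_unique (L.V_lim 1 ⟨zero_le_one, le_rfl⟩)
    (tendsto_const_nhds.congr' ((L.ev 0).mono fun p S => by
      have := S.2.w_z _ le_rfl
      rw [S.2.z_last] at this; exact this.symm))

lemma V_sign (L : Limit n k δ u w z 𝒰 U V Z) (hδ : 0 < δ) (hδ1 : δ ≤ 1 / 2) {m : ℕ}
    (hm : m < 2 * k) {r : ℝ} (hr : r ∈ Ioo (Z m) (Z (m + 1))) : 0 ≤ (-1) ^ m * V r := by
  have hr' : r ∈ Icc (0:ℝ) 1 := ⟨(L.Z_mem hδ hδ1 hm.le).1.trans hr.1.le,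
    hr.2.le.trans (L.Z_mem hδ hδ1 (Nat.succ_le_of_lt hm)).2⟩
  refine ge_of_tendsto ((L.V_lim r hr').const_mul ((-1) ^ m)) ?_
  filter_upwards [L.ev 0, (L.Z_lim m hm.le).eventually_lt_const hr.1,
    (L.Z_lim (m + 1) hm).eventually_const_lt hr.2] with p S h1 h2
  exact (S.2.sign m hm r ⟨h1, h2⟩).le

/-- Between consecutive limit maximum points the limit profile solves the linear equation. -/
lemma exists_piece (L : Limit n k δ u w z 𝒰 U V Z) (F : Fund n ξ ξ' ζ ζ') (hn : 1 ≤ n)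
    (hk : 1 ≤ k) (hδ : 0 < δ) (hδ1 : δ ≤ 1 / 2) {i : ℕ} (hi : i ≤ k) :
    ∃ c d : ℝ, (i = 0 → c = 0) ∧ (i = k → d = 0) ∧ ∀ r ∈ Ioc (0:ℝ) 1,
      (1 ≤ i → Z (2 * i - 1) < r) → (i < k → r < Z (2 * i + 1)) →
      U r = c * ζ r + d * ξ r ∧ V r = c * ζ' r + d * ξ' r := by
  obtain ⟨a, ha0, ha1, ha2, ha3, hak⟩ : ∃ a, 0 < a ∧ a ≤ 1 ∧ (1 ≤ i → Z (2 * i - 1) < a) ∧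
      (i < k → a < Z (2 * i + 1)) ∧ (i = k → a = 1) := by
    rcases Nat.eq_zero_or_pos i with h | h
    · subst h
      have h1 := L.Z_strictMono hδ hδ1 (i := 0) (j := 1) (by omega) (by omega)
      rw [L.Z_zero] at h1
      have h2 := (L.Z_mem hδ hδ1 (m := 1) (by omega)).2
      refine ⟨Z 1 / 2, by linarith, by linarith, by omega, fun _ => ?_, by omega⟩
      simpa using half_lt_self h1
    · have h0 := L.Z_mem hδ hδ1 (m := 2 * i - 1) (by omega)
      have h1 := L.Z_strictMono hδ hδ1 (i := 2 * i - 1) (j := 2 * i) (by omega) (by omega)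
      refine ⟨Z (2 * i), by linarith [h0.1], (L.Z_mem hδ hδ1 (by omega)).2, fun _ => h1,
        fun h => L.Z_strictMono hδ hδ1 (by omega) (by omega), fun h => ?_⟩
      rw [h]; exact L.Z_last
  refine ⟨a ^ n * (U a * ξ' a - V a * ξ a), a ^ n * (V a * ζ a - U a * ζ' a), fun h => ?_,
    fun h => ?_, fun r hr h1 h2 => ?_⟩
  · have := L.C_const F hδ hδ1 le_rfl ha0.le ha1
      (L.avoid hδ hδ1 (i := i) (fun h' => by omega) ha3 hi)
    rw [this, zero_pow (by omega), zero_mul]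
  · rw [hak h, L.V_one, F.dzeta_one]; ring
  · have hC : r ^ n * (U r * ξ' r - V r * ξ r) = a ^ n * (U a * ξ' a - V a * ξ a) := by
      rcases le_total r a with h | h
      · exact (L.C_const F hδ hδ1 hr.1.le h ha1 (L.avoid hδ hδ1 h1 ha3 hi)).symm
      · exact L.C_const F hδ hδ1 ha0.le h hr.2 (L.avoid hδ hδ1 ha2 h2 hi)
    have hD : r ^ n * (V r * ζ r - U r * ζ' r) = a ^ n * (V a * ζ a - U a * ζ' a) := by
      rcases le_total r a with h | h
      · exact (L.D_const F hδ hδ1 hr.1 h ha1 (L.avoid hδ hδ1 h1 ha3 hi)).symm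
      · exact L.D_const F hδ hδ1 ha0 h hr.2 (L.avoid hδ hδ1 ha2 h2 hi)
    have hW := F.wronskian r hr
    rw [← hC, ← hD]
    constructor
    · linear_combination (-U r) * hW
    · linear_combination (-V r) * hW

/-- The reflection law comes from the continuity of the limit energy at the maximum points,
where the profile has height `1`, together with the signs of the one-sided slopes. -/
lemma exists_billiard (L : Limit n k δ u w z 𝒰 U V Z) (F : Fund n ξ ξ' ζ ζ') (hn : 1 ≤ n)
    (hk : 1 ≤ k) (hδ : 0 < δ) (hδ1 : δ ≤ 1 / 2) :
    ∃ α c d : ℕ → ℝ, Billiard k ξ ξ' ζ ζ' α c d ∧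
      (∀ j, 1 ≤ j → j ≤ k → Tendsto (fun p => z p (2 * j - 1)) 𝒰 (𝓝 (α j))) ∧
      ∀ i ≤ k, ∀ r ∈ Icc (0:ℝ) 1, (1 ≤ i → α i ≤ r) → (i < k → r ≤ α (i + 1)) →
        Tendsto (fun p => u p r) 𝒰 (𝓝 (c i * ζ r + d i * ξ r)) := by
  have hpieces : ∀ i, ∃ c d : ℝ, i ≤ k → (i = 0 → c = 0) ∧ (i = k → d = 0) ∧ ∀ r ∈ Ioc (0:ℝ) 1,
      (1 ≤ i → Z (2 * i - 1) < r) → (i < k → r < Z (2 * i + 1)) →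
      U r = c * ζ r + d * ξ r ∧ V r = c * ζ' r + d * ξ' r := by
    intro i
    by_cases hi : i ≤ k
    · obtain ⟨c, d, h⟩ := L.exists_piece F hn hk hδ hδ1 hi
      exact ⟨c, d, fun _ => h⟩
    · exact ⟨0, 0, fun h => absurd h hi⟩
  choose c d hcd using hpieces
  have hmem : ∀ j, 1 ≤ j → j ≤ k → Z (2 * j - 1) ∈ Ioo (0:ℝ) 1 := by
    intro j h1 h2
    have a1 := L.Z_strictMono hδ hδ1 (i := 0) (j := 2 * j - 1) (by omega) (by omega)
    have a2 := L.Z_strictMono hδ hδ1 (i := 2 * j - 1) (j := 2 * k) (by omega) (by omega)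
    rw [L.Z_zero] at a1
    rw [L.Z_last] at a2
    exact ⟨a1, a2⟩
  have hWc : ∀ i, ∀ x ∈ Ioo (0:ℝ) 1, ContinuousAt (fun r => c i * ζ r + d i * ξ r) x := by
    intro i x hx
    have h1 := (F.zeta_der x hx).continuousAt
    have h2 := (F.xi_der x hx).continuousAt
    fun_prop
  have hWc' : ∀ i, ∀ x ∈ Ioo (0:ℝ) 1, ContinuousAt (fun r => c i * ζ' r + d i * ξ' r) x := by
    intro i x hx
    have h1 := (F.dzeta_der x hx).continuousAt
    have h2 := (F.dxi_der x hx).continuousAt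
    fun_prop
  have hUc : ∀ x ∈ Ioo (0:ℝ) 1, ContinuousAt U x := fun x hx =>
    L.U_cont.continuousAt (Icc_mem_nhds hx.1 hx.2)
  -- the pieces adjacent to a limit maximum point
  have hL : ∀ j < k, ∀ᶠ r in 𝓝[<] (Z (2 * j + 1)), r ∈ Ioo (Z (2 * j)) (Z (2 * j + 1)) ∧
      U r = c j * ζ r + d j * ξ r ∧ V r = c j * ζ' r + d j * ξ' r := by
    intro j hj
    have h1 := L.Z_strictMono hδ hδ1 (i := 2 * j) (j := 2 * j + 1) (by omega) (by omega)
    filter_upwards [Ioo_mem_nhdsLT h1] with r hr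
    refine ⟨hr, (hcd j hj.le).2.2 r ⟨(L.Z_mem hδ hδ1 (by omega)).1.trans_lt hr.1,
      hr.2.le.trans (L.Z_mem hδ hδ1 (by omega)).2⟩ (fun h => ?_) fun h => hr.2⟩
    exact (L.Z_mono hδ hδ1 (by omega) (by omega)).trans_lt hr.1
  have hR : ∀ j < k, ∀ᶠ r in 𝓝[>] (Z (2 * j + 1)), r ∈ Ioo (Z (2 * j + 1)) (Z (2 * j + 2)) ∧
      U r = c (j + 1) * ζ r + d (j + 1) * ξ r ∧
        V r = c (j + 1) * ζ' r + d (j + 1) * ξ' r := by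
    intro j hj
    have h1 := L.Z_strictMono hδ hδ1 (i := 2 * j + 1) (j := 2 * j + 2) (by omega) (by omega)
    filter_upwards [Ioo_mem_nhdsGT h1] with r hr
    refine ⟨hr, (hcd (j + 1) hj).2.2 r ⟨(L.Z_mem hδ hδ1 (by omega)).1.trans_lt hr.1,
      hr.2.le.trans (L.Z_mem hδ hδ1 (by omega)).2⟩ (fun h => hr.1) fun h => ?_⟩
    exact hr.2.trans_le (L.Z_mono hδ hδ1 (by omega) (by omega))
  have hmem' : ∀ j < k, Z (2 * j + 1) ∈ Ioo (0:ℝ) 1 := fun j hj =>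
    hmem (j + 1) (by omega) hj
  have hleft : ∀ j < k, c j * ζ (Z (2 * j + 1)) + d j * ξ (Z (2 * j + 1)) = 1 := by
    intro j hj
    rw [← L.U_odd hδ hδ1 (m := 2 * j + 1) (by omega) ⟨j, rfl⟩]
    refine tendsto_nhds_unique (f := U) (l := 𝓝[<] (Z (2 * j + 1))) ?_
      ((hUc _ (hmem' j hj)).tendsto.mono_left nhdsWithin_le_nhds)
    exact ((hWc j _ (hmem' j hj)).tendsto.mono_left nhdsWithin_le_nhds).congr'
      ((hL j hj).mono fun r hr => hr.2.1.symm)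
  have hright : ∀ j < k, c (j + 1) * ζ (Z (2 * j + 1)) + d (j + 1) * ξ (Z (2 * j + 1)) = 1 := by
    intro j hj
    rw [← L.U_odd hδ hδ1 (m := 2 * j + 1) (by omega) ⟨j, rfl⟩]
    refine tendsto_nhds_unique (f := U) (l := 𝓝[>] (Z (2 * j + 1))) ?_
      ((hUc _ (hmem' j hj)).tendsto.mono_left nhdsWithin_le_nhds)
    exact ((hWc (j + 1) _ (hmem' j hj)).tendsto.mono_left nhdsWithin_le_nhds).congr'
      ((hR j hj).mono fun r hr => hr.2.1.symm)
  have hVL : ∀ j < k, Tendsto V (𝓝[<] (Z (2 * j + 1)))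
      (𝓝 (c j * ζ' (Z (2 * j + 1)) + d j * ξ' (Z (2 * j + 1)))) := fun j hj =>
    ((hWc' j _ (hmem' j hj)).tendsto.mono_left nhdsWithin_le_nhds).congr'
      ((hL j hj).mono fun r hr => hr.2.2.symm)
  have hVR : ∀ j < k, Tendsto V (𝓝[>] (Z (2 * j + 1)))
      (𝓝 (c (j + 1) * ζ' (Z (2 * j + 1)) + d (j + 1) * ξ' (Z (2 * j + 1)))) := fun j hj =>
    ((hWc' (j + 1) _ (hmem' j hj)).tendsto.mono_left nhdsWithin_le_nhds).congr'
      ((hR j hj).mono fun r hr => hr.2.2.symm)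
  have hreflect : ∀ j < k, c j * ζ' (Z (2 * j + 1)) + d j * ξ' (Z (2 * j + 1)) =
      -(c (j + 1) * ζ' (Z (2 * j + 1)) + d (j + 1) * ξ' (Z (2 * j + 1))) := by
    intro j hj
    have hm := hmem' j hj
    set x := Z (2 * j + 1) with hx
    set A := c j * ζ' x + d j * ξ' x
    set B := c (j + 1) * ζ' x + d (j + 1) * ξ' x
    have hA : 0 ≤ A := by
      refine ge_of_tendsto (hVL j hj) ((hL j hj).mono fun r hr => ?_)
      have := L.V_sign hδ hδ1 (m := 2 * j) (by omega) hr.1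
      rwa [(even_two_mul j).neg_one_pow, one_mul] at this
    have hB : B ≤ 0 := by
      refine le_of_tendsto (hVR j hj) ((hR j hj).mono fun r hr => ?_)
      have := L.V_sign hδ hδ1 (m := 2 * j + 1) (by omega) hr.1
      rw [(even_two_mul j).add_one.neg_one_pow] at this
      linarith
    have t1 : Tendsto (fun h : ℝ => x - h) (𝓝[>] 0) (𝓝[<] x) := by
      refine tendsto_nhdsWithin_iff.mpr ⟨?_, ?_⟩
      · have : Tendsto (fun h : ℝ => x - h) (𝓝 0) (𝓝 (x - 0)) :=
          Continuous.tendsto (by fun_prop) 0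
        rw [sub_zero] at this
        exact this.mono_left nhdsWithin_le_nhds
      · filter_upwards [self_mem_nhdsWithin] with h hh
        exact sub_lt_self x hh
    have t2 : Tendsto (fun h : ℝ => x + h) (𝓝[>] 0) (𝓝[>] x) := by
      refine tendsto_nhdsWithin_iff.mpr ⟨?_, ?_⟩
      · have : Tendsto (fun h : ℝ => x + h) (𝓝 0) (𝓝 (x + 0)) :=
          Continuous.tendsto (by fun_prop) 0
        rw [add_zero] at this
        exact this.mono_left nhdsWithin_le_nhds
      · filter_upwards [self_mem_nhdsWithin] with h hh
        exact lt_add_of_pos_right x hh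
    have hU1 : U x = 1 := L.U_odd hδ hδ1 (m := 2 * j + 1) (by omega) ⟨j, rfl⟩
    have hUx := (hUc x hm).tendsto
    rw [hU1] at hUx
    have u1 : Tendsto (fun h : ℝ => U (x - h)) (𝓝[>] 0) (𝓝 1) :=
      hUx.comp (t1.mono_right nhdsWithin_le_nhds)
    have u2 : Tendsto (fun h : ℝ => U (x + h)) (𝓝[>] 0) (𝓝 1) :=
      hUx.comp (t2.mono_right nhdsWithin_le_nhds)
    have v1 : Tendsto (fun h : ℝ => V (x - h)) (𝓝[>] 0) (𝓝 A) := (hVL j hj).comp t1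
    have v2 : Tendsto (fun h : ℝ => V (x + h)) (𝓝[>] 0) (𝓝 B) := (hVR j hj).comp t2
    have e := ((((v2.pow 2).div_const 2).add (((u2.pow 2).sub_const 1).div_const 2).neg).sub
      (((v1.pow 2).div_const 2).add (((u1.pow 2).sub_const 1).div_const 2).neg)).abs
    have e2 : Tendsto (fun h : ℝ => (n:ℝ) / (x - h) * ((x + h) - (x - h))) (𝓝[>] 0) (𝓝 0) := by
      have : Tendsto (fun h : ℝ => (n:ℝ) / (x - h) * ((x + h) - (x - h))) (𝓝 0)
          (𝓝 ((n:ℝ) / (x - 0) * ((x + 0) - (x - 0)))) := by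
        have hx0 : x - 0 ≠ 0 := by rw [sub_zero]; exact hm.1.ne'
        have : ContinuousAt (fun h : ℝ => (n:ℝ) / (x - h) * ((x + h) - (x - h))) 0 := by
          fun_prop (disch := assumption)
        exact this.tendsto
      simp only [sub_zero, add_zero, sub_self, mul_zero] at this
      exact this.mono_left nhdsWithin_le_nhds
    have key := le_of_tendsto_of_tendsto e e2 (by
      filter_upwards [t1.eventually (hL j hj), t2.eventually (hR j hj), self_mem_nhdsWithin]
        with h h1 h2 h3
      have h3' : 0 < h := h3
      have p0 := (L.Z_mem hδ hδ1 (m := 2 * j) (by omega)).1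
      have p1 := (L.Z_mem hδ hδ1 (m := 2 * j + 2) (by omega)).2
      have := L.energy_lip hδ hδ1 (r := x - h) (s := x + h) (p0.trans_lt h1.1.1) (by linarith)
        (h2.1.2.le.trans p1)
        (L.avoid hδ hδ1 (i := j)
          (fun h => (L.Z_mono hδ hδ1 (by omega) (by omega)).trans_lt h1.1.1)
          (fun _ => h1.1.2) hj.le)
        (L.avoid hδ hδ1 (i := j + 1) (fun _ => h2.1.1)
          (fun h => h2.1.2.trans_le (L.Z_mono hδ hδ1 (by omega) (by omega))) hj)
      simp only [zero_sub] at this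
      exact this)
    have h0 := abs_nonpos_iff.mp key
    have hsq : A ^ 2 = (-B) ^ 2 := by linarith
    exact (sq_eq_sq₀ hA (by linarith)).mp hsq
  refine ⟨fun j => Z (2 * j - 1), c, d, ⟨hmem, fun j h1 h2 => ?_, (hcd 0 (by omega)).1 rfl,
    (hcd k le_rfl).2.1 rfl, hleft, fun j h1 h2 => ?_, hreflect, fun j h1 h2 r hr => ?_⟩,
    fun j h1 h2 => L.Z_lim _ (by omega), fun i hi r hr h1 h2 => ?_⟩
  · exact L.Z_strictMono hδ hδ1 (by omega) (by omega)
  · obtain ⟨i, rfl⟩ : ∃ i, j = i + 1 := ⟨j - 1, by omega⟩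
    exact hright i (by omega)
  · have hr0 : r ∈ Ioc (0:ℝ) 1 := ⟨(hmem j h1 h2.le).1.trans hr.1,
      hr.2.le.trans (hmem (j + 1) (by omega) h2).2.le⟩
    rw [← ((hcd j h2.le).2.2 r hr0 (fun _ => hr.1) fun _ => hr.2).1]
    exact L.U_lt hδ hδ1 ⟨hr0.1.le, hr0.2⟩
      (L.avoid hδ hδ1 (i := j) (fun _ => hr.1) (fun _ => hr.2) h2.le)
  · suffices h : U r = c i * ζ r + d i * ξ r by rw [← h]; exact L.U_lim r hr
    rcases hr.1.eq_or_lt with h0 | h0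
    · -- at the origin only the regular piece is present
      subst h0
      have hi0 : i = 0 := by
        by_contra hne
        exact absurd (h1 (by omega)) (not_le.mpr (hmem i (by omega) hi).1)
      subst hi0
      have hc0 : c 0 = 0 := (hcd 0 hi).1 rfl
      have hz1 := (hmem 1 le_rfl hk)
      have hsub : Ioo (0:ℝ) (Z 1) ⊆ Icc 0 1 := fun y hy => ⟨hy.1.le, hy.2.le.trans hz1.2.le⟩
      have hn1 : (𝓝[Ioo (0:ℝ) (Z 1)] 0).NeBot := by
        rw [nhdsWithin_Ioo_eq_nhdsGT hz1.1]; infer_instance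
      have l1 := (L.U_cont 0 hr).mono hsub
      have l2 := ((F.xi_cont 0 hr).mono hsub).const_mul (d 0)
      rw [hc0, zero_mul, zero_add]
      refine tendsto_nhds_unique l1.tendsto (Tendsto.congr' ?_ l2.tendsto)
      filter_upwards [self_mem_nhdsWithin] with y hy
      have := ((hcd 0 hi).2.2 y ⟨hy.1, hy.2.le.trans hz1.2.le⟩ (by omega) fun _ => hy.2).1
      rw [hc0, zero_mul, zero_add] at this
      exact this.symm
    · by_cases e1 : 1 ≤ i ∧ Z (2 * i - 1) = r
      · obtain ⟨j, rfl⟩ : ∃ j, i = j + 1 := ⟨i - 1, by omega⟩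
        have e2 : Z (2 * j + 1) = r := e1.2
        rw [← e2, hright j (by omega)]
        exact L.U_odd hδ hδ1 (by omega) ⟨j, rfl⟩
      · by_cases e2 : i < k ∧ r = Z (2 * i + 1)
        · rw [e2.2, hleft i e2.1]
          exact L.U_odd hδ hδ1 (by omega) ⟨i, rfl⟩
        · exact ((hcd i hi).2.2 r ⟨h0, hr.2⟩
            (fun h => lt_of_le_of_ne (h1 h) fun h' => e1 ⟨h, h'⟩)
            (fun h => lt_of_le_of_ne (h2 h) fun h' => e2 ⟨h, h'⟩)).1

end Limit

/-! ### Comparison of two pieces of a billiard -/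

/-- `f` (with derivative `f'`) solves the linear equation `f'' + (n / r) f' - f = 0` on `(0,1)`. -/
def IsLin (n : ℕ) (f f' : ℝ → ℝ) : Prop :=
  ∀ x ∈ Ioo (0:ℝ) 1, HasDerivAt f (f' x) x ∧ HasDerivAt f' (f x - n / x * f' x) x

lemma Fund.isLin_comb {n : ℕ} {ξ ξ' ζ ζ' : ℝ → ℝ} (F : Fund n ξ ξ' ζ ζ') (c d : ℝ) :
    IsLin n (fun r => c * ζ r + d * ξ r) (fun r => c * ζ' r + d * ξ' r) := fun x hx => by
  refine ⟨((F.zeta_der x hx).const_mul c).add ((F.xi_der x hx).const_mul d), ?_⟩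
  refine (((F.dzeta_der x hx).const_mul c).add ((F.dxi_der x hx).const_mul d)).congr_deriv ?_
  ring

/-- The Wronskian of `φ` with the difference of `f₂ (· + τ)` and `f₁`, corrected by a multiple of
`f₂ (· + τ) - 1` so that its derivative contains `f₂` only through `f₂ - 1`. -/
noncomputable def comparison (m : ℕ) (τ : ℝ) (f₁ f₁' f₂ f₂' φ φ' : ℝ → ℝ) (x : ℝ) : ℝ :=
  x ^ (m + 2) * ((f₂ (x + τ) - f₁ x) * φ' x - (f₂' (x + τ) - f₁' x) * φ x) +
    (m + 2) * τ * (x ^ (m + 1) * φ x / (x + τ)) * (f₂ (x + τ) - 1)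

lemma comparison_hasDerivAt {m : ℕ} {τ r : ℝ} {f₁ f₁' f₂ f₂' φ φ' : ℝ → ℝ}
    (h₁ : IsLin (m + 2) f₁ f₁') (h₂ : IsLin (m + 2) f₂ f₂') (hφ : IsLin (m + 2) φ φ')
    (hτ : 0 ≤ τ) (hr : 0 < r) (hr1 : r + τ < 1) :
    HasDerivAt (comparison m τ f₁ f₁' f₂ f₂' φ φ')
      ((m + 2) * τ * (r ^ m * ((r * φ' r + (m + 1) * φ r) * (r + τ) - r * φ r) / (r + τ) ^ 2) *
        (f₂ (r + τ) - 1)) r := by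
  have hr' : r ∈ Ioo (0:ℝ) 1 := ⟨hr, by linarith⟩
  have hrτ : r + τ ∈ Ioo (0:ℝ) 1 := ⟨by linarith, hr1⟩
  have a1 := (h₂ _ hrτ).1.comp_add_const r τ
  have a2 := (h₂ _ hrτ).2.comp_add_const r τ
  have a3 : HasDerivAt (fun x : ℝ => x + τ) 1 r := (hasDerivAt_id r).add_const τ
  have hne : r + τ ≠ 0 := hrτ.1.ne'
  have b1 := (hasDerivAt_pow (m + 2) r).mul
    (((a1.sub (h₁ r hr').1).mul (hφ r hr').2).sub ((a2.sub (h₁ r hr').2).mul (hφ r hr').1))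
  have b2 := (((((hasDerivAt_pow (m + 1) r).mul (hφ r hr').1).div a3 hne).const_mul
    (((m:ℝ) + 2) * τ)).mul (a1.sub_const 1))
  refine ((b1.add b2).congr_deriv ?_)
  have hr0 : r ≠ 0 := hr.ne'
  simp only [Pi.mul_apply, Pi.sub_apply, Pi.div_apply, Nat.add_sub_cancel, show m + 2 - 1 = m + 1 by omega]
  push_cast
  field_simp
  ring

section

variable {n : ℕ} {ξ ξ' ζ ζ' : ℝ → ℝ}

/-- The solution of the linear equation vanishing at `t`, increasing on `(0,1)`. -/
lemma Fund.exists_increasing (F : Fund n ξ ξ' ζ ζ') (hn : 1 ≤ n) {t : ℝ} (ht : t ∈ Ioo (0:ℝ) 1) :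
    ∃ φ φ' : ℝ → ℝ, IsLin n φ φ' ∧ φ t = 0 ∧ (∀ x ∈ Ioo (0:ℝ) 1, 0 < φ' x) ∧
      StrictMonoOn φ (Ioo 0 1) := by
  have hξ := F.xi_pos t ⟨ht.1.le, ht.2.le⟩
  have hζ := F.zeta_pos t ⟨ht.1, ht.2.le⟩
  have hlin := F.isLin_comb (-ξ t) (ζ t)
  have hpos : ∀ x ∈ Ioo (0:ℝ) 1, 0 < (-ξ t) * ζ' x + ζ t * ξ' x := fun x hx => by
    have h1 := F.dxi_pos hn hx
    have h2 := F.dzeta_neg hx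
    have h3 := mul_pos hζ h1
    have h4 := mul_pos hξ (neg_pos.mpr h2)
    linarith
  refine ⟨_, _, hlin, by ring, hpos, ?_⟩
  refine strictMonoOn_of_deriv_pos (convex_Ioo 0 1)
    (fun x hx => (hlin x hx).1.continuousAt.continuousWithinAt) fun x hx => ?_
  rw [interior_Ioo] at hx
  rw [(hlin x hx).1.deriv]
  exact hpos x hx

/-- A piece that starts further out at height `1` and returns to height `1` after a shorter
distance was launched with a smaller downward slope. -/
lemma launch_comparison (F : Fund n ξ ξ' ζ ζ') (hn : 2 ≤ n) {f₁ f₁' f₂ f₂' : ℝ → ℝ}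
    (h₁ : IsLin n f₁ f₁') (h₂ : IsLin n f₂ f₂') {s t τ : ℝ} (hs : 0 < s) (hst : s < t)
    (hτ : 0 ≤ τ) (ht : t + τ < 1) (h1s : f₁ s = 1) (h1t : f₁ t < 1) (h2s : f₂ (s + τ) = 1)
    (h2t : f₂ (t + τ) = 1) (h2 : ∀ x ∈ Ioo (s + τ) (t + τ), f₂ x ≤ 1) :
    f₁' s < f₂' (s + τ) := by
  obtain ⟨m, rfl⟩ : ∃ m, n = m + 2 := ⟨n - 2, by omega⟩
  have ht1 : t ∈ Ioo (0:ℝ) 1 := ⟨hs.trans hst, by linarith⟩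
  have hs1 : s ∈ Ioo (0:ℝ) 1 := ⟨hs, hst.trans ht1.2⟩
  obtain ⟨φ, φ', hφ, hφt, hφ', hmono⟩ := F.exists_increasing (by omega) ht1
  have hsub : Icc s t ⊆ Ioo (0:ℝ) 1 := fun x hx => ⟨hs.trans_le hx.1, hx.2.trans_lt ht1.2⟩
  have hφneg : ∀ x ∈ Ico s t, φ x < 0 := fun x hx => by
    rw [← hφt]; exact hmono (hsub ⟨hx.1, hx.2.le⟩) ht1 hx.2
  -- the coefficient `x φ' + (m + 1) φ` is decreasing and positive at `t`
  have hYd : ∀ x ∈ Ioo (0:ℝ) 1, HasDerivAt (fun x => x * φ' x + (m + 1) * φ x) (x * φ x) x := by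
    intro x hx
    refine (((hasDerivAt_id x).mul (hφ x hx).2).add ((hφ x hx).1.const_mul ((m:ℝ) + 1))).congr_deriv
      ?_
    have := hx.1.ne'
    simp only [id]
    push_cast
    field_simp
    ring
  have hY : ∀ x ∈ Icc s t, 0 < x * φ' x + (m + 1) * φ x := by
    have hanti : AntitoneOn (fun x => x * φ' x + (m + 1) * φ x) (Icc s t) := by
      refine antitoneOn_of_deriv_nonpos (convex_Icc s t)
        (fun x hx => (hYd x (hsub hx)).continuousAt.continuousWithinAt)
        (fun x hx => ?_) fun x hx => ?_
      · rw [interior_Icc] at hx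
        exact (hYd x (hsub (Ioo_subset_Icc_self hx))).differentiableAt.differentiableWithinAt
      · rw [interior_Icc] at hx
        rw [(hYd x (hsub (Ioo_subset_Icc_self hx))).deriv]
        exact mul_nonpos_of_nonneg_of_nonpos (hs.trans hx.1).le (hφneg x ⟨hx.1.le, hx.2⟩).le
    intro x hx
    have := hanti hx (right_mem_Icc.mpr hst.le) hx.2
    simp only [hφt, mul_zero, add_zero] at this
    exact (mul_pos ht1.1 (hφ' t ht1)).trans_le this
  have hd := fun x (hx : x ∈ Icc s t) =>
    comparison_hasDerivAt h₁ h₂ hφ hτ (hs.trans_le hx.1) (by linarith [hx.2])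
  have hanti : AntitoneOn (comparison m τ f₁ f₁' f₂ f₂' φ φ') (Icc s t) := by
    refine antitoneOn_of_deriv_nonpos (convex_Icc s t)
      (fun x hx => (hd x hx).continuousAt.continuousWithinAt) (fun x hx => ?_) fun x hx => ?_
    · rw [interior_Icc] at hx
      exact (hd x (Ioo_subset_Icc_self hx)).differentiableAt.differentiableWithinAt
    · rw [interior_Icc] at hx
      rw [(hd x (Ioo_subset_Icc_self hx)).deriv]
      have hx0 : 0 < x := hs.trans hx.1
      have e1 := h2 (x + τ) ⟨by linarith [hx.1], by linarith [hx.2]⟩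
      have e2 := mul_pos (hY x (Ioo_subset_Icc_self hx)) (by linarith : 0 < x + τ)
      have e3 := mul_pos hx0 (neg_pos.mpr (hφneg x ⟨hx.1.le, hx.2⟩))
      have e4 : 0 ≤ (x * φ' x + (m + 1) * φ x) * (x + τ) - x * φ x := by linarith
      refine mul_nonpos_of_nonneg_of_nonpos ?_ (by linarith)
      positivity
  have hle := hanti (left_mem_Icc.mpr hst.le) (right_mem_Icc.mpr hst.le) hst.le
  simp only [comparison, h1s, h2s, h2t, hφt] at hle
  have p1 : 0 < t ^ (m + 2) * ((1 - f₁ t) * φ' t) :=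
    mul_pos (pow_pos ht1.1 _) (mul_pos (by linarith) (hφ' t ht1))
  have p2 : 0 < s ^ (m + 2) * ((f₂' (s + τ) - f₁' s) * (-φ s)) := by
    linear_combination p1 + hle
  have p3 := pos_of_mul_pos_right p2 (pow_pos hs _).le
  have p4 := pos_of_mul_pos_left p3 (neg_pos.mpr (hφneg s ⟨le_rfl, hst⟩)).le
  linarith

/-- A piece that arrives further out at height `1`, having stayed below `1` for a longer distance,
arrives with a larger slope. -/
lemma arrival_comparison (F : Fund n ξ ξ' ζ ζ') (hn : 2 ≤ n) {f₁ f₁' f₂ f₂' : ℝ → ℝ}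
    (h₁ : IsLin n f₁ f₁') (h₂ : IsLin n f₂ f₂') {s t τ : ℝ} (hs : 0 < s) (hst : s < t)
    (hτ : 0 ≤ τ) (ht : t + τ < 1) (h1s : f₁ s = 1) (h1t : f₁ t = 1)
    (h2t : f₂ (t + τ) = 1) (h2 : ∀ x ∈ Icc (s + τ) (t + τ), f₂ x ≤ 1) :
    f₁' t ≤ f₂' (t + τ) := by
  obtain ⟨m, rfl⟩ : ∃ m, n = m + 2 := ⟨n - 2, by omega⟩
  have ht1 : t ∈ Ioo (0:ℝ) 1 := ⟨hs.trans hst, by linarith⟩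
  have hs1 : s ∈ Ioo (0:ℝ) 1 := ⟨hs, hst.trans ht1.2⟩
  obtain ⟨φ, φ', hφ, hφs, hφ', hmono⟩ := F.exists_increasing (by omega) hs1
  have hsub : Icc s t ⊆ Ioo (0:ℝ) 1 := fun x hx => ⟨hs.trans_le hx.1, hx.2.trans_lt ht1.2⟩
  have hφpos : ∀ x ∈ Ioc s t, 0 < φ x := fun x hx => by
    rw [← hφs]; exact hmono hs1 (hsub ⟨hx.1.le, hx.2⟩) hx.1
  have hd := fun x (hx : x ∈ Icc s t) =>
    comparison_hasDerivAt h₁ h₂ hφ hτ (hs.trans_le hx.1) (by linarith [hx.2])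
  have hanti : AntitoneOn (comparison m τ f₁ f₁' f₂ f₂' φ φ') (Icc s t) := by
    refine antitoneOn_of_deriv_nonpos (convex_Icc s t)
      (fun x hx => (hd x hx).continuousAt.continuousWithinAt) (fun x hx => ?_) fun x hx => ?_
    · rw [interior_Icc] at hx
      exact (hd x (Ioo_subset_Icc_self hx)).differentiableAt.differentiableWithinAt
    · rw [interior_Icc] at hx
      rw [(hd x (Ioo_subset_Icc_self hx)).deriv]
      have hx0 : 0 < x := hs.trans hx.1
      have e1 := h2 (x + τ) ⟨by linarith [hx.1], by linarith [hx.2]⟩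
      have e2 := hφpos x ⟨hx.1, hx.2.le⟩
      have e3 := hφ' x (hsub (Ioo_subset_Icc_self hx))
      have e4 : 0 ≤ (x * φ' x + (m + 1) * φ x) * (x + τ) - x * φ x := by
        have : (x * φ' x + (m + 1) * φ x) * (x + τ) - x * φ x =
          (x * φ' x + m * φ x) * (x + τ) + φ x * τ := by ring
        rw [this]; positivity
      refine mul_nonpos_of_nonneg_of_nonpos ?_ (by linarith)
      positivity
  have hle := hanti (left_mem_Icc.mpr hst.le) (right_mem_Icc.mpr hst.le) hst.le
  simp only [comparison, h1s, h1t, h2t, hφs] at hle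
  have p0 := h2 (s + τ) ⟨le_rfl, by linarith⟩
  have p1 : s ^ (m + 2) * ((f₂ (s + τ) - 1) * φ' s) ≤ 0 :=
    mul_nonpos_of_nonneg_of_nonpos (pow_pos hs _).le
      (mul_nonpos_of_nonpos_of_nonneg (by linarith) (hφ' s hs1).le)
  by_contra hcon
  push Not at hcon
  have p2 : 0 < t ^ (m + 2) * ((f₁' t - f₂' (t + τ)) * φ t) :=
    mul_pos (pow_pos ht1.1 _) (mul_pos (by linarith) (hφpos t ⟨hst, le_rfl⟩))
  have p3 : t ^ (m + 2) * ((f₁' t - f₂' (t + τ)) * φ t) ≤ 0 := by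
    linear_combination p1 + hle
  linarith

/-- The numerator `f'' f - f' ^ 2` of `(f' / f)'`, weighted by `r ^ n`. -/
lemma weighted_log_second_hasDerivAt {m : ℕ} {f f' : ℝ → ℝ} {r : ℝ} (hr : 0 < r)
    (h1 : HasDerivAt f (f' r) r) (h2 : HasDerivAt f' (f r - (m + 2 : ℕ) / r * f' r) r) :
    HasDerivAt (fun x => x ^ (m + 2) * (f x ^ 2 - f' x ^ 2) - (m + 2) * x ^ (m + 1) * (f x * f' x))
      ((m + 2) * r ^ m * (f r * f' r)) r := by
  refine (((hasDerivAt_pow (m + 2) r).mul ((h1.pow 2).sub (h2.pow 2))).sub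
    (((hasDerivAt_pow (m + 1) r).const_mul ((m:ℝ) + 2)).mul (h1.mul h2))).congr_deriv ?_
  have := hr.ne'
  simp only [Pi.mul_apply, Pi.sub_apply, Pi.pow_apply, Nat.add_sub_cancel,
    show m + 2 - 1 = m + 1 by omega]
  push_cast
  field_simp
  ring

lemma log_deriv_hasDerivAt {m : ℕ} {f f' : ℝ → ℝ} {r : ℝ} (hr : 0 < r) (hf : 0 < f r)
    (h1 : HasDerivAt f (f' r) r) (h2 : HasDerivAt f' (f r - (m + 2 : ℕ) / r * f' r) r) :
    HasDerivAt (fun x => f' x / f x)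
      ((r ^ (m + 2) * (f r ^ 2 - f' r ^ 2) - (m + 2) * r ^ (m + 1) * (f r * f' r)) /
        (r ^ (m + 2) * f r ^ 2)) r := by
  refine (h2.div h1 hf.ne').congr_deriv ?_
  have := hr.ne'
  have := hf.ne'
  push_cast
  field_simp
  ring

/-- `ξ' / ξ` at a point is the slope at which a first piece reaches height `1` there. -/
lemma Fund.xi_log_mono (F : Fund n ξ ξ' ζ ζ') (hn : 2 ≤ n) :
    MonotoneOn (fun r => ξ' r / ξ r) (Ioo 0 1) := by
  obtain ⟨m, rfl⟩ : ∃ m, n = m + 2 := ⟨n - 2, by omega⟩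
  have hmono : MonotoneOn (fun x => x ^ (m + 2) * (ξ x ^ 2 - ξ' x ^ 2) -
      (m + 2) * x ^ (m + 1) * (ξ x * ξ' x)) (Icc 0 1) := by
    have hd := fun x (hx : x ∈ Ioo (0:ℝ) 1) =>
      weighted_log_second_hasDerivAt hx.1 (F.xi_der x hx) (F.dxi_der x hx)
    refine monotoneOn_of_deriv_nonneg (convex_Icc 0 1) ?_ (fun x hx => ?_) fun x hx => ?_
    · have h1 := F.xi_cont
      have h2 := F.dxi_cont
      fun_prop
    · rw [interior_Icc] at hx
      exact (hd x hx).differentiableAt.differentiableWithinAt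
    · rw [interior_Icc] at hx
      rw [(hd x hx).deriv]
      have h1 := F.xi_pos x ⟨hx.1.le, hx.2.le⟩
      have h2 := F.dxi_pos (by omega) hx
      have h3 := hx.1
      positivity
  have hd := fun x (hx : x ∈ Ioo (0:ℝ) 1) => log_deriv_hasDerivAt hx.1
    (F.xi_pos x ⟨hx.1.le, hx.2.le⟩) (F.xi_der x hx) (F.dxi_der x hx)
  refine monotoneOn_of_deriv_nonneg (convex_Ioo 0 1)
    (fun x hx => (hd x hx).continuousAt.continuousWithinAt) (fun x hx => ?_) fun x hx => ?_
  · rw [interior_Ioo] at hx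
    exact (hd x hx).differentiableAt.differentiableWithinAt
  · rw [interior_Ioo] at hx
    rw [(hd x hx).deriv]
    have h0 := hmono ⟨le_rfl, zero_le_one⟩ ⟨hx.1.le, hx.2.le⟩ hx.1.le
    simp only [zero_pow (by omega : m + 2 ≠ 0), zero_pow (by omega : m + 1 ≠ 0), zero_mul,
      mul_zero, sub_zero] at h0
    have h1 := F.xi_pos x ⟨hx.1.le, hx.2.le⟩
    have h3 := hx.1
    exact div_nonneg h0 (by positivity)

/-- `ζ' / ζ` at a point is the slope with which a last piece leaves height `1` there. -/
lemma Fund.zeta_log_strictMono (F : Fund n ξ ξ' ζ ζ') (hn : 2 ≤ n) :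
    StrictMonoOn (fun r => ζ' r / ζ r) (Ioo 0 1) := by
  obtain ⟨m, rfl⟩ : ∃ m, n = m + 2 := ⟨n - 2, by omega⟩
  have hanti : AntitoneOn (fun x => x ^ (m + 2) * (ζ x ^ 2 - ζ' x ^ 2) -
      (m + 2) * x ^ (m + 1) * (ζ x * ζ' x)) (Ioc 0 1) := by
    have hd := fun x (hx : x ∈ Ioo (0:ℝ) 1) =>
      weighted_log_second_hasDerivAt hx.1 (F.zeta_der x hx) (F.dzeta_der x hx)
    refine antitoneOn_of_deriv_nonpos (convex_Ioc 0 1) ?_ (fun x hx => ?_) fun x hx => ?_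
    · have h1 := F.zeta_cont
      have h2 := F.dzeta_cont
      fun_prop
    · rw [interior_Ioc] at hx
      exact (hd x hx).differentiableAt.differentiableWithinAt
    · rw [interior_Ioc] at hx
      rw [(hd x hx).deriv]
      have h1 := F.zeta_pos x ⟨hx.1, hx.2.le⟩
      have h2 := F.dzeta_neg hx
      have h3 := hx.1
      exact mul_nonpos_of_nonneg_of_nonpos (by positivity)
        (mul_nonpos_of_nonneg_of_nonpos h1.le h2.le)
  have hd := fun x (hx : x ∈ Ioo (0:ℝ) 1) => log_deriv_hasDerivAt hx.1
    (F.zeta_pos x ⟨hx.1, hx.2.le⟩) (F.zeta_der x hx) (F.dzeta_der x hx)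
  refine strictMonoOn_of_deriv_pos (convex_Ioo 0 1)
    (fun x hx => (hd x hx).continuousAt.continuousWithinAt) fun x hx => ?_
  rw [interior_Ioo] at hx
  rw [(hd x hx).deriv]
  have h0 := hanti ⟨hx.1, hx.2.le⟩ ⟨zero_lt_one, le_rfl⟩ hx.2.le
  simp only [F.dzeta_one, mul_zero, sub_zero, one_pow, one_mul, zero_pow two_ne_zero] at h0
  have h1 := F.zeta_pos x ⟨hx.1, hx.2.le⟩
  have h2 := pow_pos (F.zeta_pos 1 ⟨zero_lt_one, le_rfl⟩) 2
  have h3 := hx.1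
  exact div_pos (by linarith) (by positivity)

end

/-! ### Uniqueness of the billiard trajectory -/

namespace Billiard

variable {n k : ℕ} {ξ ξ' ζ ζ' : ℝ → ℝ} {α c d α' c' d' : ℕ → ℝ}

/-- If the first bounce of one trajectory is not later than that of another, then no bounce is
later, the lag between corresponding bounces is nondecreasing along the trajectories, and each
incoming slope is at most its counterpart. -/
lemma compare (F : Fund n ξ ξ' ζ ζ') (hn : 2 ≤ n) (B : Billiard k ξ ξ' ζ ζ' α c d)
    (B' : Billiard k ξ ξ' ζ ζ' α' c' d') (h1 : α 1 ≤ α' 1) {j : ℕ} (hj : j < k) :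
    α (j + 1) ≤ α' (j + 1) ∧
    c j * ζ' (α (j + 1)) + d j * ξ' (α (j + 1)) ≤
      c' j * ζ' (α' (j + 1)) + d' j * ξ' (α' (j + 1)) ∧
    (1 ≤ j → α' j - α j ≤ α' (j + 1) - α (j + 1)) := by
  induction j with
  | zero =>
    refine ⟨h1, ?_, by omega⟩
    have m1 := B.mem 1 le_rfl hj
    have m2 := B'.mem 1 le_rfl hj
    have e1 := B.left 0 hj
    have e2 := B'.left 0 hj
    simp only [zero_add, B.c_zero, B'.c_zero, zero_mul] at e1 e2 ⊢
    have := F.xi_log_mono hn m1 m2 h1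
    simp only at this
    rw [eq_div_of_mul_eq (F.xi_pos _ ⟨m1.1.le, m1.2.le⟩).ne' e1,
      eq_div_of_mul_eq (F.xi_pos _ ⟨m2.1.le, m2.2.le⟩).ne' e2, one_div_mul_eq_div,
      one_div_mul_eq_div]
    exact this
  | succ j ih =>
    obtain ⟨a1, a2, -⟩ := ih (by omega)
    have m1 := B.mem (j + 1) (by omega) (by omega)
    have m1' := B'.mem (j + 1) (by omega) (by omega)
    have m2 := B.mem (j + 2) (by omega) (by omega)
    have m2' := B'.mem (j + 2) (by omega) (by omega)
    have l1 := B.lt (j + 1) (by omega) (by omega)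
    have l1' := B'.lt (j + 1) (by omega) (by omega)
    have r1 := B.reflect j (by omega)
    have r1' := B'.reflect j (by omega)
    have hlin := F.isLin_comb (c (j + 1)) (d (j + 1))
    have hlin' := F.isLin_comb (c' (j + 1)) (d' (j + 1))
    have hL := B.left (j + 1) hj
    have hL' := B'.left (j + 1) hj
    have hR := B.right (j + 1) (by omega) hj.le
    have hR' := B'.right (j + 1) (by omega) hj.le
    have hb := B.below (j + 1) (by omega) hj
    have hb' := B'.below (j + 1) (by omega) hj
    have hlag : α' (j + 1) - α (j + 1) ≤ α' (j + 1 + 1) - α (j + 1 + 1) := by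
      by_contra hcon
      push Not at hcon
      set τ := α' (j + 1) - α (j + 1) with hτ
      have q1 : α (j + 1) + τ = α' (j + 1) := by rw [hτ]; ring
      set t := α' (j + 1 + 1) - τ with ht
      have q2 : t + τ = α' (j + 1 + 1) := by rw [ht]; ring
      have := launch_comparison F hn hlin hlin' (s := α (j + 1)) (t := t) (τ := τ) m1.1
        (by linarith) (by linarith) (by rw [q2]; exact m2'.2) hR
        (hb t ⟨by linarith, by linarith⟩) (by rw [q1]; exact hR') (by rw [q2]; exact hL')
        (fun x hx => (hb' x (by rwa [q1, q2] at hx)).le)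
      simp only [q1] at this
      linarith
    refine ⟨by linarith, ?_, fun _ => hlag⟩
    set τ := α' (j + 1 + 1) - α (j + 1 + 1) with hτ
    have q2 : α (j + 1 + 1) + τ = α' (j + 1 + 1) := by rw [hτ]; ring
    have := arrival_comparison F hn hlin hlin' (s := α (j + 1)) (t := α (j + 1 + 1)) (τ := τ) m1.1
      l1 (by linarith) (by rw [q2]; exact m2'.2) hR hL (by rw [q2]; exact hL') (fun x hx => by
        rw [q2] at hx
        rcases hx.2.eq_or_lt with h | h
        · rw [h]; exact hL'.le
        · rcases (show α' (j + 1) ≤ x by linarith [hx.1]).eq_or_lt with h' | h'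
          · rw [← h']; exact hR'.le
          · exact (hb' x ⟨h', h⟩).le)
    simp only [q2] at this
    exact this

/-- A later last bounce with a larger incoming slope contradicts the Neumann condition at `1`, which
makes the outgoing slope `ζ' / ζ` strictly larger, hence the incoming one strictly smaller. -/
lemma alpha_eq_of_le (F : Fund n ξ ξ' ζ ζ') (hn : 2 ≤ n) (hk : 1 ≤ k)
    (B : Billiard k ξ ξ' ζ ζ' α c d) (B' : Billiard k ξ ξ' ζ ζ' α' c' d') (h1 : α 1 ≤ α' 1) :
    ∀ j, 1 ≤ j → j ≤ k → α j = α' j := by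
  have hlast : α' k ≤ α k := by
    obtain ⟨i, rfl⟩ : ∃ i, k = i + 1 := ⟨k - 1, by omega⟩
    obtain ⟨-, a2, -⟩ := B.compare F hn B' h1 (j := i) (by omega)
    have m1 := B.mem (i + 1) (by omega) le_rfl
    have m2 := B'.mem (i + 1) (by omega) le_rfl
    have e1 := B.right (i + 1) (by omega) le_rfl
    have e2 := B'.right (i + 1) (by omega) le_rfl
    rw [B.reflect i (by omega), B'.reflect i (by omega)] at a2
    simp only [B.d_last, B'.d_last, zero_mul, add_zero] at e1 e2 a2
    rw [eq_div_of_mul_eq (F.zeta_pos _ ⟨m1.1, m1.2.le⟩).ne' e1,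
      eq_div_of_mul_eq (F.zeta_pos _ ⟨m2.1, m2.2.le⟩).ne' e2, one_div_mul_eq_div,
      one_div_mul_eq_div] at a2
    exact ((F.zeta_log_strictMono hn).le_iff_le m2 m1).mp (by simpa using a2)
  have hdesc : ∀ i < k, α' (k - i) ≤ α (k - i) := by
    intro i
    induction i with
    | zero => intro _; simpa using hlast
    | succ i ih =>
      intro hi
      obtain ⟨-, -, a3⟩ := B.compare F hn B' h1 (j := k - (i + 1)) (by omega)
      have := ih (by omega)
      rw [show k - i = k - (i + 1) + 1 by omega] at this
      linarith [a3 (by omega)]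
  intro j hj1 hjk
  refine le_antisymm ?_ ?_
  · have := (B.compare F hn B' h1 (j := j - 1) (by omega)).1
    rwa [show j - 1 + 1 = j by omega] at this
  · have := hdesc (k - j) (by omega)
    rwa [show k - (k - j) = j by omega] at this

/-- There is at most one billiard trajectory with `k` bounces. -/
lemma unique (F : Fund n ξ ξ' ζ ζ') (hn : 2 ≤ n) (hk : 1 ≤ k)
    (B : Billiard k ξ ξ' ζ ζ' α c d) (B' : Billiard k ξ ξ' ζ ζ' α' c' d') :
    (∀ j, 1 ≤ j → j ≤ k → α j = α' j) ∧ ∀ i ≤ k, c i = c' i ∧ d i = d' i := by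
  have hα : ∀ j, 1 ≤ j → j ≤ k → α j = α' j := by
    rcases le_total (α 1) (α' 1) with h | h
    · exact B.alpha_eq_of_le F hn hk B' h
    · exact fun j a b => (B'.alpha_eq_of_le F hn hk B h j a b).symm
  refine ⟨hα, fun i hi => ?_⟩
  rcases Nat.eq_zero_or_pos i with h | h
  · subst h
    have m := B.mem 1 le_rfl hk
    have e1 := B.left 0 hk
    have e2 := B'.left 0 hk
    simp only [zero_add, B.c_zero, B'.c_zero, zero_mul] at e1 e2
    rw [← hα 1 le_rfl hk] at e2
    refine ⟨B.c_zero.trans B'.c_zero.symm, ?_⟩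
    exact mul_right_cancel₀ (F.xi_pos _ ⟨m.1.le, m.2.le⟩).ne' (e1.trans e2.symm)
  have m := B.mem i h hi
  have e1 := B.right i h hi
  have e2 := B'.right i h hi
  rw [← hα i h hi] at e2
  rcases hi.eq_or_lt with h' | h'
  · subst h'
    simp only [B.d_last, B'.d_last, zero_mul, add_zero] at e1 e2
    refine ⟨?_, B.d_last.trans B'.d_last.symm⟩
    exact mul_right_cancel₀ (F.zeta_pos _ ⟨m.1, m.2.le⟩).ne' (e1.trans e2.symm)
  · have m' := B.mem (i + 1) (by omega) h'
    have l := B.lt i h h'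
    have e3 := B.left i h'
    have e4 := B'.left i h'
    rw [← hα (i + 1) (by omega) h'] at e4
    have hξ : ξ (α i) < ξ (α (i + 1)) := by
      refine strictMonoOn_of_deriv_pos (convex_Ioo 0 1)
        (fun x hx => (F.xi_der x hx).continuousAt.continuousWithinAt) (fun x hx => ?_) m m' l
      rw [interior_Ioo] at hx
      rw [(F.xi_der x hx).deriv]; exact F.dxi_pos (by omega) hx
    have hζ : ζ (α (i + 1)) < ζ (α i) := by
      refine strictAntiOn_of_deriv_neg (convex_Ioo 0 1)
        (fun x hx => (F.zeta_der x hx).continuousAt.continuousWithinAt) (fun x hx => ?_) m m' l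
      rw [interior_Ioo] at hx
      rw [(F.zeta_der x hx).deriv]; exact F.dzeta_neg hx
    have p1 := F.xi_pos _ ⟨m.1.le, m.2.le⟩
    have p2 := F.zeta_pos _ ⟨m'.1, m'.2.le⟩
    have hdet : 0 < ζ (α i) * ξ (α (i + 1)) - ξ (α i) * ζ (α (i + 1)) := by
      nlinarith [mul_lt_mul'' hζ hξ p2.le p1.le]
    constructor
    · refine mul_right_cancel₀ hdet.ne' ?_
      linear_combination ξ (α (i + 1)) * (e1 - e2) - ξ (α i) * (e3 - e4)
    · refine mul_right_cancel₀ hdet.ne' ?_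
      linear_combination ζ (α i) * (e3 - e4) - ζ (α (i + 1)) * (e1 - e2)

end Billiard

/-! ### Green function representation -/

lemma G_zero_one {N : ℕ} (d : GreenData N) (r s : ℝ) :
    d.G 0 1 r s = if r ≤ s then s ^ (N - 1) * d.xi r * d.zeta s
      else s ^ (N - 1) * d.xi s * d.zeta r := by
  simp [GreenData.G, GreenData.xiI, GreenData.zetaI]

namespace Billiard

variable {n k : ℕ} {ξ ξ' ζ ζ' : ℝ → ℝ} {α c d : ℕ → ℝ}

lemma alpha_mono (B : Billiard k ξ ξ' ζ ζ' α c d) {i j : ℕ} (hi : 1 ≤ i) (hij : i ≤ j)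
    (hj : j ≤ k) : α i ≤ α j := by
  induction j, hij using Nat.le_induction with
  | base => exact le_rfl
  | succ j hij ih => exact (ih (by omega)).trans (B.lt j (by omega) (by omega)).le

lemma exists_index (α : ℕ → ℝ) (r : ℝ) (m : ℕ) :
    ∃ i ≤ m, (1 ≤ i → α i ≤ r) ∧ (i < m → r ≤ α (i + 1)) := by
  induction m with
  | zero => exact ⟨0, le_rfl, by omega, by omega⟩
  | succ m ih =>
    rcases le_total (α (m + 1)) r with h | h
    · exact ⟨m + 1, le_rfl, fun _ => h, by omega⟩
    · obtain ⟨i, h1, h2, h3⟩ := ih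
      refine ⟨i, by omega, h2, fun _ => ?_⟩
      rcases h1.eq_or_lt with e | e
      · rw [e]; exact h
      · exact h3 e

/-- The weights `A j` are the jumps of the coefficient `c` at the bounces, suitably normalised; the
sum over the Green functions telescopes to the piece containing `r`. -/
lemma green_sum {N k : ℕ} (D : GreenData N) {ξ' ζ' : ℝ → ℝ} {α c d : ℕ → ℝ}
    (F : Fund (N - 1) D.xi ξ' D.zeta ζ') (B : Billiard k D.xi ξ' D.zeta ζ' α c d) {i : ℕ}
    (hi : i ≤ k) {r : ℝ} (h1 : 1 ≤ i → α i ≤ r) (h2 : i < k → r ≤ α (i + 1)) :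
    ∑ j ∈ Finset.Icc 1 k, (c j - c (j - 1)) / (α j ^ (N - 1) * D.xi (α j)) * D.G 0 1 r (α j) =
      c i * D.zeta r + d i * D.xi r := by
  have key : ∀ m ≤ k, ∑ j ∈ Finset.Icc 1 m,
      (c j - c (j - 1)) / (α j ^ (N - 1) * D.xi (α j)) * D.G 0 1 r (α j) =
        (c (min m i) * D.zeta r - d (max m i) * D.xi r) - (c 0 * D.zeta r - d i * D.xi r) := by
    intro m
    induction m with
    | zero => intro _; simp
    | succ m ih =>
      intro hm
      rw [Finset.sum_Icc_succ_top (by omega), ih (by omega), Nat.add_sub_cancel, G_zero_one]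
      have hmem := B.mem (m + 1) (by omega) hm
      have hξ := (F.xi_pos _ ⟨hmem.1.le, hmem.2.le⟩).ne'
      have hpow := (pow_pos hmem.1 (N - 1)).ne'
      rcases Nat.lt_or_ge m i with h | h
      · have hle : α (m + 1) ≤ r := (B.alpha_mono (by omega) (by omega) hi).trans (h1 (by omega))
        rw [min_eq_left h.le, min_eq_left (by omega : m + 1 ≤ i), max_eq_right h.le,
          max_eq_right (by omega : m + 1 ≤ i)]
        have hG : (if r ≤ α (m + 1) then α (m + 1) ^ (N - 1) * D.xi r * D.zeta (α (m + 1))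
            else α (m + 1) ^ (N - 1) * D.xi (α (m + 1)) * D.zeta r) =
            α (m + 1) ^ (N - 1) * D.xi (α (m + 1)) * D.zeta r := by
          split_ifs with h'
          · rw [le_antisymm h' hle]
          · rfl
        rw [hG]
        field_simp
        ring
      · have hle : r ≤ α (m + 1) := (h2 (by omega)).trans (B.alpha_mono (by omega) (by omega) hm)
        rw [min_eq_right h, min_eq_right (by omega : i ≤ m + 1), max_eq_left h,
          max_eq_left (by omega : i ≤ m + 1), if_pos hle]
        have e1 := B.left m (by omega)
        have e2 := B.right (m + 1) (by omega) hm
        field_simp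
        linear_combination (D.xi r) * (e2 - e1)
  have h := key k le_rfl
  rw [min_eq_right hi, max_eq_left hi, B.d_last, B.c_zero] at h
  rw [h]; ring

end Billiard

end PeakSolutions

open PeakSolutions

theorem statement19 {N : ℕ} (hN : 3 ≤ N) (d : GreenData N) (k : ℕ) (hk : 1 ≤ k) :
    ∃ pk : ℝ, 1 < pk ∧
      ∃ (u : ℝ → ℝ → ℝ) (α β : ℝ → ℕ → ℝ) (αinf : ℕ → ℝ) (A : ℕ → ℝ),
        (∀ p : ℝ, pk < p →
          ContDiffOn ℝ 2 (u p) (Set.Icc 0 1) ∧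
          (∀ r ∈ Set.Icc (0:ℝ) 1, 0 < u p r) ∧
          deriv (u p) 0 = 0 ∧ deriv (u p) 1 = 0 ∧
          (∀ r ∈ Set.Ioo (0:ℝ) 1,
            -(deriv (deriv (u p)) r) - ((N : ℝ) - 1) / r * deriv (u p) r + u p r =
              u p r ^ p) ∧
          β p 0 = 0 ∧ β p k = 1 ∧
          (∀ j, 1 ≤ j → j ≤ k → β p (j - 1) < α p j ∧ α p j < β p j) ∧
          (∀ j, 1 ≤ j → j ≤ k →
            StrictMonoOn (u p) (Set.Icc (β p (j - 1)) (α p j)) ∧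
            StrictAntiOn (u p) (Set.Icc (α p j) (β p j)))) ∧
        0 < αinf 1 ∧ (∀ j, 1 ≤ j → j < k → αinf j < αinf (j + 1)) ∧ αinf k < 1 ∧
        (∀ j, 1 ≤ j → j ≤ k →
          Filter.Tendsto (fun p => α p j) Filter.atTop (nhds (αinf j))) ∧
        (∀ i, 1 ≤ i → i ≤ k →
          ∑ j ∈ Finset.Icc 1 k, A j * d.G 0 1 (αinf i) (αinf j) = 1) ∧
        (∀ r ∈ Set.Icc (0:ℝ) 1,
          Filter.Tendsto (fun p => u p r) Filter.atTop
            (nhds (∑ j ∈ Finset.Icc 1 k, A j * d.G 0 1 r (αinf j)))) := by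
  obtain ⟨ξ', ζ', F⟩ := exists_fund hN d
  have hn : 2 ≤ N - 1 := by omega
  obtain ⟨δ, hδ, hδ1, P, hP, hsol⟩ := exists_peakSol (n := N - 1) hn hk
  have hex : ∀ p, ∃ (u w : ℝ → ℝ) (z : ℕ → ℝ), P ≤ p → PeakSol (N - 1) k δ p u w z := by
    intro p
    by_cases hp : P ≤ p
    · obtain ⟨u, w, z, h⟩ := hsol p hp
      exact ⟨u, w, z, fun _ => h⟩
    · exact ⟨0, 0, 0, fun h => absurd h hp⟩
  choose u w z hS using hex
  have hev : ∀ᶠ p in atTop, PeakSol (N - 1) k δ p (u p) (w p) (z p) :=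
    (eventually_ge_atTop P).mono hS
  have hbill : ∀ 𝒰 : Ultrafilter ℝ, (𝒰 : Filter ℝ) ≤ atTop → ∃ α c e : ℕ → ℝ,
      Billiard k d.xi ξ' d.zeta ζ' α c e ∧
      (∀ j, 1 ≤ j → j ≤ k → Tendsto (fun p => z p (2 * j - 1)) 𝒰 (𝓝 (α j))) ∧
      ∀ i ≤ k, ∀ r ∈ Icc (0:ℝ) 1, (1 ≤ i → α i ≤ r) → (i < k → r ≤ α (i + 1)) →
        Tendsto (fun p => u p r) 𝒰 (𝓝 (c i * d.zeta r + e i * d.xi r)) := by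
    intro 𝒰 h𝒰
    obtain ⟨U, V, Z, L⟩ := exists_limit h𝒰 hev
    exact L.exists_billiard F (by omega) hk hδ hδ1
  obtain ⟨αinf, c, e, B, -, -⟩ := hbill (Ultrafilter.of atTop) (Ultrafilter.of_le _)
  refine ⟨P, by linarith, u, fun p j => z p (2 * j - 1), fun p j => z p (2 * j), αinf,
    fun j => (c j - c (j - 1)) / (αinf j ^ (N - 1) * d.xi (αinf j)), fun p hp => ?_,
    (B.mem 1 le_rfl hk).1, B.lt, (B.mem k hk le_rfl).2, fun j h1 h2 => ?_, fun i h1 h2 => ?_,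
    fun r hr => ?_⟩
  · have S := hS p hp.le
    have hder : deriv (u p) = w p := funext fun r => (S.der r).deriv
    have hcast : ((N - 1 : ℕ) : ℝ) = N - 1 := by
      rw [Nat.cast_sub (by omega)]; simp
    refine ⟨S.smooth.contDiffOn, fun r hr => by linarith [S.lower r hr], ?_, ?_, fun r hr => ?_,
      S.z_zero, S.z_last, fun j h1 h2 => ⟨?_, ?_⟩, fun j h1 h2 => ⟨?_, ?_⟩⟩
    · rw [hder]; exact S.w_zero
    · rw [hder, ← S.z_last]; exact S.w_z _ le_rfl
    · rw [hder, (S.der2 r ⟨hr.1, hr.2.le⟩).deriv, hcast]; ring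
    · have := S.z_lt (2 * (j - 1)) (by omega)
      rwa [show 2 * (j - 1) + 1 = 2 * j - 1 by omega] at this
    · have := S.z_lt (2 * j - 1) (by omega)
      rwa [show 2 * j - 1 + 1 = 2 * j by omega] at this
    · refine strictMonoOn_of_deriv_pos (convex_Icc _ _)
        (fun x _ => (S.der x).continuousAt.continuousWithinAt) fun x hx => ?_
      rw [interior_Icc] at hx
      have := S.sign (2 * (j - 1)) (by omega) x
        (by rwa [show 2 * (j - 1) + 1 = 2 * j - 1 by omega])
      rw [(even_two_mul (j - 1)).neg_one_pow, one_mul] at this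
      rwa [hder]
    · refine strictAntiOn_of_deriv_neg (convex_Icc _ _)
        (fun x _ => (S.der x).continuousAt.continuousWithinAt) fun x hx => ?_
      rw [interior_Icc] at hx
      have := S.sign (2 * j - 1) (by omega) x
        (by rwa [show 2 * j - 1 + 1 = 2 * j by omega])
      rw [Odd.neg_one_pow ⟨j - 1, by omega⟩] at this
      rw [hder]; linarith
  · rw [tendsto_iff_ultrafilter]
    intro 𝒰 h𝒰
    obtain ⟨α', c', e', B', hα', -⟩ := hbill 𝒰 h𝒰
    rw [(B.unique F hn hk B').1 j h1 h2]
    exact hα' j h1 h2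
  · rw [B.green_sum d F h2 (fun _ => le_rfl) fun h => (B.lt i h1 h).le]
    exact B.right i h1 h2
  · rw [tendsto_iff_ultrafilter]
    intro 𝒰 h𝒰
    obtain ⟨α', c', e', B', -, hu⟩ := hbill 𝒰 h𝒰
    obtain ⟨hα, hce⟩ := B.unique F hn hk B'
    obtain ⟨i, hi, h1, h2⟩ := Billiard.exists_index αinf r k
    rw [B.green_sum d F hi h1 h2, (hce i hi).1, (hce i hi).2]
    exact hu i hi r hr (fun h => by rw [← hα i h hi]; exact h1 h)
      fun h => by rw [← hα (i + 1) (by omega) h]; exact h2 h
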